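/- arXiv:1912.02266 — 3 statements merged into one kernel-verified Lean document; each statement's English description precedes it below -/
import Mathlib

section
/- For r ≥ 1 let p_{r,k} = N_k(𝟙) be the number of decompositions of the highest root 𝟙 = (1,…,1) ∈ ℕ^r of A_r as a sum of exactly k positive roots, and set μ_r = (r+1)/2 and σ_r = √((r−1)/4). Then for every x ∈ ℝ: lim_{r→∞} (Σ_{k ∈ ℕ, k ≤ μ_r + x·σ_r} p_{r,k}) / (Σ_{k≥0} p_{r,k}) = (1/√(2π))·∫_{−∞}^x e^{−u²/2} du. That is, the normalized number of positive roots used in the decompositions of the highest root of A_r converges in distribution to the standard normal as r → ∞. -/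
open Polynomial

/-- The positive roots of the Lie algebra of type `A_r` in simple-root coordinates:
the indicator vectors `α[i,j]` of the intervals `[i,j]` for `1 ≤ i ≤ j ≤ r`
(positions are `1`-based, so position `i` corresponds to `t : Fin r` with `t.val + 1 = i`). -/
def isPosRootA (r : ℕ) (v : Fin r → ℕ) : Prop :=
  ∃ i j : ℕ, 1 ≤ i ∧ i ≤ j ∧ j ≤ r ∧
    v = fun t => if i ≤ t.val + 1 ∧ t.val + 1 ≤ j then 1 else 0

/-- `NA r k ξ` is the number of decompositions of the weight `ξ` as a sum of exactly `k`
positive roots of `A_r`, i.e. the number of `ℕ`-valued functions (with finite support)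
on the set of positive roots whose values sum to `k` and whose weighted vector sum is `ξ`. -/
noncomputable def NA (r k : ℕ) (ξ : Fin r → ℕ) : ℕ :=
  Set.ncard {m : (Fin r → ℕ) →₀ ℕ |
    (∀ v ∈ m.support, isPosRootA r v) ∧
    (m.sum fun _ n => n) = k ∧
    (m.sum fun v n => n • v) = ξ}

def blk {n : ℕ} (L : Finset (Fin (n+1))) (a : Fin (n+1)) : Fin (n+1) → ℕ :=
  fun t => if a ≤ t ∧ ∀ b ∈ L, b ≤ a ∨ t < b then 1 else 0

lemma blk_self {n : ℕ} (L : Finset (Fin (n+1))) (a : Fin (n+1)) : blk L a a = 1 := by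
  unfold blk
  rw [if_pos]
  exact ⟨le_rfl, fun b _ => le_or_gt b a⟩

lemma blk_inj {n : ℕ} {L L' : Finset (Fin (n+1))} {a a' : Fin (n+1)} (h : blk L a = blk L' a') :
    a = a' := by
  have h1 := congrFun h a
  have h2 := congrFun h a'
  rw [blk_self] at h1 h2
  unfold blk at h1 h2
  split_ifs at h1 h2
  · rename_i h3 h4
    exact le_antisymm h4.1 h3.1

lemma blk_root {n : ℕ} (L : Finset (Fin (n+1))) (a : Fin (n+1)) :
    isPosRootA (n+1) (blk L a) := by
  classical
  have hne : (Finset.univ.filter fun t : Fin (n+1) => blk L a t = 1).Nonempty :=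
    ⟨a, by simp [blk_self]⟩
  set c := (Finset.univ.filter fun t : Fin (n+1) => blk L a t = 1).max' hne with hc
  have hcm := Finset.max'_mem _ hne
  rw [← hc] at hcm
  simp only [Finset.mem_filter, Finset.mem_univ, true_and] at hcm
  have hc1 : a ≤ c ∧ ∀ b ∈ L, b ≤ a ∨ c < b := by
    by_contra h
    simp [blk, h] at hcm
  refine ⟨a.val + 1, c.val + 1, by omega, by have := hc1.1; simpa using this, by omega, ?_⟩
  funext t
  have key : (a ≤ t ∧ ∀ b ∈ L, b ≤ a ∨ t < b) ↔ (a.val + 1 ≤ t.val + 1 ∧ t.val + 1 ≤ c.val + 1) := by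
    constructor
    · intro h
      refine ⟨by simpa using h.1, ?_⟩
      have hb : blk L a t = 1 := by unfold blk; rw [if_pos h]
      have : t ≤ c := by
        rw [hc]
        apply Finset.le_max'
        simp [hb]
      simpa using this
    · rintro ⟨h1, h2⟩
      refine ⟨by simpa using h1, fun b hb => (hc1.2 b hb).imp_right fun h => lt_of_le_of_lt ?_ h⟩
      simpa using h2
  unfold blk
  simp only [key]

lemma blk_sum {n : ℕ} (L : Finset (Fin (n+1))) (h0 : 0 ∈ L) (t : Fin (n+1)) :
    ∑ a ∈ L, blk L a t = 1 := by
  classical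
  have hne : (L.filter (· ≤ t)).Nonempty := ⟨0, by simp [h0]⟩
  set c := (L.filter (· ≤ t)).max' hne with hc
  have hcm := Finset.max'_mem _ hne
  rw [← hc] at hcm
  simp only [Finset.mem_filter] at hcm
  have hmax : ∀ b ∈ L, b ≤ t → b ≤ c := fun b hb hbt =>
    Finset.le_max' _ _ (by simp [hb, hbt])
  rw [Finset.sum_eq_single c]
  · unfold blk
    rw [if_pos]
    exact ⟨hcm.2, fun b hb => by
      rcases le_or_gt b t with h | h
      · exact Or.inl (hmax b hb h)
      · exact Or.inr h⟩
  · intro b hb hbc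
    unfold blk
    rw [if_neg]
    rintro ⟨h1, h2⟩
    rcases h2 c hcm.1 with h | h
    · exact hbc (le_antisymm (hmax b hb h1) h)
    · exact absurd hcm.2 (not_le.2 h)
  · intro h; exact absurd hcm.1 h

noncomputable def dec {n : ℕ} (L : Finset (Fin (n+1))) : (Fin (n+1) → ℕ) →₀ ℕ :=
  ∑ a ∈ L, Finsupp.single (blk L a) 1

lemma dec_apply {n : ℕ} (L : Finset (Fin (n+1))) (v) :
    dec L v ≠ 0 ↔ ∃ a ∈ L, blk L a = v := by
  classical
  simp [dec, Finsupp.finsetSum_apply, Finsupp.single_apply]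

lemma dec_inj {n : ℕ} {L L' : Finset (Fin (n+1))} (h : dec L = dec L') : L = L' := by
  have key : ∀ L L' : Finset (Fin (n+1)), dec L = dec L' → ∀ a ∈ L, a ∈ L' := by
    intro L L' h a ha
    obtain ⟨b, hb, hbb⟩ := (dec_apply L' (blk L a)).1 (h ▸ (dec_apply L _).2 ⟨a, ha, rfl⟩)
    rw [← blk_inj hbb]; exact hb
  ext a
  exact ⟨key _ _ h a, key _ _ h.symm a⟩

lemma dec_sum {n : ℕ} {M : Type*} [AddCommMonoid M] (L : Finset (Fin (n+1)))
    (f : (Fin (n+1) → ℕ) → ℕ → M) (hf : ∀ v, f v 0 = 0) (hf' : ∀ v a b, f v (a+b) = f v a + f v b) :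
    (dec L).sum f = ∑ a ∈ L, f (blk L a) 1 := by
  unfold dec
  rw [← Finsupp.sum_finsetSum_index hf hf']
  exact Finset.sum_congr rfl fun a _ => Finsupp.sum_single_index (hf _)

lemma dec_surj {n : ℕ} (m : (Fin (n+1) → ℕ) →₀ ℕ)
    (h1 : ∀ v ∈ m.support, isPosRootA (n+1) v) (h2 : (m.sum fun v n => n • v) = fun _ => 1) :
    ∃ L : Finset (Fin (n+1)), 0 ∈ L ∧ dec L = m := by
  classical
  have hs : ∀ t, ∑ v ∈ m.support, m v * v t = 1 := by
    intro t
    have := congrFun h2 t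
    simpa [Finsupp.sum, Finset.sum_apply] using this
  have hex : ∀ t, ∃ v ∈ m.support, v t ≠ 0 := by
    intro t
    by_contra! h
    have := hs t
    rw [Finset.sum_eq_zero] at this
    · simp at this
    · intro v hv; simp [h v hv]
  have hle : ∀ t, ∀ v ∈ m.support, m v * v t ≤ 1 := by
    intro t v hv
    refine le_of_le_of_eq ?_ (hs t)
    exact Finset.single_le_sum (f := fun v => m v * v t) (fun _ _ => Nat.zero_le _) hv
  have huniq : ∀ t, ∀ v ∈ m.support, ∀ w ∈ m.support, v t ≠ 0 → w t ≠ 0 → v = w := by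
    intro t v hv w hw hvt hwt
    by_contra hne
    have h3 : m v * v t + m w * w t ≤ 1 := by
      refine le_of_le_of_eq ?_ (hs t)
      rw [← Finset.sum_pair (f := fun v => m v * v t) hne]
      exact Finset.sum_le_sum_of_subset (by intro x; simp; rintro (rfl | rfl); simpa using hv; simpa using hw)
    have : 0 < m v * v t := Nat.pos_of_ne_zero (mul_ne_zero (by simpa using hv) hvt)
    have : 0 < m w * w t := Nat.pos_of_ne_zero (mul_ne_zero (by simpa using hw) hwt)
    omega
  -- interval structure
  have hint : ∀ v ∈ m.support, ∃ a b : Fin (n+1), a ≤ b ∧ ∀ t, v t = if a ≤ t ∧ t ≤ b then 1 else 0 := by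
    intro v hv
    obtain ⟨i, j, hi, hij, hj, rfl⟩ := h1 v hv
    refine ⟨⟨i-1, by omega⟩, ⟨j-1, by omega⟩, by simp [Fin.le_def]; omega, fun t => ?_⟩
    have : (i ≤ t.val + 1 ∧ t.val + 1 ≤ j) ↔ ((⟨i-1, by omega⟩ : Fin (n+1)) ≤ t ∧ t ≤ ⟨j-1, by omega⟩) := by
      simp only [Fin.le_def]; omega
    simp only [this]
  choose! A B hAB hv using hint
  have hne : ∀ v ∈ m.support, ∀ t, v t ≠ 0 ↔ A v ≤ t ∧ t ≤ B v := by
    intro v hvm t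
    rw [hv v hvm t]; simp
  set L := m.support.image A with hL
  have hblk : ∀ v ∈ m.support, blk L (A v) = v := by
    intro v hvm
    funext t
    rw [hv v hvm t]
    unfold blk
    congr 1
    rw [eq_iff_iff]
    refine and_congr_right fun hat => ?_
    constructor
    · intro hb
      by_contra! hlt
      have hBn : (B v).val + 1 < n + 1 := by have := t.2; rw [Fin.lt_def] at hlt; omega
      obtain ⟨w, hw, hws⟩ := hex ⟨(B v).val + 1, hBn⟩
      have hws' := (hne w hw _).1 hws
      have hnw : ¬ (A w ≤ B v ∧ B v ≤ B w) := by
        intro hc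
        have := huniq (B v) v hvm w hw ((hne v hvm _).2 ⟨hAB v hvm, le_rfl⟩) ((hne w hw _).2 hc)
        subst this
        simp [Fin.le_def] at hws'
      have hAv := hAB v hvm
      have := hb (A w) (Finset.mem_image_of_mem _ hw)
      simp only [Fin.le_def, Fin.lt_def] at *
      omega
    · intro htb b hb
      by_contra! hlt
      obtain ⟨w, hw, rfl⟩ := Finset.mem_image.1 hb
      have := huniq (A w) v hvm w hw ((hne v hvm _).2 ⟨hlt.1.le, hlt.2.trans htb⟩)
        ((hne w hw _).2 ⟨le_rfl, hAB w hw⟩)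
      subst this
      exact lt_irrefl _ hlt.1
  refine ⟨L, ?_, ?_⟩
  · obtain ⟨w, hw, hws⟩ := hex 0
    have := (hne w hw _).1 hws
    have h0 : A w = 0 := le_antisymm this.1 (Fin.zero_le _)
    exact Finset.mem_image.2 ⟨w, hw, h0⟩
  · unfold dec
    rw [hL, Finset.sum_image]
    · rw [← hL]
      conv_rhs => rw [← Finsupp.sum_single m]
      unfold Finsupp.sum
      refine Finset.sum_congr rfl fun v hvm => ?_
      rw [hblk v hvm]
      congr 1
      have h3 := hle (A v) v hvm
      have h4 : v (A v) = 1 := by rw [hv v hvm, if_pos ⟨le_rfl, hAB v hvm⟩]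
      have h5 : m v ≠ 0 := by simpa using hvm
      rw [h4] at h3
      omega
    · intro v hvm w hw h
      rw [← hblk v hvm, h, hblk w hw]

lemma NA_eq_card (n k : ℕ) : NA (n+1) k (fun _ => 1) =
    ((Finset.powersetCard k (Finset.univ : Finset (Fin (n+1)))).filter (0 ∈ ·)).card := by
  classical
  unfold NA
  rw [← Finset.card_image_of_injective (f := dec) _ (fun _ _ h => dec_inj h), ← Set.ncard_coe_finset]
  congr 1
  have e1 : ∀ L : Finset (Fin (n+1)), ((dec L).sum fun _ n => n) = L.card := by
    intro L
    rw [dec_sum L (fun _ n => n) (by simp) (by simp)]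
    simp
  have e2 : ∀ L : Finset (Fin (n+1)), 0 ∈ L → ((dec L).sum fun v n => n • v) = fun _ => 1 := by
    intro L h0
    rw [dec_sum L (fun v n => n • v) (by simp) (by intros; simp [add_smul])]
    funext t
    simp [Finset.sum_apply, blk_sum L h0]
  ext m
  simp only [Set.mem_ofPred_eq, Finset.coe_image, Set.mem_image, Finset.mem_coe, Finset.mem_filter,
    Finset.mem_powersetCard]
  constructor
  · rintro ⟨h1, h2, h3⟩
    obtain ⟨L, h0, rfl⟩ := dec_surj m h1 h3
    exact ⟨L, ⟨⟨Finset.subset_univ _, by rw [← e1, h2]⟩, h0⟩, rfl⟩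
  · rintro ⟨L, ⟨⟨-, h2⟩, h0⟩, rfl⟩
    refine ⟨fun v hv => ?_, by rw [e1, h2], e2 L h0⟩
    obtain ⟨a, -, rfl⟩ := (dec_apply L v).1 (by simpa using hv)
    exact blk_root L a

lemma NA_zero (n : ℕ) : NA (n+1) 0 (fun _ => 1) = 0 := by
  rw [NA_eq_card]; simp

lemma NA_succ (n k : ℕ) : NA (n+1) (k+1) (fun _ => 1) = n.choose k := by
  classical
  rw [NA_eq_card]
  have : n.choose k = (Finset.powersetCard k ((Finset.univ : Finset (Fin (n+1))).erase 0)).card := by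
    simp
  rw [this]
  refine Finset.card_bij' (fun L _ => L.erase 0) (fun L _ => insert 0 L) ?_ ?_ ?_ ?_
  · intro L hL
    simp only [Finset.mem_filter, Finset.mem_powersetCard] at hL ⊢
    refine ⟨Finset.erase_subset_erase _ hL.1.1, ?_⟩
    rw [Finset.card_erase_of_mem hL.2, hL.1.2]; rfl
  · intro L hL
    simp only [Finset.mem_filter, Finset.mem_powersetCard] at hL ⊢
    have : (0 : Fin (n+1)) ∉ L := fun h => by simpa using hL.1 h
    refine ⟨⟨Finset.subset_univ _, ?_⟩, Finset.mem_insert_self _ _⟩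
    rw [Finset.card_insert_of_notMem this, hL.2]
  · intro L hL
    simp only [Finset.mem_filter] at hL
    exact Finset.insert_erase hL.2
  · intro L hL
    simp only [Finset.mem_powersetCard] at hL
    have : (0 : Fin (n+1)) ∉ L := fun h => by simpa using hL.1 h
    exact Finset.erase_insert this

open MeasureTheory ProbabilityTheory

noncomputable def nuB (n : ℕ) : Measure ℝ :=
  ∑ k ∈ Finset.range (n+1), ENNReal.ofReal ((n.choose k : ℝ) / 2 ^ n) •
    Measure.dirac ((Real.sqrt n)⁻¹ * (2 * (k:ℝ) - n))

lemma sum_choose_real (n : ℕ) : ∑ k ∈ Finset.range (n+1), (n.choose k : ℝ) = 2 ^ n := by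
  exact_mod_cast Nat.sum_range_choose n

instance nuB_prob (n : ℕ) : IsProbabilityMeasure (nuB n) := by
  constructor
  simp only [nuB, Measure.coe_finsetSum, Finset.sum_apply, Measure.smul_apply, measure_univ,
    smul_eq_mul, mul_one]
  rw [← ENNReal.ofReal_sum_of_nonneg (fun _ _ => by positivity), ← Finset.sum_div,
    sum_choose_real, div_self (by positivity), ENNReal.ofReal_one]

lemma nuB_Iic (n : ℕ) (x : ℝ) : (nuB n (Set.Iic x)).toReal =
    ∑ k ∈ Finset.range (n+1), if (Real.sqrt n)⁻¹ * (2 * (k:ℝ) - n) ≤ x then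
      (n.choose k : ℝ) / 2 ^ n else 0 := by
  simp only [nuB, Measure.coe_finsetSum, Finset.sum_apply, Measure.smul_apply,
    smul_eq_mul]
  rw [ENNReal.toReal_sum]
  · refine Finset.sum_congr rfl fun k _ => ?_
    rw [Measure.dirac_apply' _ measurableSet_Iic]
    by_cases h : (Real.sqrt n)⁻¹ * (2 * (k:ℝ) - n) ≤ x
    · have : (0:ℝ) ≤ (n.choose k : ℝ) / 2 ^ n := by positivity
      simp [Set.indicator, Set.mem_Iic, h, this]
    · simp [Set.indicator, Set.mem_Iic, h]
  · intro k _
    exact ENNReal.mul_ne_top ENNReal.ofReal_ne_top (measure_ne_top _ _)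

lemma nuB_charFun (n : ℕ) (t : ℝ) :
    charFun (nuB n) t = (Complex.exp (((Real.sqrt n)⁻¹ * t : ℝ) * Complex.I) / 2 +
      Complex.exp (-((((Real.sqrt n)⁻¹ * t : ℝ)) * Complex.I)) / 2) ^ n := by
  rw [charFun_apply_real, nuB, integral_finsetSum_measure
    (fun k _ => (integrable_dirac (by simp)).smul_measure (by simp)), add_pow]
  refine Finset.sum_congr rfl fun k hk => ?_
  have hk' : k ≤ n := by simpa [Nat.lt_succ_iff] using hk
  rw [integral_smul_measure, integral_dirac, ENNReal.toReal_ofReal (by positivity)]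
  rw [div_pow, div_pow, ← Complex.exp_nat_mul, ← Complex.exp_nat_mul]
  rw [Complex.real_smul]
  push_cast [hk']
  have h2 : (2:ℂ)^n = 2^k * 2^(n-k) := by rw [← pow_add]; congr 1; omega
  rw [h2]
  have : Complex.exp (t * ((Real.sqrt n : ℂ)⁻¹ * (2 * k - n)) * Complex.I) =
      Complex.exp (k * ((Real.sqrt n : ℂ)⁻¹ * t * Complex.I)) *
      Complex.exp ((n - k) * -((Real.sqrt n : ℂ)⁻¹ * t * Complex.I)) := by
    rw [← Complex.exp_add]; congr 1; ring
  rw [this]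
  field_simp

noncomputable def rad : Measure ℝ :=
  ENNReal.ofReal (1/2) • Measure.dirac 1 + ENNReal.ofReal (1/2) • Measure.dirac (-1)

instance rad_prob : IsProbabilityMeasure rad := by
  constructor
  simp only [rad, Measure.coe_add, Pi.add_apply, Measure.smul_apply, measure_univ, smul_eq_mul, mul_one]
  rw [← ENNReal.ofReal_add (by norm_num) (by norm_num)]
  norm_num

lemma rad_integral {E : Type*} [NormedAddCommGroup E] [NormedSpace ℝ E] [CompleteSpace E]
    (f : ℝ → E) : ∫ y, f y ∂rad = (1/2 : ℝ) • f 1 + (1/2 : ℝ) • f (-1) := by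
  rw [rad, integral_add_measure ((integrable_dirac (by simp)).smul_measure (by simp))
    ((integrable_dirac (by simp)).smul_measure (by simp)), integral_smul_measure,
    integral_smul_measure, integral_dirac, integral_dirac, ENNReal.toReal_ofReal (by norm_num)]

lemma nuB_tendsto (t : ℝ) : Filter.Tendsto (fun n => charFun (nuB n) t) Filter.atTop
    (nhds (Complex.exp (-t^2/2))) := by
  have := tendsto_charFun_inv_sqrt_mul_pow (P := rad) (X := id) aemeasurable_id
    (by rw [rad_integral]; simp) (by rw [rad_integral]; norm_num) t
  refine this.congr fun n => ?_
  rw [nuB_charFun, Measure.map_id, charFun_apply_real, rad_integral]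
  simp only [Complex.real_smul]
  push_cast
  congr 1
  rw [mul_one, mul_neg, mul_one, neg_mul]
  ring

noncomputable def nuP (n : ℕ) : ProbabilityMeasure ℝ := ⟨nuB n, inferInstance⟩

noncomputable def gaP : ProbabilityMeasure ℝ := ⟨gaussianReal 0 1, inferInstance⟩

lemma nuB_cdf (x : ℝ) : Filter.Tendsto (fun n => (nuB n (Set.Iic x)).toReal) Filter.atTop
    (nhds ((1 / Real.sqrt (2 * Real.pi)) * ∫ u in Set.Iic x, Real.exp (-u ^ 2 / 2))) := by
  have h1 : Filter.Tendsto nuP Filter.atTop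
      (nhds gaP) := by
    rw [ProbabilityMeasure.tendsto_iff_tendsto_charFun]
    intro t
    simpa [nuP, gaP, charFun_gaussianReal, neg_div] using nuB_tendsto t
  have h2 := ProbabilityMeasure.tendsto_measure_of_null_frontier_of_tendsto' h1 (E := Set.Iic x) (by
    have := nullSingletonClass_gaussianReal (μ := 0) (v := 1) one_ne_zero
    simp [gaP, frontier_Iic])
  have h3 := (ENNReal.tendsto_toReal (measure_ne_top _ _)).comp h2
  have e : ((gaussianReal 0 1) (Set.Iic x)).toReal =
      (1 / Real.sqrt (2 * Real.pi)) * ∫ u in Set.Iic x, Real.exp (-u ^ 2 / 2) := by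
    rw [gaussianReal_apply_eq_integral _ one_ne_zero, ENNReal.toReal_ofReal
      (integral_nonneg fun _ => gaussianPDFReal_nonneg _ _ _), ← integral_const_mul]
    simp [gaussianPDFReal]
  rw [← e]
  exact h3

lemma tsum_NA (n : ℕ) (p : ℕ → Prop) [DecidablePred p] :
    (∑' k : ℕ, if p k then (NA (n+1) k (fun _ => 1) : ℝ) else 0) =
    ∑ k ∈ Finset.range (n+1), if p (k+1) then (n.choose k : ℝ) else 0 := by
  rw [tsum_eq_sum (s := Finset.range (n+2)), Finset.sum_range_succ']
  · simp [NA_zero, NA_succ]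
  · intro k hk
    obtain ⟨j, rfl⟩ : ∃ j, k = j + 1 := ⟨k-1, by simp at hk; omega⟩
    rw [NA_succ, Nat.choose_eq_zero_of_lt (by simp at hk; omega)]
    simp

open Filter in
/-- Theorem 1.2, type `A_r` (Gaussian behavior): the normalized number of positive roots
used in the decompositions of the highest root `𝟙 = (1,…,1)` of `A_r`, with mean
`μ_r = (r+1)/2` and standard deviation `σ_r = √((r−1)/4)`, converges in distribution to
the standard normal as `r → ∞`. -/
theorem gaussian_highestRoot_typeA (x : ℝ) :
    Tendsto (fun r : ℕ =>
      (∑' k : ℕ, if (k : ℝ) ≤ ((r : ℝ) + 1) / 2 + x * Real.sqrt (((r : ℝ) - 1) / 4) then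
          (NA r k (fun _ => 1) : ℝ) else 0) /
        (∑' k : ℕ, (NA r k (fun _ => 1) : ℝ)))
      atTop
      (nhds ((1 / Real.sqrt (2 * Real.pi)) * ∫ u in Set.Iic x, Real.exp (-u ^ 2 / 2))) := by
  rw [← Filter.tendsto_add_atTop_iff_nat 1]
  refine (nuB_cdf x).congr' ?_
  filter_upwards [Filter.eventually_gt_atTop 0] with n hn
  have hd := tsum_NA n (fun _ => True)
  simp only [if_true] at hd
  rw [tsum_NA n, hd, sum_choose_real, nuB_Iic, Finset.sum_div]
  refine Finset.sum_congr rfl fun k _ => ?_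
  have hs : (0:ℝ) < Real.sqrt n := Real.sqrt_pos.2 (by exact_mod_cast hn)
  have h4 : Real.sqrt (((n + 1 : ℕ) - 1 : ℝ) / 4) = Real.sqrt n / 2 := by
    push_cast
    rw [add_sub_cancel_right, Real.sqrt_div (by positivity)]
    congr 1
    rw [show (4:ℝ) = 2 ^ 2 by norm_num]
    exact Real.sqrt_sq (by norm_num)
  have key : ((Real.sqrt n)⁻¹ * (2 * (k:ℝ) - n) ≤ x) ↔
      (((k + 1 : ℕ) : ℝ) ≤ (((n + 1 : ℕ) : ℝ) + 1) / 2 + x * Real.sqrt (((n + 1 : ℕ) - 1 : ℝ) / 4)) := by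
    rw [h4, inv_mul_le_iff₀ hs]
    push_cast
    constructor <;> intro h <;> linarith
  by_cases h : (Real.sqrt n)⁻¹ * (2 * (k:ℝ) - n) ≤ x
  · rw [if_pos h, if_pos (key.1 h)]
  · rw [if_neg h, if_neg (fun h' => h (key.2 h')), zero_div]
end

section
/- For r ≥ 2 let p_{r,k} = N^B_k(θ_B) be the number of decompositions of the highest root θ_B = (1,2,2,…,2) ∈ ℕ^r of B_r as a sum of exactly k positive roots, and set μ_r = (Σ_k k·p_{r,k})/(Σ_k p_{r,k}) and σ_r = √( (Σ_k k²·p_{r,k})/(Σ_k p_{r,k}) − μ_r² ). Then for every x ∈ ℝ: lim_{r→∞} (Σ_{k ∈ ℕ, k ≤ μ_r + x·σ_r} p_{r,k}) / (Σ_{k≥0} p_{r,k}) = (1/√(2π))·∫_{−∞}^x e^{−u²/2} du. That is, the normalized number of positive roots used in the decompositions of the highest root of B_r converges in distribution to the standard normal as r → ∞. -/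
open Polynomial

/-- The positive roots of the Lie algebra of type `B_r` in simple-root coordinates
(`1`-based positions): the interval vectors `α[i,j]` for `1 ≤ i ≤ j ≤ r`, together with
the vectors `β[i,j]` (value `1` at positions `i..j−1`, value `2` at positions `j..r`)
for `1 ≤ i < j ≤ r`. -/
def isPosRootB (r : ℕ) (v : Fin r → ℕ) : Prop :=
  (∃ i j : ℕ, 1 ≤ i ∧ i ≤ j ∧ j ≤ r ∧
    v = fun t => if i ≤ t.val + 1 ∧ t.val + 1 ≤ j then 1 else 0) ∨
  (∃ i j : ℕ, 1 ≤ i ∧ i < j ∧ j ≤ r ∧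
    v = fun t => if i ≤ t.val + 1 ∧ t.val + 1 ≤ j - 1 then 1
      else if j ≤ t.val + 1 then 2 else 0)

/-- `NB r k λ` is the number of decompositions of the weight `λ` as a sum of exactly `k`
positive roots of `B_r`. -/
noncomputable def NB (r k : ℕ) (lam : Fin r → ℕ) : ℕ :=
  Set.ncard {m : (Fin r → ℕ) →₀ ℕ |
    (∀ v ∈ m.support, isPosRootB r v) ∧
    (m.sum fun _ n => n) = k ∧
    (m.sum fun v n => n • v) = lam}

/-- The highest root `θ_B = (1,2,2,…,2)` of `B_r` in simple-root coordinates. -/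
def thetaB (r : ℕ) : Fin r → ℕ := fun t => if t.val = 0 then 1 else 2

/-- `pB r k` is the number of decompositions of the highest root of `B_r` as a sum of
exactly `k` positive roots (as a real number). -/
noncomputable def pB (r k : ℕ) : ℝ := (NB r k (thetaB r) : ℝ)

/-- The mean number of positive roots used in the decompositions of the highest root of
`B_r`, each decomposition being equally likely. -/
noncomputable def muB (r : ℕ) : ℝ := (∑' k : ℕ, (k : ℝ) * pB r k) / ∑' k : ℕ, pB r k

/-- The variance of the number of positive roots used in the decompositions of the
highest root of `B_r`. -/
noncomputable def varB (r : ℕ) : ℝ :=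
  (∑' k : ℕ, (k : ℝ) ^ 2 * pB r k) / (∑' k : ℕ, pB r k) - muB r ^ 2

open Multiset in
/-- intervals of `A` not ending at `n` -/
def splitF (n : ℕ) (A : Multiset (ℕ × ℕ)) : Multiset (ℕ × ℕ) := A.filter (fun c => c.2 ≠ n)

/-- starting points of the intervals of `A` ending at `n` -/
def splitP (n : ℕ) (A : Multiset (ℕ × ℕ)) : Multiset ℕ := (A.filter (fun c => c.2 = n)).map Prod.fst

/-- close the intervals starting at the elements of `P` at position `n` -/
def closeP (n : ℕ) (P : Multiset ℕ) : Multiset (ℕ × ℕ) := P.map (fun a => (a, n))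

/-- number of intervals of `A` covering `t` -/
def cov (t : ℕ) (A : Multiset (ℕ × ℕ)) : ℕ := A.countP (fun c => c.1 ≤ t ∧ t ≤ c.2)

theorem cov_add (t : ℕ) (A B : Multiset (ℕ × ℕ)) : cov t (A + B) = cov t A + cov t B := by
  simp [cov]

theorem cov_close {t n : ℕ} (h : t ≤ n) (P : Multiset ℕ) :
    cov t (closeP n P) = P.countP (fun a => a ≤ t) := by
  unfold cov closeP
  rw [Multiset.countP_map, Multiset.countP_eq_card_filter]
  simp [h]

theorem cov_eq_zero {t : ℕ} {A : Multiset (ℕ × ℕ)} (h : ∀ c ∈ A, c.2 < t) : cov t A = 0 := by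
  unfold cov
  rw [Multiset.countP_eq_zero]
  intro c hc h2
  have := h c hc
  omega

theorem split_join (n : ℕ) (A : Multiset (ℕ × ℕ)) : splitF n A + closeP n (splitP n A) = A := by
  unfold splitF splitP closeP
  rw [Multiset.map_map]
  have : Multiset.map ((fun a => (a, n)) ∘ Prod.fst) (Multiset.filter (fun c => c.2 = n) A)
      = Multiset.filter (fun c => c.2 = n) A := by
    conv_rhs => rw [← Multiset.map_id (Multiset.filter (fun c => c.2 = n) A)]
    apply Multiset.map_congr rfl
    rintro ⟨a, b⟩ hx
    have := (Multiset.mem_filter.1 hx).2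
    simp_all
  rw [this, add_comm]
  exact Multiset.filter_add_not _ A

theorem splitF_join {n : ℕ} {F : Multiset (ℕ × ℕ)} (P : Multiset ℕ) (hF : ∀ c ∈ F, c.2 < n) :
    splitF n (F + closeP n P) = F := by
  unfold splitF closeP
  rw [Multiset.filter_add]
  have h1 : Multiset.filter (fun c => c.2 ≠ n) F = F := by
    rw [Multiset.filter_eq_self]
    intro c hc
    exact (hF c hc).ne
  rw [h1]
  have : Multiset.filter (fun c : ℕ × ℕ => c.2 ≠ n) (P.map (fun a => (a, n))) = 0 := by
    rw [Multiset.filter_eq_nil]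
    simp
  rw [this, add_zero]

theorem splitP_join {n : ℕ} {F : Multiset (ℕ × ℕ)} (P : Multiset ℕ) (hF : ∀ c ∈ F, c.2 < n) :
    splitP n (F + closeP n P) = P := by
  unfold splitP closeP
  rw [Multiset.filter_add]
  have h1 : Multiset.filter (fun c => c.2 = n) F = 0 := by
    rw [Multiset.filter_eq_nil]
    intro c hc
    exact (hF c hc).ne
  rw [h1]
  have : Multiset.filter (fun c : ℕ × ℕ => c.2 = n) (P.map (fun a => (a, n)))
      = (P.map (fun a => (a, n))) := by
    rw [Multiset.filter_eq_self]
    simp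
  rw [this, zero_add, Multiset.map_map]
  simp

theorem mem_splitF {n : ℕ} {A : Multiset (ℕ × ℕ)} {c : ℕ × ℕ} :
    c ∈ splitF n A ↔ c ∈ A ∧ c.2 ≠ n := by simp [splitF]

theorem mem_splitP {n : ℕ} {A : Multiset (ℕ × ℕ)} {a : ℕ} :
    a ∈ splitP n A ↔ (a, n) ∈ A := by simp [splitP]

theorem mem_closeP {n : ℕ} {P : Multiset ℕ} {c : ℕ × ℕ} :
    c ∈ closeP n P ↔ c.1 ∈ P ∧ c.2 = n := by
  unfold closeP
  rw [Multiset.mem_map]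
  constructor
  · rintro ⟨a, ha, rfl⟩; exact ⟨ha, rfl⟩
  · rintro ⟨h, rfl⟩; exact ⟨c.1, h, rfl⟩

theorem card_closeP (n : ℕ) (P : Multiset ℕ) : (closeP n P).card = P.card := by simp [closeP]

theorem cov_split {t n : ℕ} (h : t ≤ n) (A : Multiset (ℕ × ℕ)) :
    cov t A = cov t (splitF n A) + (splitP n A).countP (fun a => a ≤ t) := by
  conv_lhs => rw [← split_join n A, cov_add, cov_close h]

/-- coordinates of the highest root, 1-based -/
def lamB (t : ℕ) : ℕ := if t = 1 then 1 else 2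

abbrev StB := Multiset (ℕ × ℕ) × Multiset ℕ

/-- partial decompositions at level `m`: closed intervals, and starting points of active ones -/
def VU (m : ℕ) (x : StB) : Prop :=
  (∀ c ∈ x.1, 1 ≤ c.1 ∧ c.1 ≤ c.2 ∧ c.2 < m) ∧ (∀ a ∈ x.2, 1 ≤ a ∧ a ≤ m) ∧
  ∀ t, 1 ≤ t → t ≤ m → cov t x.1 + x.2.countP (fun a => a ≤ t) = lamB t

theorem VU.card {m : ℕ} {x : StB} (h : VU m x) (hm : 1 ≤ m) : x.2.card = lamB m := by
  have h1 := h.2.2 m hm le_rfl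
  rw [cov_eq_zero (fun c hc => (h.1 c hc).2.2), zero_add] at h1
  rw [← h1, eq_comm, Multiset.countP_eq_card]
  exact fun a ha => (h.2.1 a ha).2

theorem VU.zero {x : StB} (h : VU 0 x) : x = (0, 0) := by
  obtain ⟨F, P⟩ := x
  have h1 : F = 0 := Multiset.eq_zero_of_forall_notMem fun c hc => by
    have := h.1 c hc; omega
  have h2 : P = 0 := Multiset.eq_zero_of_forall_notMem fun c hc => by
    have := h.2.1 c hc; omega
  simp [h1, h2]

def stepU (m : ℕ) (x : StB) (Q : Multiset ℕ) : StB :=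
  (x.1 + closeP m (x.2 - Q), Q + Multiset.replicate (lamB (m + 1) - Q.card) (m + 1))

def invU (m : ℕ) (x : StB) : Σ _ : StB, Multiset ℕ :=
  ⟨(splitF m x.1, x.2.filter (fun a => a ≤ m) + splitP m x.1), x.2.filter (fun a => a ≤ m)⟩

noncomputable def UU : ℕ → Finset StB
  | 0 => {(0, 0)}
  | m + 1 => ((UU m).sigma fun x => x.2.powerset.toFinset).image (fun p => stepU m p.1 p.2)

theorem filter_step {m k : ℕ} {Q : Multiset ℕ} (hQ : ∀ a ∈ Q, a ≤ m) :
    (Q + Multiset.replicate k (m + 1)).filter (fun a => a ≤ m) = Q := by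
  rw [Multiset.filter_add]
  have h1 : Q.filter (fun a => a ≤ m) = Q := by
    rw [Multiset.filter_eq_self]; exact hQ
  have h2 : (Multiset.replicate k (m + 1)).filter (fun a => a ≤ m) = 0 := by
    rw [Multiset.filter_eq_nil]
    intro a ha
    have := Multiset.eq_of_mem_replicate ha
    omega
  rw [h1, h2, add_zero]

theorem inv_step {m : ℕ} {x : StB} {Q : Multiset ℕ} (h : VU m x) (hQ : Q ≤ x.2) :
    invU m (stepU m x Q) = ⟨x, Q⟩ := by
  have hQ' : ∀ a ∈ Q, a ≤ m := fun a ha => (h.2.1 a (Multiset.mem_of_le hQ ha)).2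
  have hF : ∀ c ∈ x.1, c.2 < m := fun c hc => (h.1 c hc).2.2
  unfold invU stepU
  simp only [filter_step hQ', splitF_join _ hF, splitP_join _ hF, add_tsub_cancel_of_le hQ]

theorem VU_step {m : ℕ} {x : StB} {Q : Multiset ℕ} (h : VU m x) (hQ : Q ≤ x.2) :
    VU (m + 1) (stepU m x Q) := by
  have hQ' : ∀ a ∈ Q, 1 ≤ a ∧ a ≤ m := fun a ha => (h.2.1 a (Multiset.mem_of_le hQ ha))
  have hQc : Q.card ≤ lamB (m + 1) := by
    refine (Multiset.card_le_card hQ).trans ?_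
    rcases Nat.eq_zero_or_pos m with rfl | hm
    · rw [h.zero]; simp
    · rw [h.card hm]; unfold lamB; split_ifs <;> omega
  refine ⟨?_, ?_, ?_⟩
  · intro c hc
    rcases Multiset.mem_add.1 hc with hc | hc
    · have := h.1 c hc; omega
    · rw [mem_closeP] at hc
      have := h.2.1 c.1 (Multiset.mem_of_le (Multiset.sub_le_self _ _) hc.1)
      omega
  · intro a ha
    rcases Multiset.mem_add.1 ha with ha | ha
    · have := hQ' a ha; omega
    · have := Multiset.eq_of_mem_replicate ha; omega
  · intro t ht htm
    unfold stepU
    simp only [cov_add, Multiset.countP_add]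
    by_cases htm' : t ≤ m
    · rw [cov_close htm', Multiset.countP_sub hQ]
      have h2 : (Multiset.replicate (lamB (m + 1) - Q.card) (m + 1)).countP (fun a => a ≤ t) = 0 := by
        rw [Multiset.countP_eq_zero]
        intro a ha
        have := Multiset.eq_of_mem_replicate ha
        omega
      have h3 := h.2.2 t ht htm'
      have h4 := Multiset.countP_le_of_le (fun a => a ≤ t) hQ
      omega
    · have : t = m + 1 := by omega
      subst this
      rw [cov_eq_zero (fun c hc => by have := h.1 c hc; omega),
        cov_eq_zero (fun c hc => by have := (mem_closeP.1 hc).2; omega)]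
      have h1 : Q.countP (fun a => a ≤ m + 1) = Q.card := by
        rw [Multiset.countP_eq_card]
        intro a ha; have := hQ' a ha; omega
      have h2 : (Multiset.replicate (lamB (m + 1) - Q.card) (m + 1)).countP (fun a => a ≤ m + 1)
          = (Multiset.replicate (lamB (m + 1) - Q.card) (m + 1)).card := by
        rw [Multiset.countP_eq_card]
        intro a ha
        have := Multiset.eq_of_mem_replicate ha
        omega
      rw [h1, h2, Multiset.card_replicate]
      omega

theorem VU_inv {m : ℕ} {x : StB} (h : VU (m + 1) x) :
    VU m (invU m x).1 ∧ (invU m x).2 ≤ (invU m x).1.2 ∧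
      stepU m (invU m x).1 (invU m x).2 = x := by
  obtain ⟨F, P⟩ := x
  have hc := h.card (by omega)
  obtain ⟨h1, h2, h3⟩ := h
  simp only at h1 h2 h3 hc
  refine ⟨⟨?_, ?_, ?_⟩, ?_, ?_⟩
  · intro c hc
    have hc := mem_splitF.1 hc
    have := h1 c hc.1
    omega
  · intro a ha
    rcases Multiset.mem_add.1 ha with ha | ha
    · have := Multiset.mem_filter.1 ha
      have h4 := h2 a this.1
      exact ⟨h4.1, this.2⟩
    · have := h1 _ (mem_splitP.1 ha)
      simp only at this
      omega
  · intro t ht htm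
    have := h3 t ht (by omega)
    rw [cov_split htm] at this
    simp only [invU, Multiset.countP_add]
    rw [← this]
    have h5 : (P.filter (fun a => a ≤ m)).countP (fun a => a ≤ t) = P.countP (fun a => a ≤ t) := by
      rw [Multiset.countP_filter]
      apply Multiset.countP_congr rfl
      intro a _
      simp
      omega
    rw [h5]
    ring
  · simp [invU]
  · simp only [invU, stepU]
    rw [add_tsub_cancel_left, split_join]
    congr 1
    conv_rhs => rw [← Multiset.filter_add_not (fun a => a ≤ m) P]
    congr 1
    rw [eq_comm, Multiset.eq_replicate]
    constructor
    · have := congrArg Multiset.card (Multiset.filter_add_not (fun a => a ≤ m) P)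
      rw [Multiset.card_add] at this
      omega
    · intro a ha
      have := Multiset.mem_filter.1 ha
      have := h2 a this.1
      omega

theorem mem_UU (m : ℕ) : ∀ x : StB, x ∈ UU m ↔ VU m x := by
  induction m with
  | zero =>
    intro x
    constructor
    · intro hx
      have : x = (0, 0) := by simpa [UU] using hx
      subst this
      refine ⟨by simp, by simp, fun t ht h => by omega⟩
    · intro h
      simp [UU, h.zero]
  | succ m ih =>
    intro x
    simp only [UU, Finset.mem_image, Finset.mem_sigma, Multiset.mem_toFinset, Multiset.mem_powerset]
    constructor
    · rintro ⟨⟨y, Q⟩, ⟨hy, hQ⟩, rfl⟩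
      exact VU_step ((ih y).1 hy) hQ
    · intro h
      have := VU_inv h
      exact ⟨invU m x, ⟨(ih _).2 this.1, this.2.1⟩, this.2.2⟩

theorem sum_UU_succ (m : ℕ) (g : StB → ℂ) :
    ∑ x ∈ UU (m + 1), g x = ∑ x ∈ UU m, ∑ Q ∈ x.2.powerset.toFinset, g (stepU m x Q) := by
  rw [UU, Finset.sum_image, Finset.sum_sigma]
  rintro ⟨y, Q⟩ hy ⟨y', Q'⟩ hy' he
  simp only [Finset.coe_sigma, Set.mem_sigma_iff, Finset.mem_coe, Multiset.mem_toFinset,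
    Multiset.mem_powerset, mem_UU] at hy hy'
  rw [← inv_step hy.1 hy.2, ← inv_step hy'.1 hy'.2]
  simp only at he
  rw [he]

/-- weight of a state -/
def wU (x : StB) : ℕ := x.1.card + x.2.card

noncomputable def sB (q : ℂ) (m : ℕ) : ℂ := ∑ x ∈ UU m, if x.2.Nodup then 0 else q ^ wU x
noncomputable def dB (q : ℂ) (m : ℕ) : ℂ := ∑ x ∈ UU m, if x.2.Nodup then q ^ wU x else 0

theorem wU_step {m : ℕ} {x : StB} {Q : Multiset ℕ} (hQ : Q ≤ x.2) (hm : 1 ≤ m) (hc : Q.card ≤ 2) :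
    wU (stepU m x Q) = wU x + (2 - Q.card) := by
  have h1 := Multiset.card_le_card hQ
  have h2 : lamB (m + 1) = 2 := by unfold lamB; rw [if_neg]; omega
  simp only [wU, stepU, Multiset.card_add, card_closeP, Multiset.card_sub hQ, h2,
    Multiset.card_replicate]
  omega

theorem UU_one : UU 1 = {(0, {1})} := by
  ext x
  rw [mem_UU, Finset.mem_singleton]
  constructor
  · intro h
    have hc := h.card le_rfl
    obtain ⟨F, P⟩ := x
    have h1 : F = 0 := Multiset.eq_zero_of_forall_notMem fun c hc => by
      have := h.1 c hc; omega
    obtain ⟨a, ha⟩ := Multiset.card_eq_one.1 hc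
    simp only at ha
    have := h.2.1 a (by simp [ha])
    have : a = 1 := by omega
    rw [h1, ha, this]
  · rintro rfl
    refine ⟨by simp, by simp, fun t h1 h2 => ?_⟩
    have : t = 1 := by omega
    subst this
    decide

theorem sub_sum (m : ℕ) (hm : 2 ≤ m) (x : StB) (hx : VU m x) (q : ℂ) :
    (∑ Q ∈ x.2.powerset.toFinset, (if (stepU m x Q).2.Nodup then 0 else q ^ wU (stepU m x Q))
      = (if x.2.Nodup then q ^ 2 else 1 + q ^ 2) * q ^ wU x) ∧
    (∑ Q ∈ x.2.powerset.toFinset, (if (stepU m x Q).2.Nodup then q ^ wU (stepU m x Q) else 0)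
      = (if x.2.Nodup then 1 + 2 * q else q) * q ^ wU x) ∧
    x.2.toFinset.card = if x.2.Nodup then 2 else 1 := by
  have hc := hx.card (by omega)
  have h1 : lamB m = 2 := by unfold lamB; rw [if_neg]; omega
  have h2 : lamB (m + 1) = 2 := by unfold lamB; rw [if_neg]; omega
  rw [h1] at hc
  have hw : ∀ Q ≤ x.2, wU (stepU m x Q) = wU x + (2 - Q.card) := fun Q hQ =>
    wU_step hQ (by omega) (by rw [← hc]; exact Multiset.card_le_card hQ)
  obtain ⟨a, b, hab⟩ := Multiset.card_eq_two.1 hc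
  have ha := (hx.2.1 a (by simp [hab])).2
  have hb := (hx.2.1 b (by simp [hab])).2
  have e1 : (stepU m x 0).2 = {m + 1, m + 1} := by simp [stepU, h2]
  have e2 : ∀ c, (stepU m x {c}).2 = {c, m + 1} := by intro c; simp [stepU, h2]
  have e3 : (stepU m x {a, b}).2 = {a, b} := by simp [stepU, h2]
  have w1 := hw 0 (by simp)
  have w2 := hw {a} (by simp [hab])
  have w3 := hw {b} (by simp [hab])
  have w4 := hw {a, b} (by simp [hab])
  have hps : x.2.powerset.toFinset = {0, {a}, {b}, {a, b}} := by
    rw [hab]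
    change (Multiset.powerset (a ::ₘ b ::ₘ 0)).toFinset = _
    rw [Multiset.powerset_cons, Multiset.powerset_cons, Multiset.powerset_zero]
    ext Q
    simp only [Multiset.mem_toFinset, Multiset.mem_add, Multiset.mem_map, Finset.mem_insert,
      Finset.mem_singleton, Multiset.mem_singleton]
    constructor
    · rintro ((rfl | ⟨_, rfl, rfl⟩) | ⟨_, (rfl | ⟨_, rfl, rfl⟩), rfl⟩) <;> simp
    · rintro (rfl | rfl | rfl | rfl)
      · simp
      · exact Or.inr ⟨0, by simp, rfl⟩
      · simp
      · exact Or.inr ⟨{b}, by simp, rfl⟩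
  rw [hps]
  by_cases hE : a = b
  · subst hE
    have hn : ¬ x.2.Nodup := by rw [hab]; simp
    have : ({0, {a}, {a}, {a, a}} : Finset (Multiset ℕ)) = {0, {a}, {a, a}} := by simp
    rw [this]
    have n1 : (0 : Multiset ℕ) ∉ ({{a}, {a, a}} : Finset (Multiset ℕ)) := by
      simp
    have n2 : ({a} : Multiset ℕ) ∉ ({{a, a}} : Finset (Multiset ℕ)) := by
      simp
    refine ⟨?_, ?_, ?_⟩
    · rw [Finset.sum_insert n1, Finset.sum_insert n2, Finset.sum_singleton, e1, e2, e3, w1, w2, w4]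
      have : a ≠ m + 1 := by omega
      simp [hn, this]
      ring
    · rw [Finset.sum_insert n1, Finset.sum_insert n2, Finset.sum_singleton, e1, e2, e3, w1, w2, w4]
      have : a ≠ m + 1 := by omega
      simp [hn, this]
      ring
    · simp [hn]; simp [hab]
  · have hn : x.2.Nodup := by rw [hab]; simp [hE]
    have n1 : (0 : Multiset ℕ) ∉ ({{a}, {b}, {a, b}} : Finset (Multiset ℕ)) := by
      simp
    have n2 : ({a} : Multiset ℕ) ∉ ({{b}, {a, b}} : Finset (Multiset ℕ)) := by
      simp [hE]
    have n3 : ({b} : Multiset ℕ) ∉ ({{a, b}} : Finset (Multiset ℕ)) := by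
      simp
    have : a ≠ m + 1 := by omega
    have : b ≠ m + 1 := by omega
    refine ⟨?_, ?_, ?_⟩
    · rw [Finset.sum_insert n1, Finset.sum_insert n2, Finset.sum_insert n3, Finset.sum_singleton,
        e1, e2, e2, e3, w1, w2, w3, w4]
      simp [*]
      ring
    · rw [Finset.sum_insert n1, Finset.sum_insert n2, Finset.sum_insert n3, Finset.sum_singleton,
        e1, e2, e2, e3, w1, w2, w3, w4]
      simp [*]
      ring
    · simp [hn]; simp [hab, hE]

theorem sB_two (q : ℂ) : sB q 2 = q ^ 3 := by
  have hps : (Multiset.powerset {1}).toFinset = ({0, {1}} : Finset (Multiset ℕ)) := by decide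
  unfold sB
  rw [sum_UU_succ, UU_one, Finset.sum_singleton]
  simp only
  rw [hps, Finset.sum_insert (by simp), Finset.sum_singleton]
  simp [stepU, wU, lamB, closeP]

theorem dB_two (q : ℂ) : dB q 2 = q ^ 2 := by
  have hps : (Multiset.powerset {1}).toFinset = ({0, {1}} : Finset (Multiset ℕ)) := by decide
  unfold dB
  rw [sum_UU_succ, UU_one, Finset.sum_singleton]
  simp only
  rw [hps, Finset.sum_insert (by simp), Finset.sum_singleton]
  simp [stepU, wU, lamB, closeP]

theorem sB_succ (q : ℂ) (m : ℕ) (hm : 2 ≤ m) :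
    sB q (m + 1) = (1 + q ^ 2) * sB q m + q ^ 2 * dB q m := by
  unfold sB dB
  rw [sum_UU_succ, Finset.mul_sum, Finset.mul_sum, ← Finset.sum_add_distrib]
  apply Finset.sum_congr rfl
  intro x hx
  rw [(sub_sum m hm x ((mem_UU m x).1 hx) q).1]
  split_ifs <;> ring

theorem dB_succ (q : ℂ) (m : ℕ) (hm : 2 ≤ m) :
    dB q (m + 1) = q * sB q m + (1 + 2 * q) * dB q m := by
  unfold sB dB
  rw [sum_UU_succ, Finset.mul_sum, Finset.mul_sum, ← Finset.sum_add_distrib]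
  apply Finset.sum_congr rfl
  intro x hx
  rw [(sub_sum m hm x ((mem_UU m x).1 hx) q).2.1]
  split_ifs <;> ring

/-- contribution of decompositions containing the root `β[y, m+1]` -/
noncomputable def tB (q : ℂ) (m : ℕ) : ℂ := ∑ x ∈ UU m, ∑ _y ∈ x.2.toFinset, q ^ wU x

theorem tB_eq (q : ℂ) (m : ℕ) (hm : 2 ≤ m) : tB q m = sB q m + 2 * dB q m := by
  unfold tB sB dB
  rw [Finset.mul_sum, ← Finset.sum_add_distrib]
  apply Finset.sum_congr rfl
  intro x hx
  rw [Finset.sum_const, (sub_sum m hm x ((mem_UU m x).1 hx) q).2.2]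
  split_ifs <;> simp

theorem tB_one (q : ℂ) : tB q 1 = q := by
  unfold tB
  rw [UU_one]
  simp [wU]

theorem tB_sum (q : ℂ) (n : ℕ) : q * ∑ m ∈ Finset.Ico 1 (n + 2), tB q m = dB q (n + 2) := by
  induction n with
  | zero => simp [tB_one, dB_two]; ring
  | succ n ih =>
    rw [Finset.sum_Ico_succ_top (by omega), mul_add, ih, tB_eq q (n + 2) (by omega), dB_succ q (n + 2) (by omega)]
    ring

abbrev CodeB := (ℕ × ℕ) ⊕ (ℕ × ℕ)

/-- vector of a coded root -/
def vecB (r : ℕ) : CodeB → Fin r → ℕ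
  | Sum.inl c => fun t => if c.1 ≤ t.val + 1 ∧ t.val + 1 ≤ c.2 then 1 else 0
  | Sum.inr c => fun t => if c.1 ≤ t.val + 1 ∧ t.val + 1 ≤ c.2 - 1 then 1
      else if c.2 ≤ t.val + 1 then 2 else 0

def okB (r : ℕ) : CodeB → Prop
  | Sum.inl c => 1 ≤ c.1 ∧ c.1 ≤ c.2 ∧ c.2 ≤ r
  | Sum.inr c => 1 ≤ c.1 ∧ c.1 < c.2 ∧ c.2 ≤ r

theorem isPosRootB_iff (r : ℕ) (v : Fin r → ℕ) :
    isPosRootB r v ↔ ∃ c, okB r c ∧ vecB r c = v := by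
  constructor
  · rintro (⟨i, j, h1, h2, h3, rfl⟩ | ⟨i, j, h1, h2, h3, rfl⟩)
    · exact ⟨Sum.inl (i, j), ⟨h1, h2, h3⟩, rfl⟩
    · exact ⟨Sum.inr (i, j), ⟨h1, h2, h3⟩, rfl⟩
  · rintro ⟨⟨i, j⟩ | ⟨i, j⟩, ⟨h1, h2, h3⟩, rfl⟩
    · exact Or.inl ⟨i, j, h1, h2, h3, rfl⟩
    · exact Or.inr ⟨i, j, h1, h2, h3, rfl⟩

theorem vecB_inj (r : ℕ) : Set.InjOn (vecB r) {c | okB r c} := by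
  have hl : ∀ i j i' j' : ℕ, okB r (Sum.inl (i, j)) → okB r (Sum.inl (i', j')) →
      vecB r (Sum.inl (i, j)) = vecB r (Sum.inl (i', j')) → i' ≤ i ∧ j ≤ j' := by
    rintro i j i' j' ⟨h1, h2, h3⟩ ⟨h1', h2', h3'⟩ he
    simp only at *
    have e1 := congrFun he ⟨i - 1, by omega⟩
    have e2 := congrFun he ⟨j - 1, by omega⟩
    simp only [vecB] at e1 e2
    split_ifs at e1 e2 <;> omega
  have hr : ∀ i j i' j' : ℕ, okB r (Sum.inr (i, j)) → okB r (Sum.inr (i', j')) →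
      vecB r (Sum.inr (i, j)) = vecB r (Sum.inr (i', j')) → i' ≤ i ∧ j' ≤ j := by
    rintro i j i' j' ⟨h1, h2, h3⟩ ⟨h1', h2', h3'⟩ he
    simp only at *
    have e1 := congrFun he ⟨i - 1, by omega⟩
    have e2 := congrFun he ⟨j - 1, by omega⟩
    simp only [vecB] at e1 e2
    split_ifs at e1 e2 <;> omega
  have hm : ∀ i j i' j' : ℕ, okB r (Sum.inl (i, j)) → okB r (Sum.inr (i', j')) →
      vecB r (Sum.inl (i, j)) = vecB r (Sum.inr (i', j')) → False := by
    rintro i j i' j' ⟨h1, h2, h3⟩ ⟨h1', h2', h3'⟩ he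
    simp only at *
    have e1 := congrFun he ⟨r - 1, by omega⟩
    simp only [vecB] at e1
    split_ifs at e1 <;> omega
  rintro (⟨i, j⟩ | ⟨i, j⟩) h (⟨i', j'⟩ | ⟨i', j'⟩) h' he
  · have e1 := hl _ _ _ _ h h' he
    have e2 := hl _ _ _ _ h' h he.symm
    have : i = i' := by omega
    have : j = j' := by omega
    subst_vars; rfl
  · exact (hm _ _ _ _ h h' he).elim
  · exact (hm _ _ _ _ h' h he.symm).elim
  · have e1 := hr _ _ _ _ h h' he
    have e2 := hr _ _ _ _ h' h he.symm
    have : i = i' := by omega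
    have : j = j' := by omega
    subst_vars; rfl

/-- combine intervals and beta roots -/
def mkB (A B : Multiset (ℕ × ℕ)) : Multiset CodeB := A.map Sum.inl + B.map Sum.inr

theorem mkB_surj (M : Multiset CodeB) : ∃ A B, M = mkB A B := by
  induction M using Multiset.induction with
  | empty => exact ⟨0, 0, rfl⟩
  | cons c M ih =>
    obtain ⟨A, B, rfl⟩ := ih
    rcases c with c | c
    · exact ⟨c ::ₘ A, B, by simp [mkB]⟩
    · exact ⟨A, c ::ₘ B, by simp [mkB]⟩

theorem mkB_left (A B : Multiset (ℕ × ℕ)) : (mkB A B).filterMap Sum.getLeft? = A := by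
  unfold mkB
  rw [Multiset.filterMap_add, Multiset.filterMap_map, Multiset.filterMap_map]
  have h1 : ((Sum.getLeft? : CodeB → _) ∘ Sum.inl : ℕ × ℕ → Option (ℕ × ℕ)) = some := rfl
  have h2 : Multiset.filterMap ((Sum.getLeft? : CodeB → _) ∘ Sum.inr : ℕ × ℕ → Option (ℕ × ℕ)) B = 0 := by
    apply Multiset.eq_zero_of_forall_notMem
    intro c hc
    rw [Multiset.mem_filterMap] at hc
    simp at hc
  rw [h1, h2, Multiset.filterMap_some, add_zero]

theorem mkB_right (A B : Multiset (ℕ × ℕ)) : (mkB A B).filterMap Sum.getRight? = B := by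
  unfold mkB
  rw [Multiset.filterMap_add, Multiset.filterMap_map, Multiset.filterMap_map]
  have h1 : ((Sum.getRight? : CodeB → _) ∘ Sum.inr : ℕ × ℕ → Option (ℕ × ℕ)) = some := rfl
  have h2 : Multiset.filterMap ((Sum.getRight? : CodeB → _) ∘ Sum.inl : ℕ × ℕ → Option (ℕ × ℕ)) A = 0 := by
    apply Multiset.eq_zero_of_forall_notMem
    intro c hc
    rw [Multiset.mem_filterMap] at hc
    simp at hc
  rw [h1, h2, Multiset.filterMap_some, zero_add]

theorem mkB_inj {A B A' B' : Multiset (ℕ × ℕ)} (h : mkB A B = mkB A' B') : A = A' ∧ B = B' := by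
  constructor
  · rw [← mkB_left A B, h, mkB_left]
  · rw [← mkB_right A B, h, mkB_right]

theorem mkB_card (A B : Multiset (ℕ × ℕ)) : (mkB A B).card = A.card + B.card := by simp [mkB]

/-- value of a beta root -/
def betaV (c : ℕ × ℕ) (t : ℕ) : ℕ :=
  if c.1 ≤ t ∧ t ≤ c.2 - 1 then 1 else if c.2 ≤ t then 2 else 0

/-- coded decompositions -/
def ValidB (r : ℕ) (M : Multiset CodeB) : Prop :=
  (∀ c ∈ M, okB r c) ∧ (M.map (vecB r)).sum = thetaB r

theorem ValidB_mk (r : ℕ) (A B : Multiset (ℕ × ℕ)) :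
    ValidB r (mkB A B) ↔ (∀ c ∈ A, 1 ≤ c.1 ∧ c.1 ≤ c.2 ∧ c.2 ≤ r) ∧
      (∀ c ∈ B, 1 ≤ c.1 ∧ c.1 < c.2 ∧ c.2 ≤ r) ∧
      ∀ t, 1 ≤ t → t ≤ r → cov t A + (B.map (fun c => betaV c t)).sum = lamB t := by
  have key : ∀ t : Fin r, ((mkB A B).map (vecB r)).sum t
      = cov (t.val + 1) A + (B.map (fun c => betaV c (t.val + 1))).sum := by
    intro t
    unfold mkB
    rw [Multiset.map_add, Multiset.sum_add, Pi.add_apply, Multiset.map_map, Multiset.map_map]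
    congr 1
    · unfold cov
      induction A using Multiset.induction with
      | empty => simp
      | cons c A ih =>
        rw [Multiset.map_cons, Multiset.sum_cons, Pi.add_apply, ih, Multiset.countP_cons, add_comm]
        rfl
    · induction B using Multiset.induction with
      | empty => simp
      | cons c A ih =>
        rw [Multiset.map_cons, Multiset.sum_cons, Pi.add_apply, ih, Multiset.map_cons,
          Multiset.sum_cons]
        rfl
  unfold ValidB
  rw [← and_assoc]
  refine and_congr ?_ ?_
  · unfold mkB
    constructor
    · intro h
      exact ⟨fun c hc => h (Sum.inl c) (by simp [hc]), fun c hc => h (Sum.inr c) (by simp [hc])⟩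
    · rintro ⟨h1, h2⟩ (c | c) hc
      · exact h1 c (by simpa using hc)
      · exact h2 c (by simpa using hc)
  · rw [funext_iff]
    constructor
    · intro h t h1 h2
      have := h ⟨t - 1, by omega⟩
      rw [key] at this
      have e : t - 1 + 1 = t := by omega
      simp only [e] at this
      rw [this]
      unfold thetaB lamB
      simp only
      congr 1
      simp only [eq_iff_iff]; omega
    · intro h t
      rw [key, h _ (by omega) (by omega)]
      unfold thetaB lamB
      congr 1
      simp only [eq_iff_iff]; omega

noncomputable def AA1 (r : ℕ) : Finset (Multiset CodeB) :=
  (UU r).image (fun x => mkB (x.1 + closeP r x.2) 0)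

noncomputable def idx2 (r : ℕ) : Finset (Σ _ : ℕ, Σ _ : StB, ℕ) :=
  (Finset.Ico 1 r).sigma fun m => (UU m).sigma fun x => x.2.toFinset

noncomputable def AA2 (r : ℕ) : Finset (Multiset CodeB) :=
  (idx2 r).image
    (fun p => mkB (p.2.1.1 + closeP p.1 (p.2.1.2.erase p.2.2)) {(p.2.2, p.1 + 1)})

theorem mem_AA1 {r : ℕ} (A : Multiset (ℕ × ℕ)) :
    mkB A 0 ∈ AA1 r ↔ ValidB r (mkB A 0) := by
  rw [ValidB_mk]
  unfold AA1
  rw [Finset.mem_image]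
  constructor
  · rintro ⟨x, hx, he⟩
    have hx := (mem_UU r x).1 hx
    obtain ⟨rfl, -⟩ := mkB_inj he
    refine ⟨?_, by simp, ?_⟩
    · intro c hc
      rcases Multiset.mem_add.1 hc with hc | hc
      · have := hx.1 c hc; omega
      · rw [mem_closeP] at hc
        have := hx.2.1 _ hc.1
        omega
    · intro t h1 h2
      rw [cov_add, cov_close h2]
      simpa using hx.2.2 t h1 h2
  · rintro ⟨h1, -, h3⟩
    refine ⟨(splitF r A, splitP r A), (mem_UU _ _).2 ⟨?_, ?_, ?_⟩, by simp only [split_join]⟩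
    · intro c hc
      have := mem_splitF.1 hc
      have := h1 c this.1
      omega
    · intro a ha
      have := h1 _ (mem_splitP.1 ha)
      simp only at this
      omega
    · intro t ht1 ht2
      have := h3 t ht1 ht2
      rw [cov_split ht2] at this
      simpa using this

theorem cov_eq_zero' {t : ℕ} {A : Multiset (ℕ × ℕ)} (h : cov t A = 0) (c : ℕ × ℕ) (hc : c ∈ A)
    (h1 : c.1 ≤ t) : c.2 < t := by
  unfold cov at h
  rw [Multiset.countP_eq_zero] at h
  have := h c hc
  omega

theorem mem_AA2 {r : ℕ} (A : Multiset (ℕ × ℕ)) (b : ℕ × ℕ) :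
    mkB A {b} ∈ AA2 r ↔ ValidB r (mkB A {b}) := by
  rw [ValidB_mk]
  unfold AA2
  rw [Finset.mem_image]
  constructor
  · rintro ⟨⟨m, x, y⟩, hx, he⟩
    simp only [idx2, Finset.mem_sigma, Finset.mem_Ico, mem_UU, Multiset.mem_toFinset] at hx
    obtain ⟨⟨hm1, hm2⟩, hx, hy⟩ := hx
    obtain ⟨e1, e2⟩ := mkB_inj he
    have e2 := Multiset.singleton_inj.1 e2
    subst e1 e2
    simp only
    have hym := hx.2.1 y hy
    have hA : ∀ c ∈ x.1 + closeP m (x.2.erase y), 1 ≤ c.1 ∧ c.1 ≤ c.2 ∧ c.2 ≤ m := by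
      intro c hc
      rcases Multiset.mem_add.1 hc with hc | hc
      · have := hx.1 c hc; omega
      · rw [mem_closeP] at hc
        have := hx.2.1 _ (Multiset.mem_of_mem_erase hc.1)
        omega
    refine ⟨fun c hc => by have := hA c hc; omega, ?_, ?_⟩
    · intro c hc
      rw [Multiset.mem_singleton] at hc
      subst hc
      simp only
      omega
    · intro t h1 h2
      rw [Multiset.map_singleton, Multiset.sum_singleton]
      by_cases htm : t ≤ m
      · have h3 := hx.2.2 t h1 htm
        rw [← Multiset.cons_erase hy, Multiset.countP_cons] at h3
        rw [cov_add, cov_close htm, ← h3]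
        unfold betaV
        simp only
        split_ifs <;> omega
      · rw [cov_eq_zero (fun c hc => by have := hA c hc; omega)]
        unfold betaV lamB
        simp only
        split_ifs <;> omega
  · rintro ⟨h1, h2, h3⟩
    obtain ⟨y, j⟩ := b
    have hb := h2 (y, j) (by simp)
    simp only [Multiset.map_singleton, Multiset.sum_singleton] at h3 hb
    have hA : ∀ c ∈ A, c.2 < j := by
      intro c hc
      by_contra hcon
      have hh := h1 c hc
      have := h3 c.2 (by omega) (by omega)
      have h4 : betaV (y, j) c.2 = 2 := by
        unfold betaV
        simp only
        split_ifs <;> omega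
      have h5 : lamB c.2 = 2 := by unfold lamB; rw [if_neg]; omega
      have h6 : cov c.2 A = 0 := by omega
      have := cov_eq_zero' h6 c hc (by omega)
      omega
    obtain ⟨m, rfl⟩ : ∃ m, j = m + 1 := ⟨j - 1, by omega⟩
    refine ⟨⟨m, (splitF m A, y ::ₘ splitP m A), y⟩, ?_, ?_⟩
    · simp only [idx2, Finset.mem_sigma, Finset.mem_Ico, mem_UU, Multiset.mem_toFinset]
      refine ⟨by omega, ⟨?_, ?_, ?_⟩, by simp⟩
      · intro c hc
        have hc := mem_splitF.1 hc
        have := h1 c hc.1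
        have := hA c hc.1
        omega
      · intro a ha
        simp only at ha
        rcases Multiset.mem_cons.1 ha with rfl | ha
        · omega
        · have := h1 _ (mem_splitP.1 ha)
          simp only at this
          omega
      · intro t ht1 ht2
        have := h3 t ht1 (by omega)
        rw [cov_split ht2] at this
        simp only
        rw [← this, Multiset.countP_cons]
        unfold betaV
        simp only
        split_ifs <;> omega
    · simp only [Multiset.erase_cons_head, split_join]

theorem mem_AA {r : ℕ} (hr : 2 ≤ r) (M : Multiset CodeB) : M ∈ AA1 r ∪ AA2 r ↔ ValidB r M := by
  obtain ⟨A, B, rfl⟩ := mkB_surj M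
  rw [Finset.mem_union]
  constructor
  · rintro (h | h)
    · have h' := h
      unfold AA1 at h'
      rw [Finset.mem_image] at h'
      obtain ⟨x, _, he⟩ := h'
      obtain ⟨-, rfl⟩ := mkB_inj he
      exact (mem_AA1 A).1 h
    · have h' := h
      unfold AA2 at h'
      rw [Finset.mem_image] at h'
      obtain ⟨x, _, he⟩ := h'
      obtain ⟨-, rfl⟩ := mkB_inj he
      exact (mem_AA2 A _).1 h
  · intro h
    have hB : B.card ≤ 1 := by
      rw [ValidB_mk] at h
      have h3 := h.2.2 r (by omega) le_rfl
      have h4 : (B.map (fun c => betaV c r)) = B.map (fun _ => 2) := by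
        apply Multiset.map_congr rfl
        intro c hc
        have := h.2.1 c hc
        unfold betaV
        split_ifs <;> omega
      rw [h4, Multiset.map_const', Multiset.sum_replicate] at h3
      have h5 : lamB r = 2 := by unfold lamB; rw [if_neg]; omega
      rw [smul_eq_mul] at h3
      omega
    rcases Nat.lt_or_ge B.card 1 with h0 | h0
    · have : B = 0 := by rw [← Multiset.card_eq_zero]; omega
      subst this
      exact Or.inl ((mem_AA1 A).2 h)
    · obtain ⟨b, rfl⟩ := Multiset.card_eq_one.1 (le_antisymm hB h0)
      exact Or.inr ((mem_AA2 A b).2 h)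

theorem sum_AA (r : ℕ) (q : ℂ) :
    ∑ M ∈ AA1 r ∪ AA2 r, q ^ M.card = sB q r + dB q r + ∑ m ∈ Finset.Ico 1 r, tB q m := by
  rw [Finset.sum_union]
  · congr 1
    · unfold AA1
      rw [Finset.sum_image]
      · unfold sB dB
        rw [← Finset.sum_add_distrib]
        apply Finset.sum_congr rfl
        intro x _
        rw [mkB_card, Multiset.card_add, card_closeP]
        unfold wU
        split_ifs <;> simp
      · intro x hx x' hx' he
        have hx := (mem_UU r x).1 hx
        have hx' := (mem_UU r x').1 hx'
        have e := (mkB_inj he).1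
        ext1
        · rw [← splitF_join x.2 (fun c hc => (hx.1 c hc).2.2), e,
            splitF_join x'.2 (fun c hc => (hx'.1 c hc).2.2)]
        · rw [← splitP_join x.2 (fun c hc => (hx.1 c hc).2.2), e,
            splitP_join x'.2 (fun c hc => (hx'.1 c hc).2.2)]
    · unfold AA2
      rw [Finset.sum_image]
      · unfold idx2
        rw [Finset.sum_sigma]
        apply Finset.sum_congr rfl
        intro m _
        rw [Finset.sum_sigma]
        unfold tB
        apply Finset.sum_congr rfl
        intro x _
        apply Finset.sum_congr rfl
        intro y hy
        rw [Multiset.mem_toFinset] at hy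
        rw [mkB_card, Multiset.card_add, card_closeP]
        unfold wU
        have := congrArg Multiset.card (Multiset.cons_erase hy)
        rw [Multiset.card_cons] at this
        rw [← this]
        simp only [Multiset.card_singleton, add_assoc]
      · rintro ⟨m, x, y⟩ hx ⟨m', x', y'⟩ hx' he
        simp only [Finset.mem_coe, idx2, Finset.mem_sigma, Finset.mem_Ico, mem_UU,
          Multiset.mem_toFinset] at hx hx'
        obtain ⟨-, hx, hy⟩ := hx
        obtain ⟨-, hx', hy'⟩ := hx'
        obtain ⟨e, e2⟩ := mkB_inj he
        have e2 := Multiset.singleton_inj.1 e2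
        simp only [Prod.mk.injEq, Nat.add_right_cancel_iff] at e2
        obtain ⟨rfl, rfl⟩ := e2
        have : x = x' := by
          ext1
          · rw [← splitF_join (x.2.erase y) (fun c hc => (hx.1 c hc).2.2), e,
              splitF_join _ (fun c hc => (hx'.1 c hc).2.2)]
          · rw [← Multiset.cons_erase hy, ← Multiset.cons_erase hy',
              ← splitP_join (x.2.erase y) (fun c hc => (hx.1 c hc).2.2), e,
              splitP_join _ (fun c hc => (hx'.1 c hc).2.2)]
        subst this
        rfl
  · rw [Finset.disjoint_left]
    intro M h1 h2
    unfold AA1 at h1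
    unfold AA2 at h2
    rw [Finset.mem_image] at h1 h2
    obtain ⟨x, _, rfl⟩ := h1
    obtain ⟨y, _, he⟩ := h2
    have := (mkB_inj he).2
    simp at this

/-- all decompositions of the highest root -/
def decB (r : ℕ) : Set ((Fin r → ℕ) →₀ ℕ) :=
  {m | (∀ v ∈ m.support, isPosRootB r v) ∧ (m.sum fun v n => n • v) = thetaB r}

noncomputable def wB {r : ℕ} (m : (Fin r → ℕ) →₀ ℕ) : ℕ := m.sum fun _ n => n

theorem wB_eq {r : ℕ} (m : (Fin r → ℕ) →₀ ℕ) : wB m = m.toMultiset.card := by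
  rw [Finsupp.card_toMultiset]; rfl

theorem sum_toMul {r : ℕ} (m : (Fin r → ℕ) →₀ ℕ) :
    (m.sum fun v n => n • v) = m.toMultiset.sum := by
  rw [Finsupp.toMultiset_apply, Finsupp.sum, Finsupp.sum, Multiset.sum_sum]
  apply Finset.sum_congr rfl
  intro v _
  rw [Multiset.sum_nsmul, Multiset.sum_singleton]

noncomputable def OmB (r : ℕ) : Finset ((Fin r → ℕ) →₀ ℕ) :=
  (AA1 r ∪ AA2 r).image (fun M => Multiset.toFinsupp (M.map (vecB r)))

theorem mem_OmB {r : ℕ} (hr : 2 ≤ r) (m : (Fin r → ℕ) →₀ ℕ) : m ∈ OmB r ↔ m ∈ decB r := by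
  unfold OmB
  rw [Finset.mem_image]
  constructor
  · rintro ⟨M, hM, rfl⟩
    have hM := (mem_AA hr M).1 hM
    refine ⟨?_, ?_⟩
    · intro v hv
      rw [Multiset.toFinsupp_support, Multiset.mem_toFinset, Multiset.mem_map] at hv
      obtain ⟨c, hc, rfl⟩ := hv
      exact (isPosRootB_iff r _).2 ⟨c, hM.1 c hc, rfl⟩
    · rw [sum_toMul, Multiset.toFinsupp_toMultiset]
      exact hM.2
  · rintro ⟨h1, h2⟩
    have : ∀ v : Fin r → ℕ, ∃ c, v ∈ m.support → okB r c ∧ vecB r c = v := by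
      intro v
      by_cases hv : v ∈ m.support
      · obtain ⟨c, hc⟩ := (isPosRootB_iff r v).1 (h1 v hv)
        exact ⟨c, fun _ => hc⟩
      · exact ⟨Sum.inl (0, 0), fun h => absurd h hv⟩
    choose f hf using this
    have hmap : (m.toMultiset.map f).map (vecB r) = m.toMultiset := by
      rw [Multiset.map_map]
      conv_rhs => rw [← Multiset.map_id m.toMultiset]
      apply Multiset.map_congr rfl
      intro v hv
      exact (hf v ((Finsupp.mem_toMultiset m v).1 hv)).2
    refine ⟨m.toMultiset.map f, (mem_AA hr _).2 ⟨?_, ?_⟩, ?_⟩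
    · intro c hc
      rw [Multiset.mem_map] at hc
      obtain ⟨v, hv, rfl⟩ := hc
      exact (hf v ((Finsupp.mem_toMultiset m v).1 hv)).1
    · rw [hmap, ← sum_toMul, h2]
    · rw [hmap, Finsupp.toMultiset_toFinsupp]

theorem sum_OmB {r : ℕ} (hr : 2 ≤ r) (q : ℂ) :
    ∑ m ∈ OmB r, q ^ wB m = sB q r + dB q r + ∑ m ∈ Finset.Ico 1 r, tB q m := by
  rw [← sum_AA]
  unfold OmB
  rw [Finset.sum_image]
  · apply Finset.sum_congr rfl
    intro M _
    rw [wB_eq, Multiset.toFinsupp_toMultiset, Multiset.card_map]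
  · intro M hM M' hM' he
    have hM := ((mem_AA hr M).1 hM).1
    have hM' := ((mem_AA hr M').1 hM').1
    have he := Multiset.toFinsupp.injective he
    have hinv : ∀ N : Multiset CodeB, (∀ c ∈ N, okB r c) →
        (N.map (vecB r)).map (Function.invFunOn (vecB r) {c | okB r c}) = N := by
      intro N hN
      rw [Multiset.map_map]
      conv_rhs => rw [← Multiset.map_id N]
      apply Multiset.map_congr rfl
      intro c hc
      exact (vecB_inj r).leftInvOn_invFunOn (hN c hc)
    rw [← hinv M hM, he, hinv M' hM']

theorem tsum_pB {r : ℕ} (hr : 2 ≤ r) (g : ℕ → ℝ) :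
    ∑' k, g k * pB r k = ∑ m ∈ OmB r, g (wB m) := by
  have hp : ∀ k, pB r k = ((OmB r).filter (fun m => wB m = k)).card := by
    intro k
    unfold pB NB
    rw [← Set.ncard_coe_finset]
    congr 2
    ext m
    rw [Finset.mem_coe, Finset.mem_filter, mem_OmB hr]
    change _ ↔ ((∀ v ∈ m.support, isPosRootB r v) ∧ (m.sum fun v n => n • v) = thetaB r) ∧
      (m.sum fun _ n => n) = k
    change (∀ v ∈ m.support, isPosRootB r v) ∧ (m.sum fun _ n => n) = k ∧
      (m.sum fun v n => n • v) = thetaB r ↔ _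
    tauto
  rw [tsum_eq_sum (s := (OmB r).image wB)]
  · rw [← Finset.sum_fiberwise_of_maps_to (t := (OmB r).image wB) (g := wB)
      (fun m hm => Finset.mem_image_of_mem _ hm)]
    apply Finset.sum_congr rfl
    intro k _
    rw [hp, Finset.sum_congr rfl (g := fun _ => g k), Finset.sum_const, nsmul_eq_mul, mul_comm]
    intro m hm
    rw [(Finset.mem_filter.1 hm).2]
  · intro k hk
    rw [hp]
    have : (OmB r).filter (fun m => wB m = k) = ∅ := by
      rw [Finset.filter_eq_empty_iff]
      intro m hm he
      exact hk (he ▸ Finset.mem_image_of_mem _ hm)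
    rw [this]
    simp

/-- generating function -/
noncomputable def PB (q : ℂ) (r : ℕ) : ℂ := ∑ m ∈ OmB r, q ^ wB m

theorem PB_eq (q : ℂ) (n : ℕ) : q * PB q (n + 2) = q * sB q (n + 2) + (1 + q) * dB q (n + 2) := by
  unfold PB
  rw [sum_OmB (by omega)]
  have := tB_sum q n
  linear_combination this

section LevyPart
open MeasureTheory ProbabilityTheory Filter Topology

noncomputable def empM {X : Type*} (Om : Finset X) (Z : X → ℝ) : Measure ℝ :=
  ∑ y ∈ Om, ((Om.card : ENNReal)⁻¹) • Measure.dirac (Z y)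

theorem empM_apply {X : Type*} (Om : Finset X) (Z : X → ℝ) {s : Set ℝ} (hs : MeasurableSet s)
    [DecidablePred (fun y => Z y ∈ s)] :
    empM Om Z s = (Om.card : ENNReal)⁻¹ * ((Om.filter (fun y => Z y ∈ s)).card : ENNReal) := by
  unfold empM
  rw [Measure.finsetSum_apply]
  simp only [Measure.smul_apply, Measure.dirac_apply' _ hs, smul_eq_mul]
  rw [← Finset.mul_sum]
  congr 1
  simp only [Set.indicator_apply, Pi.one_apply]
  rw [Finset.sum_ite]
  simp

theorem empM_prob {X : Type*} (Om : Finset X) (hne : Om.Nonempty) (Z : X → ℝ) :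
    IsProbabilityMeasure (empM Om Z) := by
  classical
  constructor
  rw [empM_apply Om Z MeasurableSet.univ]
  simp only [Set.mem_univ, Finset.filter_true]
  rw [ENNReal.inv_mul_cancel]
  · simpa using hne.ne_empty
  · simp

theorem empM_charFun {X : Type*} (Om : Finset X) (Z : X → ℝ) (t : ℝ) :
    charFun (empM Om Z) t = (∑ y ∈ Om, Complex.exp (t * Z y * Complex.I)) / (Om.card : ℂ) := by
  rw [charFun_apply_real]
  rcases Om.eq_empty_or_nonempty with rfl | hne
  · simp [empM]
  unfold empM
  rw [integral_finsetSum_measure]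
  · simp only [integral_smul_measure, integral_dirac]
    rw [← Finset.smul_sum]
    simp [div_eq_inv_mul]
  · intro y _
    refine Integrable.smul_measure ?_ ?_
    · exact integrable_dirac (by simp)
    · simpa using hne.ne_empty

theorem levy_finite {X : ℕ → Type*} (Om : ∀ n, Finset (X n)) (hne : ∀ n, (Om n).Nonempty)
    (Z : ∀ n, X n → ℝ)
    (h : ∀ t : ℝ, Tendsto (fun n => (∑ y ∈ Om n, Complex.exp (t * Z n y * Complex.I)) /
      ((Om n).card : ℂ)) atTop (𝓝 (Complex.exp (-t ^ 2 / 2)))) (x : ℝ) :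
    Tendsto (fun n => (((Om n).filter (fun y => Z n y ≤ x)).card : ℝ) / ((Om n).card : ℝ)) atTop
      (𝓝 ((1 / Real.sqrt (2 * Real.pi)) * ∫ u in Set.Iic x, Real.exp (-u ^ 2 / 2))) := by
  classical
  let P : ℕ → ProbabilityMeasure ℝ := fun n => ⟨empM (Om n) (Z n), empM_prob _ (hne n) _⟩
  let G : ProbabilityMeasure ℝ := ⟨gaussianReal 0 1, inferInstance⟩
  have hPG : Tendsto P atTop (𝓝 G) := by
    apply ProbabilityMeasure.tendsto_of_tendsto_charFun
    intro t
    have h1 : charFun (G : Measure ℝ) t = Complex.exp (-t ^ 2 / 2) := by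
      change charFun (gaussianReal 0 1) t = _
      rw [charFun_gaussianReal]
      congr 1
      simp
      ring
    rw [h1]
    refine (h t).congr fun n => ?_
    exact (empM_charFun (Om n) (Z n) t).symm
  have hlim := ProbabilityMeasure.tendsto_measure_of_null_frontier_of_tendsto' hPG
    (E := Set.Iic x) (by
      rw [frontier_Iic]
      change gaussianReal 0 1 {x} = 0
      have := nullSingletonClass_gaussianReal (μ := 0) (v := 1) one_ne_zero
      exact measure_singleton x)
  have h2 : ((G : Measure ℝ) (Set.Iic x)) = ENNReal.ofReal
      ((1 / Real.sqrt (2 * Real.pi)) * ∫ u in Set.Iic x, Real.exp (-u ^ 2 / 2)) := by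
    change gaussianReal 0 1 (Set.Iic x) = _
    rw [gaussianReal_apply_eq_integral 0 one_ne_zero, ← integral_const_mul]
    congr 2
    ext u
    simp [gaussianPDFReal]
  rw [h2] at hlim
  have h3 := (ENNReal.tendsto_toReal ENNReal.ofReal_ne_top).comp hlim
  rw [ENNReal.toReal_ofReal (by positivity)] at h3
  refine h3.congr fun n => ?_
  change (empM (Om n) (Z n) (Set.Iic x)).toReal = _
  rw [empM_apply _ _ measurableSet_Iic]
  simp [div_eq_inv_mul]

end LevyPart

section JetPart
open Filter Topology

/-- `f` has second order jet `(a,b,c)` at zero -/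
def J2 (f : ℂ → ℂ) (a b c : ℂ) : Prop :=
  ∃ f' : ℂ → ℂ, (∀ᶠ z in 𝓝 0, HasDerivAt f (f' z) z) ∧ f 0 = a ∧ f' 0 = b ∧ HasDerivAt f' c 0

theorem J2.const (a : ℂ) : J2 (fun _ => a) a 0 0 :=
  ⟨fun _ => 0, Eventually.of_forall fun z => hasDerivAt_const z a, rfl, rfl, hasDerivAt_const 0 0⟩

theorem J2.exp (c : ℂ) : J2 (fun z => Complex.exp (c * z)) 1 c (c ^ 2) := by
  have h : ∀ z, HasDerivAt (fun z => Complex.exp (c * z)) (c * Complex.exp (c * z)) z := by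
    intro z
    have := ((hasDerivAt_id z).const_mul c).cexp
    simpa [mul_comm] using this
  refine ⟨_, Eventually.of_forall h, by simp, by simp, ?_⟩
  have := (h 0).const_mul c
  simpa [sq] using this

theorem J2.add {f g : ℂ → ℂ} {a b c a' b' c' : ℂ} (hf : J2 f a b c) (hg : J2 g a' b' c') :
    J2 (fun z => f z + g z) (a + a') (b + b') (c + c') := by
  obtain ⟨f', h1, h2, h3, h4⟩ := hf
  obtain ⟨g', k1, k2, k3, k4⟩ := hg
  refine ⟨fun z => f' z + g' z, ?_, by simp [h2, k2], by simp [h3, k3], h4.add k4⟩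
  filter_upwards [h1, k1] with z u v using u.add v

theorem J2.mul {f g : ℂ → ℂ} {a b c a' b' c' : ℂ} (hf : J2 f a b c) (hg : J2 g a' b' c') :
    J2 (fun z => f z * g z) (a * a') (b * a' + a * b') (c * a' + 2 * b * b' + a * c') := by
  obtain ⟨f', h1, h2, h3, h4⟩ := hf
  obtain ⟨g', k1, k2, k3, k4⟩ := hg
  refine ⟨fun z => f' z * g z + f z * g' z, ?_, by simp [h2, k2], by simp [h2, k2, h3, k3], ?_⟩
  · filter_upwards [h1, k1] with z u v using u.mul v
  · have := (h4.mul k1.self_of_nhds).add (h1.self_of_nhds.mul k4)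
    rw [h2, k2, h3, k3] at this
    exact this.congr_deriv (by ring)

theorem J2.congr {f g : ℂ → ℂ} {a b c : ℂ} (hf : J2 f a b c) (h : f =ᶠ[𝓝 0] g) : J2 g a b c := by
  obtain ⟨f', h1, h2, h3, h4⟩ := hf
  refine ⟨f', ?_, by rw [← h.self_of_nhds, h2], h3, h4⟩
  filter_upwards [h1, h.eventually_nhds] with z u v
  exact u.congr_of_eventuallyEq (EventuallyEq.symm v)

theorem J2.unique {f : ℂ → ℂ} {a b c a' b' c' : ℂ} (hf : J2 f a b c) (hg : J2 f a' b' c') :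
    a = a' ∧ b = b' ∧ c = c' := by
  obtain ⟨f', h1, h2, h3, h4⟩ := hf
  obtain ⟨g', k1, k2, k3, k4⟩ := hg
  have he : f' =ᶠ[𝓝 0] g' := by
    filter_upwards [h1, k1] with z u v using u.unique v
  refine ⟨h2.symm.trans k2, ?_, ?_⟩
  · rw [← h3, ← k3, he.self_of_nhds]
  · exact (h4.congr_of_eventuallyEq he.symm).unique k4

theorem J2.of_analytic {f : ℂ → ℂ} (h : AnalyticAt ℂ f 0) :
    J2 f (f 0) (deriv f 0) (deriv (deriv f) 0) := by
  refine ⟨deriv f, ?_, rfl, rfl, h.deriv.differentiableAt.hasDerivAt⟩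
  filter_upwards [h.eventually_analyticAt] with z hz using hz.differentiableAt.hasDerivAt

theorem J2.sum {X : Type*} (s : Finset X) (f : X → ℂ → ℂ) (a b c : X → ℂ)
    (h : ∀ x ∈ s, J2 (f x) (a x) (b x) (c x)) :
    J2 (fun z => ∑ x ∈ s, f x z) (∑ x ∈ s, a x) (∑ x ∈ s, b x) (∑ x ∈ s, c x) := by
  classical
  induction s using Finset.induction_on with
  | empty => simpa using J2.const 0
  | insert x s hx ih =>
    have := (h x (by simp)).add (ih fun y hy => h y (by simp [hy]))
    simp only [Finset.sum_insert hx]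
    exact this

theorem J2.pow {f : ℂ → ℂ} {a b c : ℂ} (hf : J2 f a b c) (ha : a ≠ 0) (n : ℕ) :
    J2 (fun z => f z ^ n) (a ^ n) (a ^ n * (n * (b / a)))
      (a ^ n * (n * (c / a) + n * (n - 1) * (b / a) ^ 2)) := by
  induction n with
  | zero => simpa using J2.const 1
  | succ n ih =>
    have := ih.mul hf
    simp only [← pow_succ] at this
    convert this using 1
    · push_cast; field_simp; ring
    · push_cast; field_simp; ring

theorem J2.continuousAt {f : ℂ → ℂ} {a b c : ℂ} (hf : J2 f a b c) : Tendsto f (𝓝 0) (𝓝 a) := by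
  obtain ⟨f', h1, h2, h3, h4⟩ := hf
  rw [← h2]
  exact h1.self_of_nhds.continuousAt

theorem J2.taylor {f : ℂ → ℂ} {a b c : ℂ} (hf : J2 f a b c) :
    (fun z => f z - a - b * z - c * z ^ 2 / 2) =o[𝓝 0] (fun z => z ^ 2) := by
  obtain ⟨f', h1, h2, h3, h4⟩ := hf
  rw [Asymptotics.isLittleO_iff]
  intro ε hε
  have h5 := h4.isLittleO
  rw [Asymptotics.isLittleO_iff] at h5
  have h6 := h5 hε
  obtain ⟨δ, hδ, hb⟩ := Metric.eventually_nhds_iff_ball.1 (h1.and h6)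
  filter_upwards [Metric.ball_mem_nhds (0 : ℂ) hδ] with z hz
  let g : ℂ → ℂ := fun w => f w - b * w - c * w ^ 2 / 2
  have hz' : ‖z‖ < δ := by simpa using hz
  have hder : ∀ w ∈ Metric.closedBall (0 : ℂ) ‖z‖,
      HasDerivWithinAt g (f' w - b - c * w) (Metric.closedBall (0 : ℂ) ‖z‖) w := by
    intro w hw
    have hw' : ‖w‖ ≤ ‖z‖ := by simpa using hw
    have hwδ : w ∈ Metric.ball (0 : ℂ) δ := by simp; linarith
    have u1 := (hb w hwδ).1
    have u2 : HasDerivAt (fun w : ℂ => b * w) b w := by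
      simpa using (hasDerivAt_id w).const_mul b
    have u3 : HasDerivAt (fun w : ℂ => c * w ^ 2 / 2) (c * w) w := by
      have := ((hasDerivAt_pow 2 w).const_mul c).div_const 2
      exact this.congr_deriv (by push_cast; ring)
    exact ((u1.sub u2).sub u3).hasDerivWithinAt
  have hbd : ∀ w ∈ Metric.closedBall (0 : ℂ) ‖z‖, ‖f' w - b - c * w‖ ≤ ε * ‖z‖ := by
    intro w hw
    have hw' : ‖w‖ ≤ ‖z‖ := by simpa using hw
    have hwδ : w ∈ Metric.ball (0 : ℂ) δ := by simp; linarith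
    have u1 := (hb w hwδ).2
    simp only [sub_zero, h3, smul_eq_mul] at u1
    rw [mul_comm w c] at u1
    exact u1.trans (by gcongr)
  have := (convex_closedBall (0 : ℂ) ‖z‖).norm_image_sub_le_of_norm_hasDerivWithin_le hder hbd
    (x := 0) (y := z) (by simp) (by simp)
  simp only [g, h2, sub_zero, mul_zero] at this
  have e : f z - a - b * z - c * z ^ 2 / 2 = f z - b * z - c * z ^ 2 / 2 - (a - c * 0 ^ 2 / 2) := by
    ring
  rw [e, norm_pow]
  refine this.trans (le_of_eq (by ring))

end JetPart

section QuasiPart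
open Filter Topology

theorem tendsto_poly_geom {k0 : ℂ} (hk : ‖k0‖ < 1) (j : ℕ) :
    Tendsto (fun n : ℕ => (n : ℂ) ^ j * k0 ^ n) atTop (𝓝 0) := by
  rw [tendsto_zero_iff_norm_tendsto_zero]
  have := tendsto_pow_const_mul_const_pow_of_abs_lt_one j (r := ‖k0‖) (by simpa using hk)
  refine this.congr fun n => ?_
  simp

theorem tendsto_geom_var {kk : ℕ → ℂ} {k0 : ℂ} (hk : ‖k0‖ < 1) (h : Tendsto kk atTop (𝓝 k0)) :
    Tendsto (fun n : ℕ => kk n ^ n) atTop (𝓝 0) := by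
  obtain ⟨ρ, h1, h2⟩ := exists_between hk
  have hρ : 0 ≤ ρ := (norm_nonneg _).trans h1.le
  refine squeeze_zero_norm' ?_ (tendsto_pow_atTop_nhds_zero_of_lt_one hρ h2)
  filter_upwards [h.norm.eventually (gt_mem_nhds h1)] with n hn
  rw [norm_pow]
  exact pow_le_pow_left₀ (norm_nonneg _) hn.le n

theorem quasi {X : ℕ → Type*} (Om : ∀ n, Finset (X n)) (hne : ∀ n, (Om n).Nonempty)
    (Y : ∀ n, X n → ℝ) (L : ℕ → ℂ) (hL : ∀ n, L n ≠ 0) (A h B k : ℂ → ℂ)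
    {A0 A1 A2 B0 B1 B2 k0 k1 k2 : ℂ} (b : ℝ) (hb : 0 < b)
    (jA : J2 A A0 A1 A2) (jB : J2 B B0 B1 B2) (jh : J2 h 1 0 b) (jk : J2 k k0 k1 k2)
    (hk0 : k0 ≠ 0) (hk : ‖k0‖ < 1) (hA0 : A0 ≠ 0)
    (hS : ∀ᶠ z in 𝓝 0, ∀ n, ∑ y ∈ Om n, Complex.exp (z * Y n y)
      = L n * (A z * h z ^ n + B z * k z ^ n))
    (m V : ℕ → ℝ) (hm : ∀ n, m n = (∑ y ∈ Om n, Y n y) / (Om n).card)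
    (hV : ∀ n, V n = (∑ y ∈ Om n, Y n y ^ 2) / (Om n).card - m n ^ 2) (x : ℝ) :
    Tendsto (fun n => (((Om n).filter (fun y => Y n y ≤ m n + x * Real.sqrt (V n))).card : ℝ) /
      ((Om n).card : ℝ)) atTop
      (𝓝 ((1 / Real.sqrt (2 * Real.pi)) * ∫ u in Set.Iic x, Real.exp (-u ^ 2 / 2))) := by
  -- jets
  have hjet : ∀ n, ((Om n).card : ℂ) = L n * (A0 + B0 * k0 ^ n) ∧
      (∑ y ∈ Om n, (Y n y : ℂ)) = L n * (A1 + (B1 * k0 ^ n + B0 * (k0 ^ n * (n * (k1 / k0))))) ∧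
      (∑ y ∈ Om n, (Y n y : ℂ) ^ 2) = L n * (A2 + A0 * (n * b) + (B2 * k0 ^ n +
        2 * B1 * (k0 ^ n * (n * (k1 / k0))) +
        B0 * (k0 ^ n * (n * (k2 / k0) + n * (n - 1) * (k1 / k0) ^ 2)))) := by
    intro n
    have j1 : J2 (fun z => ∑ y ∈ Om n, Complex.exp (z * Y n y)) (∑ y ∈ Om n, 1)
        (∑ y ∈ Om n, (Y n y : ℂ)) (∑ y ∈ Om n, (Y n y : ℂ) ^ 2) := by
      apply J2.sum
      intro y _
      simpa only [mul_comm] using J2.exp (Y n y)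
    have j2 := (J2.const (L n)).mul ((jA.mul (jh.pow one_ne_zero n)).add (jB.mul (jk.pow hk0 n)))
    have j3 := j1.congr (hS.mono fun z hz => hz n)
    have := j3.unique j2
    simp only [Finset.sum_const, nsmul_eq_mul, mul_one, one_pow, mul_zero, zero_mul,
      zero_add, add_zero, div_one, one_mul, ne_eq, OfNat.ofNat_ne_zero, not_false_eq_true,
      zero_pow] at this
    obtain ⟨u1, u2, u3⟩ := this
    exact ⟨u1, u2, u3⟩
  have g0 : Tendsto (fun n : ℕ => k0 ^ n) atTop (𝓝 0) := by simpa using tendsto_poly_geom hk 0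
  have g1 : Tendsto (fun n : ℕ => (n : ℂ) * k0 ^ n) atTop (𝓝 0) := by
    simpa using tendsto_poly_geom hk 1
  have g2 := tendsto_poly_geom hk 2
  have ginv : Tendsto (fun n : ℕ => ((n : ℂ))⁻¹) atTop (𝓝 0) := by
    have : Tendsto (fun n : ℕ => ((n : ℝ) : ℂ)⁻¹) atTop (𝓝 0) := by
      have := (Complex.continuous_ofReal.tendsto 0).comp (tendsto_inv_atTop_nhds_zero_nat (𝕜 := ℝ))
      simpa [Function.comp_def] using this
    simpa using this
  have c0 : Tendsto (fun n : ℕ => A0 + B0 * k0 ^ n) atTop (𝓝 A0) := by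
    simpa using (g0.const_mul B0).const_add A0
  have c1 : Tendsto (fun n : ℕ => A1 + (B1 * k0 ^ n + B0 * (k0 ^ n * (n * (k1 / k0))))) atTop
      (𝓝 A1) := by
    have := ((g0.const_mul B1).add (g1.const_mul (B0 * (k1 / k0)))).const_add A1
    simp only [mul_zero, add_zero] at this
    refine this.congr fun n => ?_
    ring
  have c2 : Tendsto (fun n : ℕ => (A2 + A0 * (n * b) + (B2 * k0 ^ n +
        2 * B1 * (k0 ^ n * (n * (k1 / k0))) +
        B0 * (k0 ^ n * (n * (k2 / k0) + n * (n - 1) * (k1 / k0) ^ 2)))) * (n : ℂ)⁻¹) atTop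
      (𝓝 (A0 * b)) := by
    have := (((g0.const_mul B2).add (g1.const_mul (2 * B1 * (k1 / k0) + B0 * (k2 / k0)
      - B0 * (k1 / k0) ^ 2))).add (g2.const_mul (B0 * (k1 / k0) ^ 2))).const_add A2
    have := (this.mul ginv).add_const (A0 * b)
    simp only [mul_zero, zero_add] at this
    refine this.congr' ?_
    filter_upwards [eventually_ge_atTop 1] with n hn
    have : (n : ℂ) ≠ 0 := by exact_mod_cast (by omega : n ≠ 0)
    have e : A0 * (n * b) * (n : ℂ)⁻¹ = A0 * b := by field_simp
    linear_combination -e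
  have hN : ∀ n, ((Om n).card : ℂ) ≠ 0 := fun n => by
    exact_mod_cast (Finset.card_pos.2 (hne n)).ne'
  have hmC : Tendsto (fun n => (m n : ℂ)) atTop (𝓝 (A1 / A0)) := by
    refine (c1.div c0 hA0).congr fun n => ?_
    rw [hm]
    push_cast
    rw [(hjet n).1, (hjet n).2.1, mul_div_mul_left _ _ (hL n)]
    rfl
  have hVC : Tendsto (fun n : ℕ => ((V n * (n : ℝ)⁻¹ : ℝ) : ℂ)) atTop (𝓝 b) := by
    have := (c2.div c0 hA0).sub ((hmC.pow 2).mul ginv)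
    rw [mul_zero, sub_zero, mul_div_cancel_left₀ _ hA0] at this
    refine this.congr fun n => ?_
    rw [hV]
    push_cast
    rw [(hjet n).1, (hjet n).2.2, mul_div_mul_left _ _ (hL n)]
    simp only [Pi.div_apply]
    ring
  have hVR : Tendsto (fun n : ℕ => V n * (n : ℝ)⁻¹) atTop (𝓝 b) := by
    have := (Complex.continuous_re.tendsto _).comp hVC
    simpa only [Function.comp_def, Complex.ofReal_re] using this
  have hVpos : ∀ᶠ n in atTop, 0 < V n := by
    filter_upwards [hVR.eventually (lt_mem_nhds hb), eventually_ge_atTop 1] with n h1 h2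
    have : (0 : ℝ) < n := by exact_mod_cast h2
    by_contra hcon
    have : V n * (n : ℝ)⁻¹ ≤ 0 := mul_nonpos_of_nonpos_of_nonneg (not_lt.1 hcon) (by positivity)
    linarith
  have hVinf : Tendsto V atTop atTop := by
    have := Tendsto.pos_mul_atTop hb hVR (tendsto_natCast_atTop_atTop (R := ℝ))
    refine this.congr' ?_
    filter_upwards [eventually_ge_atTop 1] with n hn
    have : (n : ℝ) ≠ 0 := by exact_mod_cast (by omega : n ≠ 0)
    field_simp
  have hlev := levy_finite Om hne (fun n y => (Y n y - m n) / Real.sqrt (V n)) ?_ x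
  · refine hlev.congr' ?_
    filter_upwards [hVpos] with n hn
    congr 3
    ext y
    have hs : 0 < Real.sqrt (V n) := Real.sqrt_pos.2 hn
    simp only [Finset.mem_filter]
    rw [div_le_iff₀ hs]
    constructor <;> rintro ⟨u, v⟩ <;> exact ⟨u, by linarith⟩
  · intro t
    let τ : ℕ → ℝ := fun n => t / Real.sqrt (V n)
    let z : ℕ → ℂ := fun n => (τ n : ℂ) * Complex.I
    have hτ : Tendsto τ atTop (𝓝 0) :=
      Tendsto.div_atTop tendsto_const_nhds (Real.tendsto_sqrt_atTop.comp hVinf)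
    have hτC : Tendsto (fun n => (τ n : ℂ)) atTop (𝓝 0) := by
      simpa [Function.comp_def] using (Complex.continuous_ofReal.tendsto 0).comp hτ
    have hz : Tendsto z atTop (𝓝 0) := by
      simpa using hτC.mul_const Complex.I
    have hz2 : Tendsto (fun n : ℕ => (n : ℂ) * z n ^ 2) atTop (𝓝 (-(t : ℂ) ^ 2 / b)) := by
      have h1 : Tendsto (fun n : ℕ => -t ^ 2 / (V n * (n : ℝ)⁻¹)) atTop (𝓝 (-t ^ 2 / b)) :=
        Tendsto.div tendsto_const_nhds hVR hb.ne'
      have h2 := (Complex.continuous_ofReal.tendsto _).comp h1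
      have e : ((-t ^ 2 / b : ℝ) : ℂ) = -(t : ℂ) ^ 2 / b := by push_cast; rfl
      rw [e] at h2
      refine h2.congr' ?_
      filter_upwards [hVpos] with n hn
      simp only [Function.comp_def, z, τ, mul_pow, Complex.I_sq]
      have : ((n : ℝ) * (t / Real.sqrt (V n)) ^ 2 * (-1)) = -t ^ 2 / (V n * (n : ℝ)⁻¹) := by
        rw [div_pow, Real.sq_sqrt hn.le, div_mul_eq_div_div, div_inv_eq_mul]
        ring
      rw [← this]
      push_cast
      ring
    have hpow : Tendsto (fun n => h (z n) ^ n) atTop (𝓝 (Complex.exp (-t ^ 2 / 2))) := by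
      have h1 : Tendsto (fun n : ℕ => (n : ℂ) * (h (z n) - 1)) atTop (𝓝 (-t ^ 2 / 2)) := by
        have ho := (jh.taylor.comp_tendsto hz)
        have ho2 : (fun n : ℕ => (n : ℂ) * (h (z n) - 1 - 0 * z n - b * z n ^ 2 / 2)) =o[atTop]
            (fun n : ℕ => (n : ℂ) * z n ^ 2) :=
          (Asymptotics.isBigO_refl _ _).mul_isLittleO ho
        have ho3 := (Asymptotics.isLittleO_one_iff ℝ).1 (ho2.trans_isBigO (hz2.isBigO_one ℝ))
        have := ho3.add (hz2.const_mul ((b : ℂ) / 2))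
        have e : (0 : ℂ) + b / 2 * (-t ^ 2 / b) = -t ^ 2 / 2 := by
          have : (b : ℂ) ≠ 0 := by exact_mod_cast hb.ne'
          field_simp
          ring
        rw [e] at this
        refine this.congr fun n => ?_
        ring
      have := Complex.tendsto_one_add_pow_exp_of_tendsto h1
      simpa using this
    have hkp : Tendsto (fun n => k (z n) ^ n) atTop (𝓝 0) :=
      tendsto_geom_var hk (jk.continuousAt.comp hz)
    have hnum := ((jA.continuousAt.comp hz).mul hpow).add ((jB.continuousAt.comp hz).mul hkp)
    have hq := hnum.div c0 hA0
    have hexp : Tendsto (fun n => Complex.exp (-(z n * m n))) atTop (𝓝 1) := by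
      have h1 : Tendsto (fun n => -(z n * m n)) atTop (𝓝 0) := by
        simpa using (hz.mul hmC).neg
      simpa [Function.comp_def] using (Complex.continuous_exp.tendsto 0).comp h1
    have hfin := hexp.mul hq
    rw [mul_zero, add_zero, mul_div_cancel_left₀ _ hA0, one_mul] at hfin
    refine hfin.congr' ?_
    filter_upwards [hz.eventually hS] with n hn
    have e1 : ∀ y, Complex.exp (t * ((Y n y - m n) / Real.sqrt (V n) : ℝ) * Complex.I)
        = Complex.exp (-(z n * m n)) * Complex.exp (z n * Y n y) := by
      intro y
      rw [← Complex.exp_add]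
      congr 1
      simp only [z, τ]
      push_cast
      ring
    simp only [e1]
    rw [← Finset.mul_sum, hn n, (hjet n).1, mul_div_assoc, mul_div_mul_left _ _ (hL n)]
    rfl

end QuasiPart

section ApplyPart
open Filter Topology

theorem binet (u : ℕ → ℂ) (α β : ℂ) (h : ∀ n, u (n + 2) = (α + β) * u (n + 1) - α * β * u n) :
    ∀ n, (α - β) * u n = (u 1 - β * u 0) * α ^ n + (α * u 0 - u 1) * β ^ n ∧
      (α - β) * u (n + 1) = (u 1 - β * u 0) * α ^ (n + 1) + (α * u 0 - u 1) * β ^ (n + 1) := by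
  intro n
  induction n with
  | zero => constructor <;> simp <;> ring
  | succ n ih =>
    refine ⟨ih.2, ?_⟩
    rw [h]
    linear_combination (α + β) * ih.2 - α * β * ih.1

theorem PB_two (q : ℂ) (hq : q ≠ 0) : PB q 2 = q + q ^ 2 + q ^ 3 := by
  apply mul_left_cancel₀ hq
  rw [PB_eq q 0, sB_two, dB_two]
  ring

theorem PB_three (q : ℂ) (hq : q ≠ 0) :
    PB q 3 = q + 3 * q ^ 2 + 4 * q ^ 3 + 2 * q ^ 4 + q ^ 5 := by
  apply mul_left_cancel₀ hq
  rw [PB_eq q 1, sB_succ q 2 le_rfl, dB_succ q 2 le_rfl, sB_two, dB_two]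
  ring

theorem PB_rec (q : ℂ) (hq : q ≠ 0) (n : ℕ) :
    PB q (n + 4) = (2 + 2 * q + q ^ 2) * PB q (n + 3)
      - (1 + 2 * q + q ^ 2 + q ^ 3) * PB q (n + 2) := by
  apply mul_left_cancel₀ hq
  have h2 := PB_eq q n
  have h3 := PB_eq q (n + 1)
  have h4 := PB_eq q (n + 2)
  rw [sB_succ q (n + 3) (by omega), dB_succ q (n + 3) (by omega)] at h4
  rw [sB_succ q (n + 2) (by omega), dB_succ q (n + 2) (by omega)] at h3 h4
  linear_combination h4 - (2 + 2 * q + q ^ 2) * h3 + (1 + 2 * q + q ^ 2 + q ^ 3) * h2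

noncomputable def RR (z : ℂ) : ℂ := (Complex.exp (2 * z) + 4) ^ (((2 : ℕ) : ℂ)⁻¹)

theorem RR_sq (z : ℂ) : RR z * RR z = Complex.exp (2 * z) + 4 := by
  rw [← sq]
  exact Complex.cpow_nat_inv_pow _ two_ne_zero

theorem RR_analytic : AnalyticAt ℂ RR 0 := by
  unfold RR
  apply AnalyticAt.cpow
  · fun_prop
  · fun_prop
  · left
    simp
    norm_num

/-- the complex square root of five -/
noncomputable def s5 : ℂ := (Real.sqrt 5 : ℝ)

theorem s5_sq : s5 * s5 = 5 := by
  unfold s5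
  rw [← Complex.ofReal_mul, Real.mul_self_sqrt (by norm_num)]
  norm_num

theorem s5_ne : s5 ≠ 0 := by
  intro h
  have := s5_sq
  rw [h] at this
  norm_num at this

theorem RR_zero : RR 0 = s5 := by
  unfold RR s5
  rw [Real.sqrt_eq_rpow, Complex.ofReal_cpow (by norm_num)]
  norm_num

theorem RR_jet : J2 RR s5 (s5 / 5) (9 * s5 / 25) := by
  have j := J2.of_analytic RR_analytic
  have j1 := j.mul j
  have j2 := (J2.exp 2).add (J2.const 4)
  have e := j1.unique (j2.congr (Eventually.of_forall fun z => (RR_sq z).symm))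
  obtain ⟨-, e1, e2⟩ := e
  rw [RR_zero] at e1 e2 j
  have hs := s5_sq
  have h1 : deriv RR 0 = s5 / 5 := by
    apply mul_left_cancel₀ s5_ne
    linear_combination e1 / 2 - hs / 5
  rw [h1] at e2 j
  have h2 : deriv (deriv RR) 0 = 9 * s5 / 25 := by
    apply mul_left_cancel₀ s5_ne
    linear_combination e2 / 2 - hs / 25 - 9 * hs / 25
  rwa [h2] at j

noncomputable def lamP (z : ℂ) : ℂ :=
  (2 + 2 * Complex.exp z + Complex.exp (2 * z) + Complex.exp z * RR z) / 2
noncomputable def lamM (z : ℂ) : ℂ :=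
  (2 + 2 * Complex.exp z + Complex.exp (2 * z) - Complex.exp z * RR z) / 2

theorem exp_jet : J2 Complex.exp 1 1 1 := by
  have := J2.exp 1
  simpa using this

theorem lamP_jet : J2 lamP ((5 + s5) / 2) (2 + 3 * s5 / 5) (3 + 22 * s5 / 25) := by
  have j := (((J2.const 2).add ((J2.const 2).mul exp_jet)).add (J2.exp 2)).add
    (exp_jet.mul RR_jet)
  have j2 := j.mul (J2.const (1 / 2))
  have j3 := j2.congr (g := lamP) (Eventually.of_forall fun z => by unfold lamP; ring)
  convert j3 using 1 <;> ring

theorem lamM_jet : J2 lamM ((5 - s5) / 2) (2 - 3 * s5 / 5) (3 - 22 * s5 / 25) := by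
  have j := (((J2.const 2).add ((J2.const 2).mul exp_jet)).add (J2.exp 2)).add
    ((J2.const (-1)).mul (exp_jet.mul RR_jet))
  have j2 := j.mul (J2.const (1 / 2))
  have j3 := j2.congr (g := lamM) (Eventually.of_forall fun z => by unfold lamM; ring)
  convert j3 using 1 <;> ring

/-- the drift of the mean -/
noncomputable def aB : ℝ := (7 + Real.sqrt 5) / 10

theorem aB_cast : (aB : ℂ) = (7 + s5) / 10 := by
  unfold aB s5; push_cast; rfl

noncomputable def hB (z : ℂ) : ℂ := lamP z * Complex.exp (-(aB : ℂ) * z) * ((5 - s5) / 10)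
noncomputable def kB (z : ℂ) : ℂ := lamM z * Complex.exp (-(aB : ℂ) * z) * ((5 - s5) / 10)

theorem hB_jet : J2 hB 1 0 ((13 / 25 : ℝ) : ℂ) := by
  have j := (lamP_jet.mul (J2.exp (-(aB : ℂ)))).mul (J2.const ((5 - s5) / 10))
  have hs : s5 ^ 2 = 5 := by rw [sq]; exact s5_sq
  have hs3 : s5 ^ 3 = 5 * s5 := by rw [pow_succ, hs]
  have hs4 : s5 ^ 4 = 25 := by rw [show s5 ^ 4 = (s5 ^ 2) ^ 2 by ring, hs]; norm_num
  unfold hB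
  convert j using 1
  · linear_combination hs / 20
  · rw [aB_cast]; ring_nf; rw [hs3, hs]; ring
  · rw [aB_cast]; push_cast; ring_nf; rw [hs4, hs3, hs]; ring

theorem kB_jet : ∃ k1 k2, J2 kB ((3 - s5) / 2) k1 k2 := by
  have j := (lamM_jet.mul (J2.exp (-(aB : ℂ)))).mul (J2.const ((5 - s5) / 10))
  have e : (5 - s5) / 2 * 1 * ((5 - s5) / 10) = (3 - s5) / 2 := by
    linear_combination s5_sq / 20
  rw [e] at j
  exact ⟨_, _, j⟩

noncomputable def P2f (z : ℂ) : ℂ := PB (Complex.exp z) 2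
noncomputable def P3f (z : ℂ) : ℂ := PB (Complex.exp z) 3
noncomputable def AfB (z : ℂ) : ℂ := (P3f z - lamM z * P2f z) / (Complex.exp z * RR z)
noncomputable def BfB (z : ℂ) : ℂ := (lamP z * P2f z - P3f z) / (Complex.exp z * RR z)

theorem P2f_eq : P2f = fun z => Complex.exp z + Complex.exp z ^ 2 + Complex.exp z ^ 3 := by
  funext z; exact PB_two _ (Complex.exp_ne_zero z)

theorem P3f_eq : P3f = fun z => Complex.exp z + 3 * Complex.exp z ^ 2 + 4 * Complex.exp z ^ 3
    + 2 * Complex.exp z ^ 4 + Complex.exp z ^ 5 := by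
  funext z; exact PB_three _ (Complex.exp_ne_zero z)

theorem eR_ne : Complex.exp 0 * RR 0 ≠ 0 := by
  rw [RR_zero]; simpa using s5_ne

theorem lamP_analytic : AnalyticAt ℂ lamP 0 := by
  have := RR_analytic
  unfold lamP
  fun_prop

theorem lamM_analytic : AnalyticAt ℂ lamM 0 := by
  have := RR_analytic
  unfold lamM
  fun_prop

theorem AfB_analytic : AnalyticAt ℂ AfB 0 := by
  have := RR_analytic
  have := lamM_analytic
  unfold AfB
  rw [P2f_eq, P3f_eq]
  refine AnalyticAt.div ?_ ?_ eR_ne <;> fun_prop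

theorem BfB_analytic : AnalyticAt ℂ BfB 0 := by
  have := RR_analytic
  have := lamP_analytic
  unfold BfB
  rw [P2f_eq, P3f_eq]
  refine AnalyticAt.div ?_ ?_ eR_ne <;> fun_prop

theorem AfB_zero : AfB 0 ≠ 0 := by
  unfold AfB
  refine div_ne_zero ?_ eR_ne
  rw [P2f_eq, P3f_eq]
  simp only [Complex.exp_zero]
  have : lamM 0 = (5 - s5) / 2 := by
    unfold lamM; rw [RR_zero]; simp; ring
  rw [this]
  intro h
  have h2 : s5 = -7 / 3 := by linear_combination h * (2 / 3)
  have := s5_sq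
  rw [h2] at this
  norm_num at this

theorem PB_closed (z : ℂ) (hz : RR z ≠ 0) (n : ℕ) :
    PB (Complex.exp z) (n + 2) = AfB z * lamP z ^ n + BfB z * lamM z ^ n := by
  have he := Complex.exp_ne_zero z
  have h2 : Complex.exp (2 * z) = Complex.exp z ^ 2 := by rw [← Complex.exp_nat_mul]; norm_num
  have hR := RR_sq z
  have := (binet (fun n => PB (Complex.exp z) (n + 2)) (lamP z) (lamM z) (fun n => by
    have := PB_rec (Complex.exp z) he n
    have e1 : lamP z + lamM z = 2 + 2 * Complex.exp z + Complex.exp z ^ 2 := by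
      unfold lamP lamM; rw [h2]; ring
    have e2 : lamP z * lamM z = 1 + 2 * Complex.exp z + Complex.exp z ^ 2 + Complex.exp z ^ 3 := by
      unfold lamP lamM; rw [h2] at hR ⊢
      linear_combination -(Complex.exp z ^ 2 / 4) * hR
    rw [e1, e2]
    exact this) n).1
  have e3 : lamP z - lamM z = Complex.exp z * RR z := by unfold lamP lamM; ring
  rw [e3] at this
  unfold AfB BfB P2f P3f
  simp only [zero_add] at this
  field_simp
  linear_combination this

theorem OmB_nonempty (r : ℕ) (hr : 2 ≤ r) : (OmB r).Nonempty := by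
  refine ⟨Finsupp.single (thetaB r) 1, (mem_OmB hr _).2 ⟨?_, ?_⟩⟩
  · intro v hv
    have hv := Finsupp.support_single_subset hv
    rw [Finset.mem_singleton] at hv
    subst hv
    refine Or.inr ⟨1, 2, le_rfl, by omega, hr, ?_⟩
    funext t
    unfold thetaB
    split_ifs <;> omega
  · simp

theorem gf_eq (z : ℂ) (hz : RR z ≠ 0) (n : ℕ) :
    ∑ y ∈ OmB (n + 2), Complex.exp (z * (((wB y : ℝ) - n * aB : ℝ) : ℂ)) =
      ((5 + s5) / 2) ^ n * (AfB z * hB z ^ n + BfB z * kB z ^ n) := by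
  have e : ∀ y : (Fin (n + 2) → ℕ) →₀ ℕ, Complex.exp (z * (((wB y : ℝ) - n * aB : ℝ) : ℂ)) =
      Complex.exp (-(aB : ℂ) * z) ^ n * Complex.exp z ^ wB y := by
    intro y
    rw [← Complex.exp_nat_mul, ← Complex.exp_nat_mul, ← Complex.exp_add]
    congr 1
    push_cast
    ring
  simp only [e]
  rw [← Finset.mul_sum]
  change _ * PB (Complex.exp z) (n + 2) = _
  rw [PB_closed z hz n]
  unfold hB kB
  have e1 : ((5 + s5) / 2) ^ n * ((5 - s5) / 10) ^ n = 1 := by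
    rw [← mul_pow, show (5 + s5) / 2 * ((5 - s5) / 10) = 1 by linear_combination -s5_sq / 20,
      one_pow]
  simp only [mul_pow _ _ n]
  linear_combination -(Complex.exp (-(aB : ℂ) * z) ^ n * (AfB z * lamP z ^ n + BfB z * lamM z ^ n))
    * e1

theorem sqrt5_bounds : 2 < Real.sqrt 5 ∧ Real.sqrt 5 < 3 := by
  constructor
  · rw [Real.lt_sqrt] <;> norm_num
  · rw [Real.sqrt_lt'] <;> norm_num

theorem quasiB (m V : ℕ → ℝ)
    (hm : ∀ n, m n = (∑ y ∈ OmB (n + 2), ((wB y : ℝ) - n * aB)) / (OmB (n + 2)).card)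
    (hV : ∀ n, V n = (∑ y ∈ OmB (n + 2), ((wB y : ℝ) - n * aB) ^ 2) / (OmB (n + 2)).card
      - m n ^ 2) (x : ℝ) :
    Tendsto (fun n => (((OmB (n + 2)).filter
      (fun y => (wB y : ℝ) - n * aB ≤ m n + x * Real.sqrt (V n))).card : ℝ) /
      ((OmB (n + 2)).card : ℝ)) atTop
      (𝓝 ((1 / Real.sqrt (2 * Real.pi)) * ∫ u in Set.Iic x, Real.exp (-u ^ 2 / 2))) := by
  obtain ⟨k1, k2, jk⟩ := kB_jet
  obtain ⟨b1, b2⟩ := sqrt5_bounds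
  have hk : (3 - s5) / 2 = (((3 - Real.sqrt 5) / 2 : ℝ) : ℂ) := by
    unfold s5; push_cast; rfl
  refine quasi (fun n => OmB (n + 2)) (fun n => OmB_nonempty _ (by omega))
    (fun n y => (wB y : ℝ) - n * aB) (fun n => ((5 + s5) / 2) ^ n) (fun n => pow_ne_zero _ ?_)
    AfB hB BfB kB (13 / 25) (by norm_num) (J2.of_analytic AfB_analytic)
    (J2.of_analytic BfB_analytic) hB_jet jk ?_ ?_ AfB_zero ?_ m V hm hV x
  · intro h
    have h2 : s5 = -5 := by linear_combination 2 * h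
    have := s5_sq
    rw [h2] at this
    norm_num at this
  · rw [hk]
    exact_mod_cast (by linarith : (0 : ℝ) < (3 - Real.sqrt 5) / 2).ne'
  · rw [hk, Complex.norm_real, Real.norm_eq_abs, abs_lt]
    constructor <;> linarith
  · have : ∀ᶠ z in 𝓝 (0 : ℂ), RR z ≠ 0 := by
      apply RR_analytic.continuousAt.eventually_ne
      rw [RR_zero]; exact s5_ne
    filter_upwards [this] with z hz n
    exact gf_eq z hz n

theorem finalB (x : ℝ) :
    Tendsto (fun r : ℕ =>
      (∑' k : ℕ, if (k : ℝ) ≤ muB r + x * Real.sqrt (varB r) then pB r k else 0) /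
        (∑' k : ℕ, pB r k))
      atTop
      (𝓝 ((1 / Real.sqrt (2 * Real.pi)) * ∫ u in Set.Iic x, Real.exp (-u ^ 2 / 2))) := by
  rw [← tendsto_add_atTop_iff_nat 2]
  have hN : ∀ n, ((OmB (n + 2)).card : ℝ) ≠ 0 := fun n => by
    exact_mod_cast (Finset.card_pos.2 (OmB_nonempty (n + 2) (by omega))).ne'
  have t0 : ∀ n, ∑' k : ℕ, pB (n + 2) k = (OmB (n + 2)).card := fun n => by
    have := tsum_pB (r := n + 2) (by omega) (fun _ => 1)
    simpa using this
  have t1 : ∀ n, muB (n + 2) = (∑ y ∈ OmB (n + 2), (wB y : ℝ)) / (OmB (n + 2)).card := fun n => by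
    unfold muB
    rw [t0, tsum_pB (r := n + 2) (by omega) (fun k => (k : ℝ))]
  have t2 : ∀ n, varB (n + 2) = (∑ y ∈ OmB (n + 2), (wB y : ℝ) ^ 2) / (OmB (n + 2)).card
      - muB (n + 2) ^ 2 := fun n => by
    unfold varB
    rw [t0, tsum_pB (r := n + 2) (by omega) (fun k => (k : ℝ) ^ 2)]
  have hm : ∀ n : ℕ, muB (n + 2) - n * aB =
      (∑ y ∈ OmB (n + 2), ((wB y : ℝ) - n * aB)) / (OmB (n + 2)).card := fun n => by
    rw [t1, Finset.sum_sub_distrib, Finset.sum_const, nsmul_eq_mul]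
    have := hN n
    field_simp
  have hV : ∀ n : ℕ, varB (n + 2) =
      (∑ y ∈ OmB (n + 2), ((wB y : ℝ) - n * aB) ^ 2) / (OmB (n + 2)).card
        - (muB (n + 2) - n * aB) ^ 2 := fun n => by
    have e : ∑ y ∈ OmB (n + 2), ((wB y : ℝ) - n * aB) ^ 2 = ∑ y ∈ OmB (n + 2), (wB y : ℝ) ^ 2
        - 2 * (n * aB) * ∑ y ∈ OmB (n + 2), (wB y : ℝ) + (OmB (n + 2)).card * (n * aB) ^ 2 := by
      have e0 : ((OmB (n + 2)).card : ℝ) * (n * aB) ^ 2 = ∑ y ∈ OmB (n + 2), (n * aB) ^ 2 := by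
        rw [Finset.sum_const, nsmul_eq_mul]
      rw [e0, Finset.mul_sum, ← Finset.sum_sub_distrib,
        ← Finset.sum_add_distrib]
      exact Finset.sum_congr rfl fun y _ => by ring
    rw [e, t2, t1]
    have := hN n
    field_simp
    ring
  refine (quasiB (fun n => muB (n + 2) - n * aB) (fun n => varB (n + 2)) hm hV x).congr fun n => ?_
  rw [t0]
  congr 1
  have := tsum_pB (r := n + 2) (by omega)
    (fun k => if (k : ℝ) ≤ muB (n + 2) + x * Real.sqrt (varB (n + 2)) then 1 else 0)
  simp only [ite_mul, one_mul, zero_mul] at this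
  rw [this, Finset.sum_boole]
  congr 2
  ext y
  simp only [Finset.mem_filter]
  constructor <;> rintro ⟨u, v⟩ <;> exact ⟨u, by linarith⟩

end ApplyPart

open Filter in
/-- Theorem 1.2, type `B_r` (Gaussian behavior): the normalized number of positive
roots used in the decompositions of the highest root of `B_r`, with mean `μ_r` and
standard deviation `σ_r = √(variance)`, converges in distribution to the standard
normal as `r → ∞`. -/
theorem gaussian_highestRoot_typeB (x : ℝ) :
    Tendsto (fun r : ℕ =>
      (∑' k : ℕ, if (k : ℝ) ≤ muB r + x * Real.sqrt (varB r) then pB r k else 0) /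
        (∑' k : ℕ, pB r k))
      atTop
      (nhds ((1 / Real.sqrt (2 * Real.pi)) * ∫ u in Set.Iic x, Real.exp (-u ^ 2 / 2))) := by
  exact finalB x
end

section
/- For r ≥ 3 let p_{r,k} = N^C_k(θ_C) be the number of decompositions of the highest root θ_C = (2,2,…,2,1) ∈ ℕ^r of C_r as a sum of exactly k positive roots, and set μ_r = (Σ_k k·p_{r,k})/(Σ_k p_{r,k}) and σ_r = √( (Σ_k k²·p_{r,k})/(Σ_k p_{r,k}) − μ_r² ). Then for every x ∈ ℝ: lim_{r→∞} (Σ_{k ∈ ℕ, k ≤ μ_r + x·σ_r} p_{r,k}) / (Σ_{k≥0} p_{r,k}) = (1/√(2π))·∫_{−∞}^x e^{−u²/2} du. That is, the normalized number of positive roots used in the decompositions of the highest root of C_r converges in distribution to the standard normal as r → ∞. -/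
open Polynomial

/-- The positive roots of the Lie algebra of type `C_r` in simple-root coordinates
(`1`-based positions): the interval vectors `α[i,j]` for `1 ≤ i ≤ j ≤ r`, the vectors
`γ[i,j]` (value `1` at positions `i..j−1`, value `2` at positions `j..r−1`, value `1` at
position `r`) for `1 ≤ i < j ≤ r−1`, and the highest root `(2,2,…,2,1)`. -/
def isPosRootC (r : ℕ) (v : Fin r → ℕ) : Prop :=
  (∃ i j : ℕ, 1 ≤ i ∧ i ≤ j ∧ j ≤ r ∧
    v = fun t => if i ≤ t.val + 1 ∧ t.val + 1 ≤ j then 1 else 0) ∨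
  (∃ i j : ℕ, 1 ≤ i ∧ i < j ∧ j ≤ r - 1 ∧
    v = fun t => if i ≤ t.val + 1 ∧ t.val + 1 ≤ j - 1 then 1
      else if j ≤ t.val + 1 ∧ t.val + 1 ≤ r - 1 then 2
      else if t.val + 1 = r then 1 else 0) ∨
  (v = fun t => if t.val + 1 ≤ r - 1 then 2 else 1)

/-- `NC r k λ` is the number of decompositions of the weight `λ` as a sum of exactly `k`
positive roots of `C_r`. -/
noncomputable def NC (r k : ℕ) (lam : Fin r → ℕ) : ℕ :=
  Set.ncard {m : (Fin r → ℕ) →₀ ℕ |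
    (∀ v ∈ m.support, isPosRootC r v) ∧
    (m.sum fun _ n => n) = k ∧
    (m.sum fun v n => n • v) = lam}

/-- The highest root `θ_C = (2,2,…,2,1)` of `C_r` in simple-root coordinates. -/
def thetaC (r : ℕ) : Fin r → ℕ := fun t => if t.val + 1 = r then 1 else 2

/-- `pC r k` is the number of decompositions of the highest root of `C_r` as a sum of
exactly `k` positive roots (as a real number). -/
noncomputable def pC (r k : ℕ) : ℝ := (NC r k (thetaC r) : ℝ)

/-- The mean number of positive roots used in the decompositions of the highest root of
`C_r`, each decomposition being equally likely. -/
noncomputable def muC (r : ℕ) : ℝ := (∑' k : ℕ, (k : ℝ) * pC r k) / ∑' k : ℕ, pC r k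

/-- The variance of the number of positive roots used in the decompositions of the
highest root of `C_r`. -/
noncomputable def varC (r : ℕ) : ℝ :=
  (∑' k : ℕ, (k : ℝ) ^ 2 * pC r k) / (∑' k : ℕ, pC r k) - muC r ^ 2

noncomputable section
open Finset

def vsetD (r : ℕ) (Φ : (Fin r → ℕ) → Prop) (lam : Fin r → ℕ) : Set (Multiset (Fin r → ℕ)) :=
  {m | (∀ v ∈ m, Φ v) ∧ m.sum = lam}

theorem card_le_of_sum {r : ℕ} (m : Multiset (Fin r → ℕ)) (h : ∀ v ∈ m, v ≠ 0) :
    m.card ≤ ∑ t, m.sum t := by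
  induction m using Multiset.induction_on with
  | empty => simp
  | cons a s ih =>
    have h1 := ih (fun v hv => h v (Multiset.mem_cons_of_mem hv))
    have h2 : a ≠ 0 := h a (Multiset.mem_cons_self a s)
    have h3 : 1 ≤ ∑ t, a t := by
      by_contra hc
      apply h2
      have : ∑ t, a t = 0 := by omega
      funext t
      exact (Finset.sum_eq_zero_iff.1 this) t (Finset.mem_univ t)
    simp only [Multiset.card_cons, Multiset.sum_cons, Pi.add_apply, Finset.sum_add_distrib]
    omega

theorem vsetD_finite {r : ℕ} {Φ : (Fin r → ℕ) → Prop} (h0 : ∀ v, Φ v → v ≠ 0)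
    (lam : Fin r → ℕ) : (vsetD r Φ lam).Finite := by
  classical
  apply Set.Finite.subset
    (Set.finite_Iic ((∑ t, lam t) • (Set.finite_Iic lam).toFinset.val))
  rintro m ⟨h1, h2⟩
  rw [Set.mem_Iic, Multiset.le_iff_count]
  intro v
  by_cases hv : v ∈ m
  · have hle : v ≤ lam := h2 ▸ Multiset.single_le_sum (fun x _ => zero_le) v hv
    have : Multiset.count v (Set.finite_Iic lam).toFinset.val = 1 := by
      apply Multiset.count_eq_one_of_mem (Finset.nodup _)
      simpa using hle
    rw [Multiset.count_nsmul, this, mul_one]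
    calc _ ≤ m.card := Multiset.count_le_card v m
      _ ≤ _ := by
        have := card_le_of_sum m (fun v hv => h0 v (h1 v hv))
        rwa [h2] at this
  · rw [Multiset.count_eq_zero_of_notMem hv]; exact Nat.zero_le _

def gfD (r : ℕ) (Φ : (Fin r → ℕ) → Prop) (q : ℂ) (lam : Fin r → ℕ) : ℂ :=
  ∑ᶠ m ∈ vsetD r Φ lam, q ^ m.card

theorem gfD_step {r : ℕ} {Φ : (Fin r → ℕ) → Prop} (h0 : ∀ v, Φ v → v ≠ 0) (q : ℂ)
    (lam : Fin r → ℕ) (t : Fin r) {ι : Type*} [DecidableEq ι] (J : Finset ι)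
    (s : ι → Multiset (Fin r → ℕ)) (lam' : ι → Fin r → ℕ)
    (hs1 : ∀ j ∈ J, (s j).sum + lam' j = lam)
    (hs2 : ∀ j ∈ J, lam' j t = 0)
    (hs3 : ∀ j ∈ J, ∀ u ∈ s j, Φ u ∧ u t ≠ 0)
    (hinj : Set.InjOn s J)
    (hcomp : ∀ σ : Multiset (Fin r → ℕ), (∀ u ∈ σ, Φ u ∧ u t ≠ 0) → σ.sum ≤ lam →
      σ.sum t = lam t → ∃ j ∈ J, s j = σ) :
    gfD r Φ q lam = ∑ j ∈ J, q ^ (s j).card * gfD r Φ q (lam' j) := by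
  classical
  have key : ∀ μ, gfD r Φ q μ = ∑ m ∈ (vsetD_finite h0 μ).toFinset, q ^ m.card := by
    intro μ
    rw [gfD, finsum_mem_eq_finite_toFinset_sum]
  have hz : ∀ (m : Multiset (Fin r → ℕ)), m.sum t = 0 → ∀ u ∈ m, u t = 0 := by
    intro m hm u hu
    have : u ≤ m.sum := Multiset.single_le_sum (fun x _ => zero_le) u hu
    have h2 : u t ≤ m.sum t := this t
    omega
  have hfilt : ∀ j ∈ J, ∀ m' ∈ vsetD r Φ (lam' j),
      (s j + m').filter (fun u => u t ≠ 0) = s j := by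
    intro j hj m' hm'
    rw [Multiset.filter_add, Multiset.filter_eq_self.2 (fun u hu => (hs3 j hj u hu).2),
      Multiset.filter_eq_nil.2, add_zero]
    intro u hu
    rw [not_not]
    exact hz m' (by rw [hm'.2]; exact hs2 j hj) u hu
  have hD : (vsetD_finite h0 lam).toFinset =
      J.biUnion (fun j => ((vsetD_finite h0 (lam' j)).toFinset.image (fun m => s j + m))) := by
    ext m
    simp only [Set.Finite.mem_toFinset, Finset.mem_biUnion, Finset.mem_image]
    constructor
    · rintro ⟨h1, h2⟩
      have hsplit := Multiset.filter_add_not (fun u : Fin r → ℕ => u t ≠ 0) m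
      set σ := m.filter (fun u : Fin r → ℕ => u t ≠ 0) with hσ
      set τ := m.filter (fun u : Fin r → ℕ => ¬ u t ≠ 0) with hτ
      have hsum : σ.sum + τ.sum = lam := by rw [← Multiset.sum_add, hsplit, h2]
      have hτ0 : τ.sum t = 0 := by
        change (Pi.evalAddMonoidHom (fun _ : Fin r => ℕ) t) τ.sum = 0
        rw [map_multiset_sum]
        apply Multiset.sum_eq_zero
        intro x hx
        obtain ⟨u, hu, rfl⟩ := Multiset.mem_map.1 hx
        simpa using (Multiset.mem_filter.1 hu).2
      obtain ⟨j, hj, hjs⟩ := hcomp σ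
        (fun u hu => ⟨h1 u (Multiset.mem_filter.1 hu).1, (Multiset.mem_filter.1 hu).2⟩)
        (by rw [← hsum]; exact le_self_add)
        (by rw [← hsum, Pi.add_apply, hτ0, add_zero])
      refine ⟨j, hj, τ, ⟨fun u hu => h1 u (Multiset.mem_filter.1 hu).1, ?_⟩, ?_⟩
      · have := hs1 j hj
        rw [hjs, ← hsum] at this
        exact (add_left_cancel this).symm
      · rw [hjs, hsplit]
    · rintro ⟨j, hj, m', ⟨h1, h2⟩, rfl⟩
      refine ⟨fun v hv => ?_, ?_⟩
      · rcases Multiset.mem_add.1 hv with h | h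
        · exact (hs3 j hj v h).1
        · exact h1 v h
      · rw [Multiset.sum_add, h2, hs1 j hj]
  rw [key, hD, Finset.sum_biUnion]
  · apply Finset.sum_congr rfl
    intro j hj
    rw [Finset.sum_image (fun a _ b _ h => add_left_cancel h), key, Finset.mul_sum]
    simp only [Multiset.card_add, pow_add]
  · intro i hi j hj hij
    rw [Function.onFun, Finset.disjoint_left]
    intro m hm hm'
    simp only [Set.Finite.mem_toFinset, Finset.mem_image] at hm hm'
    obtain ⟨a, ha, rfl⟩ := hm
    obtain ⟨b, hb, hab⟩ := hm'
    apply hij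
    apply hinj hi hj
    rw [← hfilt i hi a ha, ← hab, hfilt j hj b hb]
end

noncomputable section
open Finset

def pref (r n : ℕ) : Fin r → ℕ := fun t => if t.val < n then 1 else 0
def ivec (r i n : ℕ) : Fin r → ℕ := fun t => if i ≤ t.val ∧ t.val < n then 1 else 0

theorem ivec_add_pref (r : ℕ) {i n : ℕ} (h : i ≤ n) : ivec r i n + pref r i = pref r n := by
  funext t
  simp only [ivec, pref, Pi.add_apply]
  split_ifs <;> omega

theorem pref_pair_inj {r i j i' j' : ℕ} (hij : i ≤ j) (hj : j < r) (hij' : i' ≤ j') (hj' : j' < r)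
    (h : pref r i + pref r j = pref r i' + pref r j') : i = i' ∧ j = j' := by
  have key : ∀ t, t < r → ((if t < i then 1 else 0) + (if t < j then 1 else 0) : ℕ) =
      (if t < i' then 1 else 0) + (if t < j' then 1 else 0) := by
    intro t ht
    have := congrFun h ⟨t, ht⟩
    simpa [pref] using this
  have hjj : j = j' := by
    rcases lt_trichotomy j j' with h1 | h1 | h1
    · have h2 := key j (by omega)
      rw [if_neg (by omega), if_neg (by omega), if_pos h1] at h2
      omega
    · exact h1
    · have h2 := key j' (by omega)
      rw [if_pos h1, if_neg (show ¬ j' < j' by omega), if_neg (show ¬ j' < i' by omega)] at h2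
      omega
  subst hjj
  refine ⟨?_, rfl⟩
  rcases lt_trichotomy i i' with h1 | h1 | h1
  · have h2 := key i (by omega)
    rw [if_neg (by omega), if_pos h1] at h2
    omega
  · exact h1
  · have h2 := key i' (by omega)
    rw [if_pos h1, if_neg (show ¬ i' < i' by omega)] at h2
    omega

theorem isPosRootC_ne_zero {r : ℕ} (hr : 3 ≤ r) (v : Fin r → ℕ) (hv : isPosRootC r v) : v ≠ 0 := by
  rintro rfl
  rcases hv with ⟨i, j, h1, h2, h3, h⟩ | ⟨i, j, h1, h2, h3, h⟩ | h
  · have := congrFun h ⟨i - 1, by omega⟩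
    simp only [Pi.zero_apply] at this
    split_ifs at this <;> omega
  · have := congrFun h ⟨r - 1, by omega⟩
    simp only [Pi.zero_apply] at this
    split_ifs at this <;> omega
  · have := congrFun h ⟨r - 1, by omega⟩
    simp only [Pi.zero_apply] at this
    split_ifs at this <;> omega

theorem isPosRootC_ivec {r i n : ℕ} (hi : i < n) (hn : n ≤ r) : isPosRootC r (ivec r i n) := by
  left
  refine ⟨i + 1, n, by omega, by omega, hn, ?_⟩
  funext t
  simp only [ivec]
  split_ifs <;> omega

theorem root_below {r n : ℕ} (hr : 3 ≤ r) (hn : 1 ≤ n) (hnr : n < r) (u : Fin r → ℕ)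
    (hu : isPosRootC r u) (hz : ∀ t : Fin r, n ≤ t.val → u t = 0)
    (ht : u ⟨n - 1, by omega⟩ ≠ 0) : ∃ i < n, u = ivec r i n := by
  have hl := hz ⟨r - 1, by omega⟩ (by simp only; omega)
  rcases hu with ⟨i, j, h1, h2, h3, rfl⟩ | ⟨i, j, h1, h2, h3, rfl⟩ | rfl
  · have h4 : j = n := by
      have hb : j ≤ n := by
        by_contra hc
        have := hz ⟨j - 1, by omega⟩ (by simp only; omega)
        simp only at this
        split_ifs at this <;> omega
      simp only at ht
      split_ifs at ht <;> omega
    subst h4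
    refine ⟨i - 1, by omega, ?_⟩
    funext t
    simp only [ivec]
    split_ifs <;> omega
  · exfalso
    simp only at hl
    split_ifs at hl <;> omega
  · exfalso
    simp only at hl
    split_ifs at hl <;> omega

def Ugf (r : ℕ) (q : ℂ) (a n : ℕ) : ℂ := gfD r (isPosRootC r) q (pref r a + pref r n)

theorem Ugf_comm (r : ℕ) (q : ℂ) (a n : ℕ) : Ugf r q a n = Ugf r q n a := by
  rw [Ugf, Ugf, add_comm]

theorem Ugf_zero {r : ℕ} (hr : 3 ≤ r) (q : ℂ) : Ugf r q 0 0 = 1 := by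
  have h : vsetD r (isPosRootC r) (pref r 0 + pref r 0) = {0} := by
    ext m
    simp only [vsetD, Set.mem_ofPred_eq, Set.mem_singleton_iff]
    have hp : pref r 0 + pref r 0 = 0 := by
      funext t
      simp [pref]
    rw [hp]
    constructor
    · rintro ⟨h1, h2⟩
      have := card_le_of_sum m (fun v hv => isPosRootC_ne_zero hr v (h1 v hv))
      rw [h2] at this
      simpa using this
    · rintro rfl
      simp
  rw [Ugf, gfD, h, finsum_mem_singleton]
  simp

/-- structure of the multisets -/
theorem sigma_struct {r n a : ℕ} (hr : 3 ≤ r) (hn : 1 ≤ n) (hnr : n < r) (han : a ≤ n)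
    (σ : Multiset (Fin r → ℕ))
    (h1 : ∀ u ∈ σ, isPosRootC r u ∧ u ⟨n - 1, by omega⟩ ≠ 0)
    (h2 : σ.sum ≤ pref r a + pref r n) :
    (∀ u ∈ σ, ∃ i < n, u = ivec r i n) ∧ σ.sum ⟨n - 1, by omega⟩ = σ.card := by
  have hA : ∀ u ∈ σ, ∃ i < n, u = ivec r i n := by
    intro u hu
    have hle : u ≤ pref r a + pref r n :=
      (Multiset.single_le_sum (fun x _ => zero_le) u hu).trans h2
    apply root_below hr hn hnr u (h1 u hu).1 _ (h1 u hu).2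
    intro t ht
    have := hle t
    simp only [pref, Pi.add_apply] at this
    split_ifs at this <;> omega
  refine ⟨hA, ?_⟩
  change (Pi.evalAddMonoidHom (fun _ : Fin r => ℕ) ⟨n - 1, by omega⟩) σ.sum = σ.card
  rw [map_multiset_sum, Multiset.map_congr rfl (g := fun _ => 1)]
  · simp
  · intro u hu
    obtain ⟨i, hi, rfl⟩ := hA u hu
    simp only [Pi.evalAddMonoidHom_apply, ivec]
    split_ifs <;> omega

theorem Ugf_lt {r : ℕ} (hr : 3 ≤ r) (q : ℂ) {a n : ℕ} (han : a < n) (hnr : n < r) :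
    Ugf r q a n = q * ∑ i ∈ range n, Ugf r q a i := by
  rw [Ugf, gfD_step (isPosRootC_ne_zero hr) q _ ⟨n - 1, by omega⟩ (range n)
    (fun i => {ivec r i n}) (fun i => pref r a + pref r i), Finset.mul_sum]
  · simp [Ugf]
  · intro j hj
    rw [Finset.mem_range] at hj
    rw [Multiset.sum_singleton, ← ivec_add_pref r hj.le]
    abel
  · intro j hj
    rw [Finset.mem_range] at hj
    simp only [pref, Pi.add_apply]
    split_ifs <;> omega
  · intro j hj u hu
    rw [Finset.mem_range] at hj
    rw [Multiset.mem_singleton] at hu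
    subst hu
    refine ⟨isPosRootC_ivec hj hnr.le, ?_⟩
    simp only [ivec]
    split_ifs <;> omega
  · intro i hi j hj hij
    simp only [Finset.coe_range, Set.mem_Iio] at hi hj
    rw [Multiset.singleton_inj] at hij
    have e1 := ivec_add_pref r hi.le
    have e2 := ivec_add_pref r hj.le
    rw [hij, ← e2] at e1
    have e3 := add_left_cancel e1
    exact (pref_pair_inj (r := r) le_rfl (by omega) le_rfl (by omega) (by rw [e3])).1
  · intro σ h1 h2 h3
    obtain ⟨hA, hB⟩ := sigma_struct hr (by omega) hnr han.le σ h1 h2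
    have hc : σ.card = 1 := by
      rw [← hB, h3]
      simp only [pref, Pi.add_apply]
      split_ifs <;> omega
    obtain ⟨u, rfl⟩ := Multiset.card_eq_one.1 hc
    obtain ⟨i, hi, rfl⟩ := hA u (by simp)
    exact ⟨i, by simpa using hi, rfl⟩

theorem Ugf_diag {r : ℕ} (hr : 3 ≤ r) (q : ℂ) {n : ℕ} (hn : 1 ≤ n) (hnr : n < r) :
    Ugf r q n n = q ^ 2 * ∑ j ∈ range n, ∑ i ∈ range (j + 1), Ugf r q i j := by
  rw [Finset.sum_sigma', Ugf, gfD_step (isPosRootC_ne_zero hr) q _ ⟨n - 1, by omega⟩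
    ((range n).sigma fun j => range (j + 1))
    (fun p => {ivec r p.2 n, ivec r p.1 n}) (fun p => pref r p.2 + pref r p.1), Finset.mul_sum]
  · simp [Ugf]
  · rintro ⟨j, i⟩ hp
    simp only [Finset.mem_sigma, Finset.mem_range] at hp
    simp only [Multiset.insert_eq_cons, Multiset.sum_cons, Multiset.sum_singleton]
    conv_rhs => rw [← ivec_add_pref r (show i ≤ n by omega)]
    conv_lhs => rw [add_add_add_comm, ivec_add_pref r (show i ≤ n by omega),
      ivec_add_pref r (show j ≤ n by omega)]
    rw [ivec_add_pref r (show i ≤ n by omega)]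
  · rintro ⟨j, i⟩ hp
    simp only [Finset.mem_sigma, Finset.mem_range] at hp
    simp only [pref, Pi.add_apply]
    split_ifs <;> omega
  · rintro ⟨j, i⟩ hp u hu
    simp only [Finset.mem_sigma, Finset.mem_range] at hp
    simp only [Multiset.insert_eq_cons, Multiset.mem_cons, Multiset.mem_singleton] at hu
    rcases hu with rfl | rfl
    · refine ⟨isPosRootC_ivec (by omega) hnr.le, ?_⟩
      simp only [ivec]
      split_ifs <;> omega
    · refine ⟨isPosRootC_ivec (by omega) hnr.le, ?_⟩
      simp only [ivec]
      split_ifs <;> omega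
  · rintro ⟨j, i⟩ hp ⟨j', i'⟩ hp' hs
    simp only [Finset.mem_coe, Finset.mem_sigma, Finset.mem_range] at hp hp'
    have hs' := congrArg Multiset.sum hs
    simp only [Multiset.insert_eq_cons, Multiset.sum_cons, Multiset.sum_singleton] at hs'
    have e : ∀ i j, i ≤ n → j ≤ n → (ivec r i n + ivec r j n) + (pref r i + pref r j) =
        pref r n + pref r n := by
      intro i j hi hj
      rw [add_add_add_comm, ivec_add_pref r hi, ivec_add_pref r hj]
    have e1 := e i j (by omega) (by omega)
    rw [hs', ← e i' j' (by omega) (by omega)] at e1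
    obtain ⟨rfl, rfl⟩ := pref_pair_inj (by omega) (by omega) (by omega) (by omega)
      (add_left_cancel e1)
    rfl
  · intro σ h1 h2 h3
    obtain ⟨hA, hB⟩ := sigma_struct hr (by omega) hnr le_rfl σ h1 h2
    have hc : σ.card = 2 := by
      rw [← hB, h3]
      simp only [pref, Pi.add_apply]
      split_ifs <;> omega
    obtain ⟨u, v, rfl⟩ := Multiset.card_eq_two.1 hc
    obtain ⟨i, hi, rfl⟩ := hA u (by simp)
    obtain ⟨j, hj, rfl⟩ := hA v (by simp)
    rcases le_total i j with h | h
    · exact ⟨⟨j, i⟩, by simp only [Finset.mem_sigma, Finset.mem_range]; omega, rfl⟩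
    · exact ⟨⟨i, j⟩, by simp only [Finset.mem_sigma, Finset.mem_range]; omega,
        Multiset.pair_comm _ _⟩

/-- index set for the top root -/
def Jtop (r : ℕ) : Finset (ℕ × ℕ) :=
  (range r ×ˢ range r).filter fun p => p.1 < p.2 ∨ (p.1 = p.2 ∧ (p.1 = 0 ∨ p.1 = r - 1))

theorem mem_Jtop {r i j : ℕ} : (i, j) ∈ Jtop r ↔
    (i < r ∧ j < r) ∧ (i < j ∨ (i = j ∧ (i = 0 ∨ i = r - 1))) := by
  simp [Jtop]

def svec (r : ℕ) (p : ℕ × ℕ) : Fin r → ℕ := fun t => thetaC r t - (pref r p.1 t + pref r p.2 t)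

theorem svec_root {r : ℕ} (hr : 3 ≤ r) {p : ℕ × ℕ} (hp : p ∈ Jtop r) : isPosRootC r (svec r p) := by
  obtain ⟨i, j⟩ := p
  rw [mem_Jtop] at hp
  obtain ⟨⟨hi, hj⟩, h⟩ := hp
  by_cases hj1 : j = r - 1
  · left
    refine ⟨i + 1, r, by omega, by omega, le_rfl, ?_⟩
    funext t
    have := t.2
    simp only [svec, thetaC, pref]
    split_ifs <;> omega
  · rcases h with h | ⟨h, h'⟩
    · right; left
      refine ⟨i + 1, j + 1, by omega, by omega, by omega, ?_⟩
      funext t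
      have := t.2
      simp only [svec, thetaC, pref]
      split_ifs <;> omega
    · right; right
      funext t
      have := t.2
      simp only [svec, thetaC, pref]
      split_ifs <;> omega

theorem svec_add {r : ℕ} {p : ℕ × ℕ} (hp : p ∈ Jtop r) :
    svec r p + (pref r p.1 + pref r p.2) = thetaC r := by
  obtain ⟨i, j⟩ := p
  rw [mem_Jtop] at hp
  funext t
  have := t.2
  simp only [svec, thetaC, pref, Pi.add_apply]
  split_ifs <;> omega

theorem root_top {r : ℕ} (hr : 3 ≤ r) (u : Fin r → ℕ) (hu : isPosRootC r u)
    (ht : u ⟨r - 1, by omega⟩ ≠ 0) : ∃ p ∈ Jtop r, svec r p = u := by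
  rcases hu with ⟨i, j, h1, h2, h3, rfl⟩ | ⟨i, j, h1, h2, h3, rfl⟩ | rfl
  · have : j = r := by
      simp only at ht
      split_ifs at ht <;> omega
    subst this
    refine ⟨(i - 1, j - 1), by rw [mem_Jtop]; omega, ?_⟩
    funext t
    have := t.2
    simp only [svec, thetaC, pref]
    split_ifs <;> omega
  · refine ⟨(i - 1, j - 1), by rw [mem_Jtop]; omega, ?_⟩
    funext t
    have := t.2
    simp only [svec, thetaC, pref]
    split_ifs <;> omega
  · refine ⟨(0, 0), by rw [mem_Jtop]; omega, ?_⟩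
    funext t
    have := t.2
    simp only [svec, thetaC, pref]
    split_ifs <;> omega

theorem gf_top {r : ℕ} (hr : 3 ≤ r) (q : ℂ) :
    gfD r (isPosRootC r) q (thetaC r) = q * ∑ p ∈ Jtop r, Ugf r q p.1 p.2 := by
  rw [gfD_step (isPosRootC_ne_zero hr) q _ ⟨r - 1, by omega⟩ (Jtop r)
    (fun p => {svec r p}) (fun p => pref r p.1 + pref r p.2), Finset.mul_sum]
  · simp [Ugf]
  · intro p hp
    rw [Multiset.sum_singleton, svec_add hp]
  · rintro ⟨i, j⟩ hp
    rw [mem_Jtop] at hp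
    simp only [pref, Pi.add_apply]
    split_ifs <;> omega
  · rintro ⟨i, j⟩ hp u hu
    rw [Multiset.mem_singleton] at hu
    subst hu
    refine ⟨svec_root hr hp, ?_⟩
    rw [mem_Jtop] at hp
    simp only [svec, thetaC, pref]
    split_ifs <;> omega
  · rintro ⟨i, j⟩ hp ⟨i', j'⟩ hp' hs
    rw [Multiset.singleton_inj] at hs
    have e1 := svec_add hp
    have e2 := svec_add hp'
    rw [hs, ← e2] at e1
    rw [Finset.mem_coe, mem_Jtop] at hp hp'
    obtain ⟨rfl, rfl⟩ := pref_pair_inj (by omega) (by omega) (by omega) (by omega)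
      (add_left_cancel e1)
    rfl
  · intro σ h1 h2 h3
    have hc : σ.card ≤ 1 := by
      have hle : σ.card • 1 ≤ (σ.map (fun u => u ⟨r - 1, by omega⟩)).sum := by
        rw [← Multiset.card_map (fun u : Fin r → ℕ => u ⟨r - 1, by omega⟩) σ]
        apply Multiset.card_nsmul_le_sum
        intro x hx
        obtain ⟨u, hu, rfl⟩ := Multiset.mem_map.1 hx
        have := (h1 u hu).2
        omega
      have : (σ.map (fun u => u ⟨r - 1, by omega⟩)).sum = σ.sum ⟨r - 1, by omega⟩ :=
        (map_multiset_sum (Pi.evalAddMonoidHom (fun _ : Fin r => ℕ) ⟨r - 1, by omega⟩) σ).symm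
      rw [this, h3] at hle
      simp only [thetaC] at hle
      split_ifs at hle <;> simp at hle <;> omega
    have hc0 : σ ≠ 0 := by
      rintro rfl
      simp only [thetaC, Multiset.sum_zero, Pi.zero_apply] at h3
      split_ifs at h3
    obtain ⟨u, rfl⟩ := Multiset.card_eq_one.1 (le_antisymm hc (Multiset.card_pos.2 hc0))
    obtain ⟨p, hp, hpu⟩ := root_top hr u (h1 u (by simp)).1 (h1 u (by simp)).2
    exact ⟨p, hp, by rw [hpu]⟩
end

noncomputable section
open Finset

theorem NC_gf {r : ℕ} (hr : 3 ≤ r) (lam : Fin r → ℕ) :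
    ∃ S : Finset ℕ, (∀ k, k ∉ S → NC r k lam = 0) ∧
      ∀ q : ℂ, ∑ k ∈ S, (NC r k lam : ℂ) * q ^ k = gfD r (isPosRootC r) q lam := by
  classical
  have hfin := vsetD_finite (isPosRootC_ne_zero hr) lam
  have hNC : ∀ k, NC r k lam = (hfin.toFinset.filter (fun m => m.card = k)).card := by
    intro k
    rw [NC, ← Set.ncard_coe_finset]
    apply Set.ncard_congr (fun m _ => Finsupp.toMultiset m)
    · rintro m ⟨h1, h2, h3⟩
      simp only [Finset.coe_filter, Set.Finite.mem_toFinset, Set.mem_ofPred_eq]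
      refine ⟨⟨fun v hv => h1 v ((Finsupp.mem_toMultiset m v).1 hv), ?_⟩, ?_⟩
      · rw [Finsupp.sum_toMultiset, h3]
      · rw [Finsupp.card_toMultiset]; exact h2
    · intro a b _ _ h
      simpa using congrArg Multiset.toFinsupp h
    · intro m hm
      simp only [Finset.coe_filter, Set.Finite.mem_toFinset, Set.mem_ofPred_eq] at hm
      obtain ⟨⟨h1, h2⟩, h3⟩ := hm
      refine ⟨Multiset.toFinsupp m, ⟨?_, ?_, ?_⟩, Multiset.toFinsupp_toMultiset m⟩
      · intro v hv
        exact h1 v (by simpa using hv)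
      · rw [← h3]; exact Multiset.toFinsupp_sum_eq m
      · rw [← Finsupp.sum_toMultiset, Multiset.toFinsupp_toMultiset, h2]
  refine ⟨hfin.toFinset.image Multiset.card, ?_, ?_⟩
  · intro k hk
    rw [hNC, Finset.card_eq_zero, Finset.filter_eq_empty_iff]
    intro m hm h
    exact hk (Finset.mem_image.2 ⟨m, hm, h⟩)
  · intro q
    rw [gfD, finsum_mem_eq_finite_toFinset_sum _ hfin,
      Finset.sum_comp (fun k => q ^ k) Multiset.card]
    apply Finset.sum_congr rfl
    intro k _
    rw [hNC, nsmul_eq_mul]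

/-- pair recursion -/
def gt (q : ℂ) : ℕ → ℂ × ℂ
  | 0 => (q ^ 2, q)
  | n + 1 => ((gt q n).1 + q ^ 2 * ((gt q n).1 + (gt q n).2),
      q * (gt q n).1 + (1 + 2 * q) * (gt q n).2)

theorem T_rec {r : ℕ} (hr : 3 ≤ r) (q : ℂ) {n : ℕ} (hn : n + 1 < r) :
    ∑ i ∈ range (n + 1), Ugf r q i (n + 1) =
      q * Ugf r q n n + (1 + 2 * q) * ∑ i ∈ range n, Ugf r q i n := by
  rw [Finset.sum_range_succ, Ugf_lt hr q (show n < n + 1 by omega) hn, Finset.sum_range_succ]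
  have h1 : ∀ i ∈ range n, Ugf r q i (n + 1) = (1 + q) * Ugf r q i n := by
    intro i hi
    rw [Finset.mem_range] at hi
    rw [Ugf_lt hr q (show i < n + 1 by omega) hn, Finset.sum_range_succ, mul_add,
      ← Ugf_lt hr q hi (by omega)]
    ring
  rw [Finset.sum_congr rfl h1, ← Finset.mul_sum,
    Finset.sum_congr rfl (fun i _ => Ugf_comm r q n i)]
  ring

theorem G_rec {r : ℕ} (hr : 3 ≤ r) (q : ℂ) {n : ℕ} (h1 : 1 ≤ n) (hn : n + 1 < r) :
    Ugf r q (n + 1) (n + 1) =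
      Ugf r q n n + q ^ 2 * (Ugf r q n n + ∑ i ∈ range n, Ugf r q i n) := by
  rw [Ugf_diag hr q (by omega) hn, Finset.sum_range_succ, mul_add,
    ← Ugf_diag hr q h1 (by omega), Finset.sum_range_succ]
  ring

theorem GT_eq {r : ℕ} (hr : 3 ≤ r) (q : ℂ) (n : ℕ) (hn : n + 1 < r) :
    Ugf r q (n + 1) (n + 1) = (gt q n).1 ∧
      ∑ i ∈ range (n + 1), Ugf r q i (n + 1) = (gt q n).2 := by
  induction n with
  | zero =>
    constructor
    · rw [Ugf_diag hr q (by omega) hn]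
      simp [gt, Ugf_zero hr]
    · rw [T_rec hr q hn]
      simp [gt, Ugf_zero hr]
  | succ n ih =>
    obtain ⟨h1, h2⟩ := ih (by omega)
    constructor
    · rw [G_rec hr q (by omega) hn, h1, h2, gt]
    · rw [T_rec hr q hn, h1, h2, gt]

theorem gt_sum (q : ℂ) (n : ℕ) :
    q ^ 2 * ∑ k ∈ range n, (gt q k).2 = q * (gt q n).2 - (gt q n).1 := by
  induction n with
  | zero => simp [gt]; ring
  | succ n ih =>
    rw [Finset.sum_range_succ, mul_add, ih, gt]
    ring

theorem Jtop_sum {n : ℕ} (F : ℕ → ℕ → ℂ) :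
    ∑ p ∈ Jtop (n + 2), F p.1 p.2 =
      ∑ k ∈ range (n + 1), ∑ i ∈ range (k + 1), F i (k + 1) + F (n + 1) (n + 1) + F 0 0 := by
  have h : Jtop (n + 2) = insert (0, 0) (insert (n + 1, n + 1)
      (((range (n + 1)).sigma (fun k => range (k + 1))).image (fun x => (x.2, x.1 + 1)))) := by
    ext ⟨i, j⟩
    rw [mem_Jtop]
    simp only [Finset.mem_insert, Finset.mem_image, Finset.mem_sigma, Finset.mem_range,
      Prod.mk.injEq, Sigma.exists]
    constructor
    · rintro ⟨h1, h2⟩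
      rcases h2 with h2 | ⟨h2, h3 | h3⟩
      · right; right
        exact ⟨j - 1, i, by omega, rfl, by omega⟩
      · left; omega
      · right; left; omega
    · rintro (h | h | ⟨k, l, h1, h2, h3⟩) <;> omega
  rw [h, Finset.sum_insert, Finset.sum_insert, Finset.sum_image, Finset.sum_sigma]
  · ring
  · rintro ⟨a, b⟩ _ ⟨c, d⟩ _ h
    simp only [Prod.mk.injEq] at h
    obtain ⟨h1, h2⟩ := h
    have h3 : a = c := by omega
    subst h1; subst h3; rfl
  · simp only [Finset.mem_image, Finset.mem_sigma, Finset.mem_range, Prod.mk.injEq, Sigma.exists,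
      not_exists, not_and]
    intro a b h1 h2 h3
    omega
  · simp only [Finset.mem_insert, Finset.mem_image, Finset.mem_sigma, Finset.mem_range,
      Prod.mk.injEq, Sigma.exists, not_or, not_exists, not_and]
    refine ⟨by omega, ?_⟩
    intro a b h1 h2 h3
    omega

theorem gf_top_eq (q : ℂ) {n : ℕ} (hn : 1 ≤ n) :
    q * gfD (n + 2) (isPosRootC (n + 2)) q (thetaC (n + 2)) =
      q ^ 2 + ((q ^ 2 - 1) * (gt q n).1 + (q + q ^ 2) * (gt q n).2) := by
  have hr : 3 ≤ n + 2 := by omega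
  rw [gf_top hr, Jtop_sum (Ugf (n + 2) q), Ugf_zero hr, (GT_eq hr q n (by omega)).1,
    Finset.sum_congr rfl (fun k hk => (GT_eq hr q k (by rw [Finset.mem_range] at hk; omega)).2)]
  have := gt_sum q (n + 1)
  rw [gt] at this
  linear_combination this

theorem gt_closed (q l1 l2 : ℂ) (h1 : l1 + l2 = 2 + 2 * q + q ^ 2)
    (h2 : l1 * l2 = 1 + 2 * q + q ^ 2 + q ^ 3) (n : ℕ) :
    (l1 - l2) * ((q ^ 2 - 1) * (gt q n).1 + (q + q ^ 2) * (gt q n).2) =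
      q * (((q ^ 5 + 2 * q ^ 4 + 3 * q ^ 3 + 2 * q ^ 2) - l2 * (q ^ 2 + q ^ 3)) * l1 ^ n +
      (l1 * (q ^ 2 + q ^ 3) - (q ^ 5 + 2 * q ^ 4 + 3 * q ^ 3 + 2 * q ^ 2)) * l2 ^ n) := by
  induction n using Nat.strong_induction_on with
  | _ n ih =>
    match n with
    | 0 => simp only [gt]; ring
    | 1 => simp only [gt]; ring
    | n + 2 =>
      have e0 := ih n (by omega)
      have e1 := ih (n + 1) (by omega)
      have hrec : (q ^ 2 - 1) * (gt q (n + 2)).1 + (q + q ^ 2) * (gt q (n + 2)).2 =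
        (l1 + l2) * ((q ^ 2 - 1) * (gt q (n + 1)).1 + (q + q ^ 2) * (gt q (n + 1)).2)
        - (l1 * l2) * ((q ^ 2 - 1) * (gt q n).1 + (q + q ^ 2) * (gt q n).2) := by
        rw [h1, h2]
        simp only [gt]
        ring
      rw [hrec]
      linear_combination (l1 + l2) * e1 - l1 * l2 * e0

theorem gf_closed (q l1 l2 : ℂ) (hq : q ≠ 0) (h1 : l1 + l2 = 2 + 2 * q + q ^ 2)
    (h2 : l1 * l2 = 1 + 2 * q + q ^ 2 + q ^ 3) (h12 : l1 - l2 ≠ 0) {n : ℕ} (hn : 1 ≤ n) :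
    gfD (n + 2) (isPosRootC (n + 2)) q (thetaC (n + 2)) = q +
      (((q ^ 5 + 2 * q ^ 4 + 3 * q ^ 3 + 2 * q ^ 2) - l2 * (q ^ 2 + q ^ 3)) / (l1 - l2) * l1 ^ n +
      (l1 * (q ^ 2 + q ^ 3) - (q ^ 5 + 2 * q ^ 4 + 3 * q ^ 3 + 2 * q ^ 2)) / (l1 - l2) * l2 ^ n) := by
  have e1 := gf_top_eq q hn
  have e2 := gt_closed q l1 l2 h1 h2 n
  apply mul_left_cancel₀ h12
  field_simp
  apply mul_left_cancel₀ hq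
  linear_combination (l1 - l2) * e1 + e2
end

noncomputable section
open Finset Filter MeasureTheory ProbabilityTheory Topology

theorem gauss_Iic (x : ℝ) : (gaussianReal 0 1).real (Set.Iic x) =
    (1 / Real.sqrt (2 * Real.pi)) * ∫ u in Set.Iic x, Real.exp (-u ^ 2 / 2) := by
  rw [measureReal_def, gaussianReal_apply_eq_integral 0 one_ne_zero, ENNReal.toReal_ofReal]
  · simp only [gaussianPDFReal]
    rw [integral_const_mul]
    simp
  · apply integral_nonneg
    intro u
    exact gaussianPDFReal_nonneg 0 1 u

theorem gauss_cont (x : ℝ) : ContinuousAt (fun y => (gaussianReal 0 1).real (Set.Iic y)) x := by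
  have := nullSingletonClass_gaussianReal (μ := 0) (v := 1) one_ne_zero
  have h : ContinuousOn (fun b : ℝ => ∫ _ in Set.Iic b, (1 : ℝ) ∂(gaussianReal 0 1))
      (Set.Iic (x + 1)) :=
    IntegrableOn.continuousOn_Iic_primitive_Iic (integrable_const _)
  have h2 := h.continuousAt (x := x) (Iic_mem_nhds (by linarith))
  simpa using h2

theorem clt_abstract (p : ℕ → ℕ → ℝ) (hp : ∀ n k, 0 ≤ p n k) (S : ℕ → Finset ℕ)
    (hpos : ∀ᶠ n in atTop, 0 < ∑ k ∈ S n, p n k) (y : ℕ → ℕ → ℝ)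
    (hchar : ∀ t : ℝ, Tendsto (fun n => (∑ k ∈ S n, (p n k : ℂ) * Complex.exp (t * y n k * Complex.I))
      / ((∑ k ∈ S n, p n k : ℝ) : ℂ)) atTop (𝓝 (Complex.exp (-t ^ 2 / 2))))
    (xs : ℕ → ℝ) (x : ℝ) (hxs : Tendsto xs atTop (𝓝 x)) :
    Tendsto (fun n => (∑ k ∈ S n, if y n k ≤ xs n then p n k else 0) / ∑ k ∈ S n, p n k) atTop
      (𝓝 ((1 / Real.sqrt (2 * Real.pi)) * ∫ u in Set.Iic x, Real.exp (-u ^ 2 / 2))) := by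
  classical
  let P : ℕ → ℝ := fun n => ∑ k ∈ S n, p n k
  let ν0 : ℕ → Measure ℝ := fun n =>
    ∑ k ∈ S n, ENNReal.ofReal (p n k / P n) • Measure.dirac (y n k)
  have hν0 : ∀ n, 0 < P n → IsProbabilityMeasure (ν0 n) := by
    intro n hn
    constructor
    simp only [ν0, Measure.coe_finsetSum, Finset.sum_apply, Measure.smul_apply, measure_univ,
      smul_eq_mul, mul_one]
    rw [← ENNReal.ofReal_sum_of_nonneg (fun k _ => div_nonneg (hp n k) hn.le), ← Finset.sum_div,
      div_self hn.ne', ENNReal.ofReal_one]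
  let ν : ℕ → ProbabilityMeasure ℝ := fun n =>
    if h : 0 < P n then ⟨ν0 n, hν0 n h⟩ else ⟨Measure.dirac 0, inferInstance⟩
  have hν : ∀ n, 0 < P n → (ν n : Measure ℝ) = ν0 n := by
    intro n hn
    simp [ν, hn]
  let γ : ProbabilityMeasure ℝ := ⟨gaussianReal 0 1, inferInstance⟩
  have hconv : Tendsto ν atTop (𝓝 γ) := by
    apply ProbabilityMeasure.tendsto_of_tendsto_charFun
    intro t
    have h1 : charFun (γ : Measure ℝ) t = Complex.exp (-t ^ 2 / 2) := by
      change charFun (gaussianReal 0 1) t = _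
      rw [charFun_gaussianReal]
      congr 1
      push_cast
      ring
    rw [h1]
    refine (hchar t).congr' ?_
    filter_upwards [hpos] with n hn
    rw [hν n hn, charFun_apply_real, integral_finsetSum_measure]
    · rw [Finset.sum_div]
      apply Finset.sum_congr rfl
      intro k _
      rw [integral_smul_measure, integral_dirac, ENNReal.toReal_ofReal (div_nonneg (hp n k) hn.le)]
      rw [Complex.real_smul]
      push_cast
      ring
    · intro k _
      apply Integrable.smul_measure _ ENNReal.ofReal_ne_top
      apply integrable_dirac
      simp
  have hIic : ∀ z, Tendsto (fun n => (∑ k ∈ S n, if y n k ≤ z then p n k else 0) / P n) atTop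
      (𝓝 ((gaussianReal 0 1).real (Set.Iic z))) := by
    intro z
    have h1 := ProbabilityMeasure.tendsto_measure_of_null_frontier_of_tendsto' hconv
      (E := Set.Iic z) (by
        rw [frontier_Iic]
        change (gaussianReal 0 1) {z} = 0
        have := nullSingletonClass_gaussianReal (μ := 0) (v := 1) one_ne_zero
        simp)
    have h2 := (ENNReal.tendsto_toReal (measure_ne_top _ _)).comp h1
    refine h2.congr' ?_
    filter_upwards [hpos] with n hn
    simp only [Function.comp_apply]
    rw [hν n hn]
    simp only [ν0, Measure.coe_finsetSum, Finset.sum_apply, Measure.smul_apply, smul_eq_mul,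
      Measure.dirac_apply]
    rw [ENNReal.toReal_sum, Finset.sum_div]
    · apply Finset.sum_congr rfl
      intro k _
      rw [ENNReal.toReal_mul, ENNReal.toReal_ofReal (div_nonneg (hp n k) hn.le)]
      by_cases h : y n k ≤ z <;> simp [h, P]
    · intro k _
      apply ENNReal.mul_ne_top ENNReal.ofReal_ne_top
      by_cases h : y n k ≤ z <;> simp [h]
  rw [← gauss_Iic]
  have hmono : ∀ n, 0 < P n → ∀ a b, a ≤ b →
      (∑ k ∈ S n, if y n k ≤ a then p n k else 0) / P n ≤
      (∑ k ∈ S n, if y n k ≤ b then p n k else 0) / P n := by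
    intro n hn a b hab
    apply div_le_div_of_nonneg_right _ hn.le
    apply Finset.sum_le_sum
    intro k _
    have := hp n k
    split_ifs <;> linarith
  rw [tendsto_order]
  constructor
  · intro a ha
    obtain ⟨z, hz, hza⟩ : ∃ z < x, a < (gaussianReal 0 1).real (Set.Iic z) := by
      have h1 := (gauss_cont x).eventually_const_lt ha
      have h2 := (h1.filter_mono nhdsWithin_le_nhds).and (self_mem_nhdsWithin (s := Set.Iio x))
      obtain ⟨z, h3, h4⟩ := h2.exists
      exact ⟨z, h4, h3⟩
    filter_upwards [hpos, (hIic z).eventually_const_lt hza, hxs.eventually_const_lt hz]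
      with n h1 h2 h3
    exact h2.trans_le (hmono n h1 _ _ h3.le)
  · intro a ha
    obtain ⟨z, hz, hza⟩ : ∃ z > x, (gaussianReal 0 1).real (Set.Iic z) < a := by
      have h1 := (gauss_cont x).eventually_lt_const ha
      have h2 := (h1.filter_mono nhdsWithin_le_nhds).and (self_mem_nhdsWithin (s := Set.Ioi x))
      obtain ⟨z, h3, h4⟩ := h2.exists
      exact ⟨z, h4, h3⟩
    filter_upwards [hpos, (hIic z).eventually_lt_const hza, hxs.eventually_lt_const hz]
      with n h1 h2 h3
    exact (hmono n h1 _ _ h3.le).trans_lt h2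
end

noncomputable section
open Finset Filter MeasureTheory ProbabilityTheory Topology

theorem taylor2 {ψ : ℂ → ℂ} (h : AnalyticAt ℂ ψ 0) :
    (fun z => ψ z - ψ 0 - deriv ψ 0 * z - deriv (deriv ψ) 0 / 2 * z ^ 2) =O[𝓝 0]
      fun z : ℂ => ‖z‖ ^ 3 := by
  have h1 := h.hasFPowerSeriesAt.isBigO_sub_partialSum_pow 3
  refine h1.congr_left ?_
  intro z
  simp [FormalMultilinearSeries.partialSum, Finset.sum_range_succ, iteratedDeriv_succ,
    FormalMultilinearSeries.ofScalars, Nat.factorial]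
  ring

/-- exponent limit -/
theorem exponent_limit {ψ : ℂ → ℂ} (h : AnalyticAt ℂ ψ 0) (m v : ℝ) (hm : deriv ψ 0 = m)
    (hv : deriv (deriv ψ) 0 = v) (hv0 : 0 < v) (t : ℝ) (z : ℕ → ℂ)
    (hz : ∀ n, z n = Complex.I * ((t / Real.sqrt (v * n) : ℝ) : ℂ)) (hz0 : Tendsto z atTop (𝓝 0)) :
    Tendsto (fun n : ℕ => (n : ℂ) * (ψ (z n) - ψ 0 - m * z n)) atTop (𝓝 (-(t : ℂ) ^ 2 / 2)) := by
  have h1 := (taylor2 h).comp_tendsto hz0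
  have hzsq : ∀ n : ℕ, 1 ≤ n → (n : ℂ) * z n ^ 2 = -(t : ℂ) ^ 2 / v := by
    intro n hn
    have hnpos : (0 : ℝ) < n := by exact_mod_cast hn
    have hs : (t / Real.sqrt (v * n)) ^ 2 = t ^ 2 / (v * n) := by
      rw [div_pow, Real.sq_sqrt (by positivity)]
    rw [hz, mul_pow, Complex.I_sq, ← Complex.ofReal_pow, hs]
    have hvc : (v : ℂ) ≠ 0 := by exact_mod_cast hv0.ne'
    have hnc : (n : ℂ) ≠ 0 := by exact_mod_cast hnpos.ne'
    push_cast
    field_simp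
  have h2 : Tendsto (fun n : ℕ => (n : ℂ) *
      (ψ (z n) - ψ 0 - deriv ψ 0 * z n - deriv (deriv ψ) 0 / 2 * z n ^ 2)) atTop (𝓝 0) := by
    have h3 : (fun n : ℕ => (n : ℂ) *
      (ψ (z n) - ψ 0 - deriv ψ 0 * z n - deriv (deriv ψ) 0 / 2 * z n ^ 2)) =O[atTop]
        fun n : ℕ => (n : ℝ) * ‖z n‖ ^ 3 := by
      apply Asymptotics.IsBigO.mul _ h1
      apply Asymptotics.IsBigO.of_bound 1
      simp
    apply h3.trans_tendsto
    have h4 : Tendsto (fun n => (t ^ 2 / v) * ‖z n‖) atTop (𝓝 0) := by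
      simpa using hz0.norm.const_mul (t ^ 2 / v)
    refine h4.congr' ?_
    filter_upwards [eventually_ge_atTop 1] with n hn
    have := congrArg norm (hzsq n hn)
    simp only [norm_mul, norm_pow, norm_neg, norm_div, Complex.norm_natCast, Complex.norm_real,
      Real.norm_eq_abs, sq_abs, abs_of_pos hv0] at this
    rw [← this]
    ring
  have h5 : Tendsto (fun n : ℕ => (n : ℂ) *
      (ψ (z n) - ψ 0 - deriv ψ 0 * z n - deriv (deriv ψ) 0 / 2 * z n ^ 2) + -(t : ℂ) ^ 2 / 2) atTop
      (𝓝 (0 + -(t : ℂ) ^ 2 / 2)) := h2.add_const _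
  rw [zero_add] at h5
  refine h5.congr' ?_
  filter_upwards [eventually_ge_atTop 1] with n hn
  have h6 := hzsq n hn
  have hvc : (v : ℂ) ≠ 0 := by exact_mod_cast hv0.ne'
  rw [hm, hv]
  have h7 : (v : ℂ) * (n * z n ^ 2) = -t ^ 2 := by rw [h6]; field_simp
  linear_combination (-1 / 2 : ℂ) * h7

theorem expsum_deriv (S : Finset ℕ) (p : ℕ → ℝ) (z : ℂ) :
    HasDerivAt (fun z : ℂ => ∑ k ∈ S, (p k : ℂ) * Complex.exp (k * z))
      (∑ k ∈ S, (((k : ℝ) * p k : ℝ) : ℂ) * Complex.exp (k * z)) z := by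
  have : ∀ k ∈ S, HasDerivAt (fun z : ℂ => (p k : ℂ) * Complex.exp (k * z))
      ((((k : ℝ) * p k : ℝ) : ℂ) * Complex.exp (k * z)) z := by
    intro k _
    have h1 := (((hasDerivAt_id z).const_mul (k : ℂ)).cexp).const_mul (p k : ℂ)
    refine h1.congr_deriv ?_
    simp only [id]
    push_cast
    ring
  convert HasDerivAt.fun_sum this using 1

/-- moments -/
theorem moments (S : Finset ℕ) (p : ℕ → ℝ) (U : Set ℂ) (hU : IsOpen U) (h0 : (0 : ℂ) ∈ U)
    (ψ g : ℂ → ℂ) (hψ : DifferentiableOn ℂ ψ U) (hg : DifferentiableOn ℂ g U) (n : ℂ)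
    (hf : ∀ z ∈ U, ∑ k ∈ S, (p k : ℂ) * Complex.exp (k * z) = Complex.exp (n * ψ z) * g z) :
    ((∑ k ∈ S, p k : ℝ) : ℂ) = Complex.exp (n * ψ 0) * g 0 ∧
    ((∑ k ∈ S, (k : ℝ) * p k : ℝ) : ℂ) =
      Complex.exp (n * ψ 0) * (n * deriv ψ 0 * g 0 + deriv g 0) ∧
    ((∑ k ∈ S, (k : ℝ) ^ 2 * p k : ℝ) : ℂ) =
      Complex.exp (n * ψ 0) * (n ^ 2 * deriv ψ 0 ^ 2 * g 0 + 2 * n * deriv ψ 0 * deriv g 0 +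
        n * deriv (deriv ψ) 0 * g 0 + deriv (deriv g) 0) := by
  have hd : ∀ {φ : ℂ → ℂ}, DifferentiableOn ℂ φ U → ∀ z ∈ U, HasDerivAt φ (deriv φ z) z :=
    fun h z hz => (h.differentiableAt (hU.mem_nhds hz)).hasDerivAt
  have e1 : ∀ z ∈ U, ∑ k ∈ S, (((k : ℝ) * p k : ℝ) : ℂ) * Complex.exp (k * z) =
      Complex.exp (n * ψ z) * (n * deriv ψ z * g z + deriv g z) := by
    intro z hz
    have h1 := expsum_deriv S p z
    have h2 := (((hd hψ z hz).const_mul n).cexp).mul (hd hg z hz)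
    have h3 := h2.congr_of_eventuallyEq (Filter.eventually_of_mem (hU.mem_nhds hz) hf)
    rw [h1.unique h3]
    ring
  have e2 : ∑ k ∈ S, (((k : ℝ) * ((k : ℝ) * p k) : ℝ) : ℂ) * Complex.exp (k * 0) =
      Complex.exp (n * ψ 0) * (n ^ 2 * deriv ψ 0 ^ 2 * g 0 + 2 * n * deriv ψ 0 * deriv g 0 +
        n * deriv (deriv ψ) 0 * g 0 + deriv (deriv g) 0) := by
    have h1 := expsum_deriv S (fun k => (k : ℝ) * p k) 0
    have h2 := (((hd hψ 0 h0).const_mul n).cexp).mul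
      (((((hd (hψ.deriv hU) 0 h0).const_mul n)).mul (hd hg 0 h0)).add (hd (hg.deriv hU) 0 h0))
    have h3 := h2.congr_of_eventuallyEq (Filter.eventually_of_mem (hU.mem_nhds h0) e1)
    rw [h1.unique h3]
    simp only [Pi.add_apply, Pi.mul_apply]
    ring
  refine ⟨?_, ?_, ?_⟩
  · rw [← hf 0 h0]; simp
  · rw [← e1 0 h0]; simp
  · rw [← e2]; simp [sq, mul_assoc]

theorem quasi_power (p : ℕ → ℕ → ℝ) (hp : ∀ n k, 0 ≤ p n k) (S : ℕ → Finset ℕ)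
    (U : Set ℂ) (hU : IsOpen U) (h0 : (0 : ℂ) ∈ U) (ψ α : ℂ → ℂ) (g : ℕ → ℂ → ℂ)
    (hψ : DifferentiableOn ℂ ψ U) (hg : ∀ n, DifferentiableOn ℂ (g n) U)
    (hlim : TendstoLocallyUniformlyOn g α atTop U) (hα : α 0 ≠ 0)
    (hf : ∀ᶠ n : ℕ in atTop, ∀ z ∈ U, ∑ k ∈ S n, (p n k : ℂ) * Complex.exp (k * z) =
      Complex.exp (n * ψ z) * g n z)
    (m v : ℝ) (hm : deriv ψ 0 = m) (hv : deriv (deriv ψ) 0 = v) (hv0 : 0 < v)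
    (mu var : ℕ → ℝ)
    (hmu : ∀ n, mu n = (∑ k ∈ S n, (k : ℝ) * p n k) / ∑ k ∈ S n, p n k)
    (hvar : ∀ n, var n = (∑ k ∈ S n, (k : ℝ) ^ 2 * p n k) / (∑ k ∈ S n, p n k) - mu n ^ 2)
    (x : ℝ) :
    Tendsto (fun n => (∑ k ∈ S n, if (k : ℝ) ≤ mu n + x * Real.sqrt (var n) then p n k else 0) /
      ∑ k ∈ S n, p n k) atTop
      (𝓝 ((1 / Real.sqrt (2 * Real.pi)) * ∫ u in Set.Iic x, Real.exp (-u ^ 2 / 2))) := by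
  have hlim1 := hlim.deriv (Eventually.of_forall hg) hU
  have hlim2 := hlim1.deriv (Eventually.of_forall fun n => (hg n).deriv hU) hU
  have t0 := hlim.tendsto_at h0
  have t1 := hlim1.tendsto_at h0
  have t2 := hlim2.tendsto_at h0
  simp only [Function.comp_apply] at t1 t2
  have hg0 : ∀ᶠ n in atTop, g n 0 ≠ 0 := t0.eventually_ne hα
  have hP : ∀ᶠ n in atTop, 0 < ∑ k ∈ S n, p n k := by
    filter_upwards [hg0, hf] with n h1 h2
    have h3 := (moments (S n) (p n) U hU h0 ψ (g n) hψ (hg n) n h2).1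
    apply lt_of_le_of_ne (Finset.sum_nonneg fun k _ => hp n k)
    intro h4
    rw [← h4, Complex.ofReal_zero] at h3
    exact mul_ne_zero (Complex.exp_ne_zero _) h1 h3.symm
  have hmuc : ∀ᶠ n in atTop, ((mu n - n * m : ℝ) : ℂ) = deriv (g n) 0 / g n 0 := by
    filter_upwards [hg0, hf] with n h1 h2
    obtain ⟨a, b, c⟩ := moments (S n) (p n) U hU h0 ψ (g n) hψ (hg n) n h2
    have he := Complex.exp_ne_zero (n * ψ 0)
    rw [hmu, Complex.ofReal_sub, Complex.ofReal_div, a, b, hm]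
    push_cast
    field_simp
    ring
  have hvarc : ∀ᶠ n in atTop, ((var n - n * v : ℝ) : ℂ) =
      deriv (deriv (g n)) 0 / g n 0 - (deriv (g n) 0 / g n 0) ^ 2 := by
    filter_upwards [hg0, hf, hmuc] with n h1 h2 h3
    obtain ⟨a, b, c⟩ := moments (S n) (p n) U hU h0 ψ (g n) hψ (hg n) n h2
    have he := Complex.exp_ne_zero (n * ψ 0)
    have h4 : (mu n : ℂ) = n * m + deriv (g n) 0 / g n 0 := by
      rw [← h3]; push_cast; ring
    rw [hvar, Complex.ofReal_sub, Complex.ofReal_sub, Complex.ofReal_div, a, c,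
      Complex.ofReal_pow, h4, hm, hv]
    push_cast
    field_simp
    ring
  obtain ⟨c1, hc1⟩ : ∃ c, Tendsto (fun n => mu n - n * m) atTop (𝓝 c) := by
    refine ⟨_, ((Complex.continuous_re.tendsto _).comp (t1.div t0 hα)).congr' ?_⟩
    filter_upwards [hmuc] with n h
    simp only [Function.comp_apply, Pi.div_apply]
    rw [← h, Complex.ofReal_re]
  obtain ⟨c2, hc2⟩ : ∃ c, Tendsto (fun n => var n - n * v) atTop (𝓝 c) := by
    refine ⟨_, ((Complex.continuous_re.tendsto _).comp
      ((t2.div t0 hα).sub ((t1.div t0 hα).pow 2))).congr' ?_⟩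
    filter_upwards [hvarc] with n h
    simp only [Function.comp_apply, Pi.div_apply]
    rw [← h, Complex.ofReal_re]
  have hvn : Tendsto (fun n : ℕ => v * (n : ℝ)) atTop atTop :=
    tendsto_natCast_atTop_atTop.const_mul_atTop hv0
  have hsvn : Tendsto (fun n : ℕ => Real.sqrt (v * (n : ℝ))) atTop atTop :=
    Real.tendsto_sqrt_atTop.comp hvn
  have hxs : Tendsto (fun n : ℕ => (mu n - n * m + x * Real.sqrt (var n)) / Real.sqrt (v * n)) atTop
      (𝓝 x) := by
    have h1 : Tendsto (fun n : ℕ => (mu n - n * m) / Real.sqrt (v * n)) atTop (𝓝 0) :=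
      hc1.div_atTop hsvn
    have h2 : Tendsto (fun n : ℕ => Real.sqrt (1 + (var n - n * v) / (v * n))) atTop (𝓝 1) := by
      have h3 := ((hc2.div_atTop hvn).const_add 1)
      rw [add_zero] at h3
      have h6 := (Real.continuous_sqrt.tendsto 1).comp h3
      rw [Real.sqrt_one] at h6
      exact h6
    have h4 := h1.add (h2.const_mul x)
    rw [zero_add, mul_one] at h4
    refine h4.congr' ?_
    filter_upwards [eventually_ge_atTop 1] with n hn
    have hnpos : (0 : ℝ) < n := by exact_mod_cast hn
    have h5 : 1 + (var n - n * v) / (v * n) = var n / (v * n) := by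
      field_simp; ring
    rw [h5, Real.sqrt_div' _ (by positivity)]
    ring
  have hmain := clt_abstract p hp S hP (fun n k => (k - n * m) / Real.sqrt (v * n)) ?_ _ x hxs
  · refine hmain.congr' ?_
    filter_upwards [eventually_ge_atTop 1] with n hn
    have hnpos : (0 : ℝ) < n := by exact_mod_cast hn
    have hs : 0 < Real.sqrt (v * n) := Real.sqrt_pos.2 (by positivity)
    congr 1
    apply Finset.sum_congr rfl
    intro k _
    apply if_congr _ rfl rfl
    rw [div_le_div_iff_of_pos_right hs]
    constructor <;> intro h <;> linarith
  · intro t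
    set z : ℕ → ℂ := fun n => Complex.I * ((t / Real.sqrt (v * n) : ℝ) : ℂ) with hz
    have hz0 : Tendsto z atTop (𝓝 0) := by
      have h1 : Tendsto (fun n : ℕ => t / Real.sqrt (v * n)) atTop (𝓝 0) :=
        tendsto_const_nhds.div_atTop hsvn
      have h2 := ((Complex.continuous_ofReal.tendsto 0).comp h1).const_mul Complex.I
      rw [Complex.ofReal_zero, mul_zero] at h2
      exact h2
    have hzU : ∀ᶠ n in atTop, z n ∈ U := hz0.eventually (hU.mem_nhds h0)
    have hex := exponent_limit (hψ.analyticAt (hU.mem_nhds h0)) m v hm hv hv0 t z (fun n => rfl) hz0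
    have hαc : ContinuousWithinAt α U 0 :=
      ((hlim.differentiableOn (Eventually.of_forall hg) hU).continuousOn) 0 h0
    have hgz : Tendsto (fun n => g n (z n)) atTop (𝓝 (α 0)) :=
      hlim.tendsto_comp hαc h0 (tendsto_nhdsWithin_iff.2 ⟨hz0, hzU⟩)
    have h3 := ((Complex.continuous_exp.tendsto _).comp hex).mul (hgz.div t0 hα)
    rw [div_self hα, mul_one] at h3
    refine h3.congr' ?_
    filter_upwards [hzU, hf, hg0] with n h4 h5 h6
    have h7 := (moments (S n) (p n) U hU h0 ψ (g n) hψ (hg n) n h5).1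
    have h8 : ∑ k ∈ S n, (p n k : ℂ) * Complex.exp (t * (((k - n * m) / Real.sqrt (v * n) : ℝ) : ℂ)
        * Complex.I) = Complex.exp (-(n * m * z n)) * ∑ k ∈ S n, (p n k : ℂ) * Complex.exp (k * z n) := by
      rw [Finset.mul_sum]
      apply Finset.sum_congr rfl
      intro k _
      rw [mul_left_comm, ← Complex.exp_add]
      congr 2
      simp only [hz]
      push_cast
      ring
    rw [h8, h5 _ h4, h7]
    simp only [Function.comp_apply, Pi.div_apply]
    have he := Complex.exp_ne_zero (n * ψ 0)
    have h9 : Complex.exp (n * (ψ (z n) - ψ 0 - m * z n)) =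
        Complex.exp (-(n * m * z n)) * Complex.exp (n * ψ (z n)) / Complex.exp (n * ψ 0) := by
      rw [← Complex.exp_add, ← Complex.exp_sub]
      congr 1
      ring
    rw [h9]
    field_simp
end

noncomputable section
open Finset Filter Topology

/-- branch of the square root of `e^(2z) + 4` -/
def sF (z : ℂ) : ℂ := Complex.exp (Complex.log (Complex.exp z ^ 2 + 4) / 2)

/-- dominant eigenvalue -/
def LF (z : ℂ) : ℂ :=
  (2 + 2 * Complex.exp z + Complex.exp z ^ 2 + Complex.exp z * sF z) / 2

/-- other eigenvalue -/
def MF (z : ℂ) : ℂ :=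
  (2 + 2 * Complex.exp z + Complex.exp z ^ 2 - Complex.exp z * sF z) / 2

/-- derivative of `LF` -/
def LF' (z : ℂ) : ℂ :=
  (2 * Complex.exp z + 2 * Complex.exp z ^ 2 + Complex.exp z * sF z +
    Complex.exp z ^ 3 / sF z) / 2

/-- auxiliary numerator -/
def cF (z : ℂ) : ℂ :=
  Complex.exp z ^ 5 + 2 * Complex.exp z ^ 4 + 3 * Complex.exp z ^ 3 + 2 * Complex.exp z ^ 2

/-- leading coefficient -/
def aF (z : ℂ) : ℂ :=
  (cF z - MF z * (Complex.exp z ^ 2 + Complex.exp z ^ 3)) / (LF z - MF z)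

/-- second coefficient -/
def bF (z : ℂ) : ℂ :=
  (LF z * (Complex.exp z ^ 2 + Complex.exp z ^ 3) - cF z) / (LF z - MF z)

/-- the value of `sF` at zero -/
def wF : ℝ := Real.exp (Real.log 5 / 2)

theorem wF_pos : 0 < wF := Real.exp_pos _

theorem wF_sq : wF ^ 2 = 5 := by
  unfold wF
  rw [← Real.exp_nat_mul]
  push_cast
  rw [mul_div_cancel₀ _ (by norm_num), Real.exp_log (by norm_num)]

theorem wF_gt : 2 < wF := by nlinarith [wF_pos, wF_sq]
theorem wF_lt : wF < 3 := by nlinarith [wF_pos, wF_sq]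

theorem sF_ne (z : ℂ) : sF z ≠ 0 := Complex.exp_ne_zero _

theorem sF_zero : sF 0 = (wF : ℂ) := by
  unfold sF wF
  rw [Complex.exp_zero]
  push_cast
  rw [Complex.ofReal_log (by norm_num)]
  norm_num

theorem sF_sq {z : ℂ} (h : Complex.exp z ^ 2 + 4 ≠ 0) : sF z ^ 2 = Complex.exp z ^ 2 + 4 := by
  unfold sF
  rw [← Complex.exp_nat_mul]
  push_cast
  rw [mul_div_cancel₀ _ (by norm_num), Complex.exp_log h]

theorem sF_deriv {z : ℂ} (h : Complex.exp z ^ 2 + 4 ∈ Complex.slitPlane) :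
    HasDerivAt sF (Complex.exp z ^ 2 / sF z) z := by
  have h1 : HasDerivAt (fun z : ℂ => Complex.exp z ^ 2 + 4) (2 * Complex.exp z ^ 2) z :=
    (((Complex.hasDerivAt_exp z).fun_pow 2).add_const 4).congr_deriv (by push_cast; ring)
  have h2 := ((h1.clog h).div_const 2).cexp
  refine h2.congr_deriv ?_
  have hne := Complex.slitPlane_ne_zero h
  have h3 := sF_sq hne
  change sF z * _ = _
  have h4 := sF_ne z
  rw [← h3]
  field_simp

theorem LF_deriv {z : ℂ} (h : Complex.exp z ^ 2 + 4 ∈ Complex.slitPlane) :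
    HasDerivAt LF (LF' z) z := by
  have he := Complex.hasDerivAt_exp z
  have h1 := ((((he.const_mul 2).const_add 2).fun_add (he.fun_pow 2)).fun_add
    (he.fun_mul (sF_deriv h))).div_const 2
  refine h1.congr_deriv ?_
  unfold LF'
  push_cast
  ring

theorem MF_eq (z : ℂ) : MF z = 2 + 2 * Complex.exp z + Complex.exp z ^ 2 - LF z := by
  unfold MF LF; ring

theorem LM_sub (z : ℂ) : LF z - MF z = Complex.exp z * sF z := by
  unfold MF LF; ring

theorem LM_sub_ne (z : ℂ) : LF z - MF z ≠ 0 := by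
  rw [LM_sub]; exact mul_ne_zero (Complex.exp_ne_zero _) (sF_ne z)

theorem LM_mul {z : ℂ} (h : Complex.exp z ^ 2 + 4 ≠ 0) : LF z * MF z =
    1 + 2 * Complex.exp z + Complex.exp z ^ 2 + Complex.exp z ^ 3 := by
  have h3 := sF_sq h
  unfold MF LF
  linear_combination (-Complex.exp z ^ 2 / 4) * h3

theorem slit0 : Complex.exp 0 ^ 2 + 4 ∈ Complex.slitPlane := by
  rw [Complex.exp_zero, Complex.mem_slitPlane_iff]; left; norm_num

theorem LF_zero : LF 0 = (((5 + wF) / 2 : ℝ) : ℂ) := by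
  unfold LF; rw [sF_zero, Complex.exp_zero]; push_cast; ring

theorem MF_zero : MF 0 = (((5 - wF) / 2 : ℝ) : ℂ) := by
  unfold MF; rw [sF_zero, Complex.exp_zero]; push_cast; ring

theorem LF'_zero : LF' 0 = ((2 + 3 * wF / 5 : ℝ) : ℂ) := by
  unfold LF'; rw [sF_zero, Complex.exp_zero]
  have h : (wF : ℂ) ^ 2 = 5 := by exact_mod_cast wF_sq
  have h0 : (wF : ℂ) ≠ 0 := by exact_mod_cast wF_pos.ne'
  push_cast
  field_simp
  linear_combination (-1 : ℂ) * h

theorem LF'_deriv_zero : HasDerivAt LF' ((3 + 22 * wF / 25 : ℝ) : ℂ) 0 := by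
  have he := Complex.hasDerivAt_exp 0
  have hs := sF_deriv slit0
  have h1 := ((((he.const_mul 2).fun_add ((he.fun_pow 2).const_mul 2)).fun_add
    (he.fun_mul hs)).fun_add ((he.fun_pow 3).fun_div hs (sF_ne 0))).div_const 2
  refine h1.congr_deriv ?_
  rw [sF_zero, Complex.exp_zero]
  have h : (wF : ℂ) ^ 2 = 5 := by exact_mod_cast wF_sq
  have h0 : (wF : ℂ) ≠ 0 := by exact_mod_cast wF_pos.ne'
  have hi : (1 : ℂ) / wF = wF / 5 := by field_simp; linear_combination (-1 : ℂ) * h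
  push_cast
  simp only [one_pow, mul_one, one_mul, hi, h]
  ring

theorem LF_slit0 : LF 0 ∈ Complex.slitPlane := by
  rw [LF_zero, Complex.mem_slitPlane_iff]; left
  rw [Complex.ofReal_re]; linarith [wF_pos]

theorem aF_zero : aF 0 ≠ 0 := by
  unfold aF
  refine div_ne_zero ?_ (LM_sub_ne 0)
  unfold cF
  rw [MF_zero, Complex.exp_zero]
  intro h
  have h2 : (3 + wF : ℝ) = 0 := by
    have : ((3 + wF : ℝ) : ℂ) = 0 := by rw [← h]; push_cast; ring
    exact_mod_cast this
  linarith [wF_pos]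

theorem exp_slit_ev : ∀ᶠ z : ℂ in 𝓝 0, Complex.exp z ^ 2 + 4 ∈ Complex.slitPlane := by
  have hc : ContinuousAt (fun z : ℂ => Complex.exp z ^ 2 + 4) 0 := by fun_prop
  exact hc.eventually_mem (Complex.isOpen_slitPlane.mem_nhds slit0)

theorem exp_diff (U : Set ℂ) : DifferentiableOn ℂ Complex.exp U :=
  Complex.differentiable_exp.differentiableOn

theorem region : ∃ U : Set ℂ, IsOpen U ∧ (0 : ℂ) ∈ U ∧
    (∀ z ∈ U, Complex.exp z ^ 2 + 4 ∈ Complex.slitPlane ∧ LF z ∈ Complex.slitPlane ∧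
      ‖MF z / LF z‖ < 1 / 2 ∧ ‖1 / LF z‖ < 1 / 2 ∧ ‖bF z‖ < ‖bF 0‖ + 1 ∧
      ‖Complex.exp z‖ < 2) := by
  have hL : ContinuousAt LF 0 := (LF_deriv slit0).continuousAt
  have hL0 := Complex.slitPlane_ne_zero LF_slit0
  have hM : ContinuousAt MF 0 := by
    have : MF = fun z => 2 + 2 * Complex.exp z + Complex.exp z ^ 2 - LF z := funext MF_eq
    rw [this]; fun_prop
  have hb : ContinuousAt bF 0 := by
    unfold bF cF
    exact ContinuousAt.div (by fun_prop) (by fun_prop) (LM_sub_ne 0)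
  have e1 := exp_slit_ev
  have e2 := hL.eventually_mem (Complex.isOpen_slitPlane.mem_nhds LF_slit0)
  have e3 : ∀ᶠ z in 𝓝 (0 : ℂ), ‖MF z / LF z‖ < 1 / 2 := by
    refine (hM.div hL hL0).norm.eventually_lt_const ?_
    change ‖MF 0 / LF 0‖ < _
    rw [MF_zero, LF_zero, ← Complex.ofReal_div, Complex.norm_real, Real.norm_of_nonneg]
    · rw [div_lt_div_iff₀ (by linarith [wF_pos]) (by norm_num)]
      linarith [wF_gt]
    · exact div_nonneg (by linarith [wF_lt]) (by linarith [wF_pos])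
  have e4 : ∀ᶠ z in 𝓝 (0 : ℂ), ‖1 / LF z‖ < 1 / 2 := by
    refine (continuousAt_const.div hL hL0).norm.eventually_lt_const ?_
    change ‖(1 : ℂ) / LF 0‖ < _
    rw [LF_zero, ← Complex.ofReal_one, ← Complex.ofReal_div, Complex.norm_real,
      Real.norm_of_nonneg]
    · rw [div_lt_div_iff₀ (by linarith [wF_pos]) (by norm_num)]
      linarith [wF_gt]
    · exact div_nonneg (by norm_num) (by linarith [wF_pos])
  have e5 : ∀ᶠ z in 𝓝 (0 : ℂ), ‖bF z‖ < ‖bF 0‖ + 1 :=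
    hb.norm.eventually_lt_const (by linarith)
  have e6 : ∀ᶠ z in 𝓝 (0 : ℂ), ‖Complex.exp z‖ < 2 := by
    refine (Complex.continuous_exp.continuousAt (x := 0)).norm.eventually_lt_const ?_
    change ‖Complex.exp 0‖ < _
    rw [Complex.exp_zero]; norm_num
  have e := e1.and (e2.and (e3.and (e4.and (e5.and e6))))
  obtain ⟨U, h1, h2, h3⟩ := mem_nhds_iff.1 e
  exact ⟨U, h2, h3, fun z hz => h1 hz⟩

/-- the summation range -/
def SF (n : ℕ) : Finset ℕ :=
  if h : 3 ≤ n + 2 then (NC_gf h (thetaC (n + 2))).choose else ∅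

theorem SF_zero {n : ℕ} (hn : 1 ≤ n) (k : ℕ) (hk : k ∉ SF n) : pC (n + 2) k = 0 := by
  have h : 3 ≤ n + 2 := by omega
  rw [SF, dif_pos h] at hk
  unfold pC
  rw [(NC_gf h (thetaC (n + 2))).choose_spec.1 k hk, Nat.cast_zero]

theorem SF_gf {n : ℕ} (hn : 1 ≤ n) (z : ℂ) :
    ∑ k ∈ SF n, (pC (n + 2) k : ℂ) * Complex.exp (k * z) =
      gfD (n + 2) (isPosRootC (n + 2)) (Complex.exp z) (thetaC (n + 2)) := by
  have h : 3 ≤ n + 2 := by omega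
  rw [← (NC_gf h (thetaC (n + 2))).choose_spec.2 (Complex.exp z), SF, dif_pos h]
  refine Finset.sum_congr rfl fun k _ => ?_
  rw [Complex.exp_nat_mul]
  unfold pC
  push_cast
  rfl

/-- the corrections -/
def gF (n : ℕ) (z : ℂ) : ℂ :=
  aF z + (bF z * (MF z / LF z) ^ n + Complex.exp z * (1 / LF z) ^ n)

theorem main_aux (x : ℝ) (mu var : ℕ → ℝ)
    (hmu : ∀ n, mu n = (∑ k ∈ SF n, (k : ℝ) * pC (n + 2) k) / ∑ k ∈ SF n, pC (n + 2) k)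
    (hvar : ∀ n, var n = (∑ k ∈ SF n, (k : ℝ) ^ 2 * pC (n + 2) k) /
      (∑ k ∈ SF n, pC (n + 2) k) - mu n ^ 2) :
    Tendsto (fun n => (∑ k ∈ SF n, if (k : ℝ) ≤ mu n + x * √(var n) then pC (n + 2) k else 0) /
      ∑ k ∈ SF n, pC (n + 2) k) atTop
      (𝓝 ((1 / √(2 * Real.pi)) * ∫ u in Set.Iic x, Real.exp (-u ^ 2 / 2))) := by
  obtain ⟨U, hU, h0, hP⟩ := region
  have dE := exp_diff U
  have dL : DifferentiableOn ℂ LF U := fun z hz =>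
    (LF_deriv (hP z hz).1).differentiableAt.differentiableWithinAt
  have hL0 : ∀ z ∈ U, LF z ≠ 0 := fun z hz => Complex.slitPlane_ne_zero (hP z hz).2.1
  have dM : DifferentiableOn ℂ MF U := by
    have : MF = fun z => 2 + 2 * Complex.exp z + Complex.exp z ^ 2 - LF z := funext MF_eq
    rw [this]; fun_prop
  have da : DifferentiableOn ℂ aF U := by
    unfold aF cF
    exact DifferentiableOn.div (by fun_prop) (by fun_prop) fun z _ => LM_sub_ne z
  have db : DifferentiableOn ℂ bF U := by
    unfold bF cF
    exact DifferentiableOn.div (by fun_prop) (by fun_prop) fun z _ => LM_sub_ne z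
  have dψ : DifferentiableOn ℂ (fun z => Complex.log (LF z)) U :=
    dL.clog fun z hz => (hP z hz).2.1
  have dg : ∀ n, DifferentiableOn ℂ (gF n) U := fun n => by
    unfold gF
    exact da.add ((db.mul ((dM.div dL hL0).pow n)).add
      (dE.mul (((differentiableOn_const 1).div dL hL0).pow n)))
  have hlim : TendstoLocallyUniformlyOn gF aF atTop U := by
    apply TendstoUniformlyOn.tendstoLocallyUniformlyOn
    rw [Metric.tendstoUniformlyOn_iff]
    intro ε hε
    have ht : Tendsto (fun n : ℕ => (‖bF 0‖ + 3) * (1 / 2 : ℝ) ^ n) atTop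
        (𝓝 ((‖bF 0‖ + 3) * 0)) :=
      (tendsto_pow_atTop_nhds_zero_of_lt_one (by norm_num) (by norm_num)).const_mul _
    rw [mul_zero] at ht
    filter_upwards [ht.eventually_lt_const hε] with n hn z hz
    obtain ⟨_, _, h3, h4, h5, h6⟩ := hP z hz
    refine lt_of_le_of_lt ?_ hn
    rw [dist_comm, dist_eq_norm]
    unfold gF
    rw [add_sub_cancel_left]
    refine (norm_add_le _ _).trans ?_
    rw [norm_mul, norm_mul, norm_pow, norm_pow]
    have p1 : ‖MF z / LF z‖ ^ n ≤ (1 / 2 : ℝ) ^ n := pow_le_pow_left₀ (norm_nonneg _) h3.le n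
    have p2 : ‖1 / LF z‖ ^ n ≤ (1 / 2 : ℝ) ^ n := pow_le_pow_left₀ (norm_nonneg _) h4.le n
    have q1 := mul_le_mul h5.le p1 (by positivity) (by positivity)
    have q2 := mul_le_mul h6.le p2 (by positivity) (by positivity)
    linarith
  have hψ' : ∀ z ∈ U, HasDerivAt (fun z => Complex.log (LF z)) (LF' z / LF z) z :=
    fun z hz => (LF_deriv (hP z hz).1).clog (hP z hz).2.1
  have hd1 : deriv (fun z => Complex.log (LF z)) =ᶠ[𝓝 0] fun z => LF' z / LF z := by
    filter_upwards [hU.mem_nhds h0] with z hz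
    exact (hψ' z hz).deriv
  have hd2 := (LF'_deriv_zero.fun_div (LF_deriv slit0) (hL0 0 h0)).deriv
  have hw := wF_pos
  refine quasi_power (fun n k => pC (n + 2) k) (fun n k => Nat.cast_nonneg _) SF U hU h0
    (fun z => Complex.log (LF z)) aF gF dψ dg hlim aF_zero ?_
    ((2 + 3 * wF / 5) / ((5 + wF) / 2))
    (((3 + 22 * wF / 25) * ((5 + wF) / 2) - (2 + 3 * wF / 5) * (2 + 3 * wF / 5)) /
      ((5 + wF) / 2) ^ 2) ?_ ?_ ?_ mu var hmu hvar x
  · filter_upwards [eventually_ge_atTop 1] with n hn z hz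
    have hne := Complex.slitPlane_ne_zero (hP z hz).1
    have hLz := hL0 z hz
    rw [SF_gf hn z, gf_closed (Complex.exp z) (LF z) (MF z) (Complex.exp_ne_zero _)
      (by rw [MF_eq]; ring) (LM_mul hne) (LM_sub_ne z) hn, Complex.exp_nat_mul,
      Complex.exp_log hLz]
    change _ + (aF z * _ + bF z * _) = _
    unfold gF
    rw [div_pow, div_pow, one_pow]
    have : LF z ^ n ≠ 0 := pow_ne_zero _ hLz
    field_simp
    ring
  · rw [hd1.eq_of_nhds, LF'_zero, LF_zero]; push_cast; rfl
  · rw [hd1.deriv_eq, hd2, LF'_zero, LF_zero]; push_cast; rfl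
  · apply div_pos _ (by positivity)
    have := wF_sq
    nlinarith

theorem main_C (x : ℝ) :
    Tendsto (fun r : ℕ =>
      (∑' k : ℕ, if (k : ℝ) ≤ muC r + x * Real.sqrt (varC r) then pC r k else 0) /
        (∑' k : ℕ, pC r k))
      atTop
      (𝓝 ((1 / Real.sqrt (2 * Real.pi)) * ∫ u in Set.Iic x, Real.exp (-u ^ 2 / 2))) := by
  rw [← tendsto_add_atTop_iff_nat 2]
  refine (main_aux x _ _ (fun _ => rfl) (fun _ => rfl)).congr' ?_
  filter_upwards [eventually_ge_atTop 1] with n hn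
  have hz := SF_zero hn
  have s0 : ∑' k : ℕ, pC (n + 2) k = ∑ k ∈ SF n, pC (n + 2) k := tsum_eq_sum hz
  have s1 : ∑' k : ℕ, (k : ℝ) * pC (n + 2) k = ∑ k ∈ SF n, (k : ℝ) * pC (n + 2) k :=
    tsum_eq_sum fun k hk => by rw [hz k hk, mul_zero]
  have s2 : ∑' k : ℕ, (k : ℝ) ^ 2 * pC (n + 2) k = ∑ k ∈ SF n, (k : ℝ) ^ 2 * pC (n + 2) k :=
    tsum_eq_sum fun k hk => by rw [hz k hk, mul_zero]
  rw [tsum_eq_sum (s := SF n) (fun k hk => by rw [hz k hk, ite_self])]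
  unfold varC muC
  rw [s0, s1, s2]

end

open Filter in
/-- Theorem 1.2, type `C_r` (Gaussian behavior): the normalized number of positive
roots used in the decompositions of the highest root of `C_r`, with mean `μ_r` and
standard deviation `σ_r = √(variance)`, converges in distribution to the standard
normal as `r → ∞`. -/
theorem gaussian_highestRoot_typeC (x : ℝ) :
    Tendsto (fun r : ℕ =>
      (∑' k : ℕ, if (k : ℝ) ≤ muC r + x * Real.sqrt (varC r) then pC r k else 0) /
        (∑' k : ℕ, pC r k))
      atTop
      (nhds ((1 / Real.sqrt (2 * Real.pi)) * ∫ u in Set.Iic x, Real.exp (-u ^ 2 / 2))) := by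
  exact main_C x
end
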